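/- For every nonnegative integer n, the number of overpartitions of 5n+2 whose rank is congruent to 0 modulo 5 equals the number of overpartitions of 5n+2 whose rank is congruent to 2 modulo 5; that is, N̄(0,5,5n+2) = N̄(2,5,5n+2). -/

import Mathlib

/-- The number of overpartitions of `n` (partitions together with a choice of a subset of the
distinct part sizes, marking the overlined parts) whose rank (largest part minus number of
parts) is congruent to `s` modulo `m`. -/
def overN (s m n : ℕ) : ℕ :=
  (((Finset.univ : Finset (Nat.Partition n)).sigma fun p => p.parts.toFinset.powerset).filter
    fun x => ((x.1.parts.sup : ℤ) - (Multiset.card x.1.parts : ℤ)) % (m : ℤ)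
      = (s : ℤ) % (m : ℤ)).card

open Filter Topology Finset
namespace OV

noncomputable section

/-- finite q-Pochhammer symbol -/
def qp (p x : ℂ) (m : ℕ) : ℂ := ∏ i ∈ range m, (1 - x * p ^ i)
/-- infinite q-Pochhammer symbol -/
def qi (p x : ℂ) : ℂ := ∏' i : ℕ, (1 - x * p ^ i)
/-- theta bracket -/
def br (p x : ℂ) : ℂ := qi p x * qi p (p / x)

lemma qp_zero (p x : ℂ) : qp p x 0 = 1 := by simp [qp]
lemma qp_succ (p x : ℂ) (m : ℕ) : qp p x (m+1) = qp p x m * (1 - x * p ^ m) := by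
  simp [qp, prod_range_succ]
lemma qp_succ' (p x : ℂ) (m : ℕ) : qp p x (m+1) = (1 - x) * qp p (x * p) m := by
  simp only [qp, prod_range_succ', pow_zero, mul_one]
  rw [mul_comm]
  congr 1
  exact prod_congr rfl fun i _ => by ring

lemma summ_geo {p : ℂ} (hp : ‖p‖ < 1) (x : ℂ) : Summable fun i : ℕ => ‖-(x * p ^ i)‖ := by
  simp only [norm_neg, norm_mul, norm_pow]
  exact (summable_geometric_of_lt_one (norm_nonneg _) hp).mul_left _

lemma qp_multipliable {p : ℂ} (hp : ‖p‖ < 1) (x : ℂ) : Multipliable fun i : ℕ => (1 - x * p ^ i) := by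
  have := multipliable_one_add_of_summable (summ_geo hp x)
  simpa [sub_eq_add_neg] using this

lemma qp_tendsto {p : ℂ} (hp : ‖p‖ < 1) (x : ℂ) : Tendsto (qp p x) atTop (𝓝 (qi p x)) :=
  (qp_multipliable hp x).tendsto_prod_tprod_nat

lemma qp_ne_zero {p x : ℂ} (h : ∀ i : ℕ, x * p ^ i ≠ 1) (m : ℕ) : qp p x m ≠ 0 := by
  rw [qp, prod_ne_zero_iff]
  intro i _ h0
  exact h i (sub_eq_zero.1 h0).symm

lemma qi_ne_zero {p x : ℂ} (hp : ‖p‖ < 1) (h : ∀ i : ℕ, x * p ^ i ≠ 1) : qi p x ≠ 0 := by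
  have := tprod_one_add_ne_zero_of_summable (f := fun i : ℕ => -(x * p ^ i)) ?_ (summ_geo hp x)
  · simpa [qi, sub_eq_add_neg] using this
  · intro i h0
    exact h i (by linear_combination -h0)

lemma bdd_of_tendsto {u : ℕ → ℂ} {a : ℂ} (h : Tendsto u atTop (𝓝 a)) :
    ∃ C : ℝ, 0 ≤ C ∧ ∀ n, ‖u n‖ ≤ C := by
  obtain ⟨C, hC⟩ := (Metric.isBounded_range_of_tendsto u h).exists_norm_le
  exact ⟨C, (norm_nonneg _).trans (hC (u 0) ⟨0, rfl⟩), fun n => hC _ ⟨n, rfl⟩⟩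

lemma qp_bdd {p : ℂ} (hp : ‖p‖ < 1) (x : ℂ) : ∃ C : ℝ, 0 ≤ C ∧ ∀ n, ‖qp p x n‖ ≤ C :=
  bdd_of_tendsto (qp_tendsto hp x)

lemma qp_inv_bdd {p x : ℂ} (hp : ‖p‖ < 1) (h : ∀ i : ℕ, x * p ^ i ≠ 1) :
    ∃ C : ℝ, 0 ≤ C ∧ ∀ n, ‖(qp p x n)⁻¹‖ ≤ C :=
  bdd_of_tendsto ((qp_tendsto hp x).inv₀ (qi_ne_zero hp h))

lemma qi_step {p : ℂ} (hp : ‖p‖ < 1) (x : ℂ) : qi p x = (1 - x) * qi p (x * p) := by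
  refine tendsto_nhds_unique ((qp_tendsto hp x).comp (tendsto_add_atTop_nat 1)) ?_
  have := (qp_tendsto hp (x * p)).const_mul (1 - x)
  refine this.congr fun m => ?_
  simp [qp_succ']

lemma qp_add (p x : ℂ) (k m : ℕ) : qp p x (k + m) = qp p x k * qp p (x * p ^ k) m := by
  rw [qp, prod_range_add]
  congr 1
  exact prod_congr rfl fun i _ => by ring

lemma qi_shift {p : ℂ} (hp : ‖p‖ < 1) (x : ℂ) (k : ℕ) : qi p x = qp p x k * qi p (x * p ^ k) := by
  induction k with
  | zero => simp [qp_zero]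
  | succ k ih =>
    rw [ih, qp_succ, qi_step hp (x * p ^ k)]
    ring_nf

lemma norm_sq_lt {p : ℂ} (hp : ‖p‖ < 1) : ‖p ^ 2‖ < 1 := by
  rw [norm_pow]; exact pow_lt_one₀ (norm_nonneg _) hp (by norm_num)

/-- (x;p)(-x;p) = (x^2;p^2) -/
lemma qi_neg {p : ℂ} (hp : ‖p‖ < 1) (x : ℂ) : qi p x * qi p (-x) = qi (p^2) (x^2) := by
  refine tendsto_nhds_unique ((qp_tendsto hp x).mul (qp_tendsto hp (-x))) ?_
  refine (qp_tendsto (norm_sq_lt hp) (x^2)).congr fun m => ?_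
  simp only [qp, ← prod_mul_distrib]
  exact prod_congr rfl fun i _ => by ring

/-- (x;p) = (x;p^2)(xp;p^2) -/
lemma qi_split {p : ℂ} (hp : ‖p‖ < 1) (x : ℂ) : qi p x = qi (p^2) x * qi (p^2) (x * p) := by
  have h2 : Tendsto (fun m : ℕ => 2 * m) atTop atTop :=
    tendsto_id.const_mul_atTop' (by norm_num)
  refine tendsto_nhds_unique ((qp_tendsto hp x).comp h2) ?_
  refine ((qp_tendsto (norm_sq_lt hp) x).mul (qp_tendsto (norm_sq_lt hp) (x*p))).congr fun m => ?_
  simp only [Function.comp]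
  induction m with
  | zero => simp [qp_zero]
  | succ m ih =>
    rw [qp_succ, qp_succ, show 2 * (m+1) = 2*m+1+1 by ring, qp_succ, qp_succ, ← ih]
    ring

/-- not a power of p -/
def np (p x : ℂ) : Prop := ∀ n : ℤ, x * p ^ n ≠ 1

lemma np.nat {p x : ℂ} (h : np p x) (i : ℕ) : x * p ^ i ≠ 1 := by
  have := h i; rwa [zpow_natCast] at this
lemma np.inv {p x : ℂ} (hp : p ≠ 0) (hx : x ≠ 0) (h : np p x) (i : ℕ) : p / x * p ^ i ≠ 1 := by
  intro h0
  apply h (-(i+1 : ℕ))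
  rw [zpow_neg, zpow_natCast]
  field_simp at h0 ⊢
  rw [pow_succ]; rw [← h0]; ring

lemma br_ne_zero {p x : ℂ} (hp : ‖p‖ < 1) (hp0 : p ≠ 0) (hx : x ≠ 0) (h : np p x) : br p x ≠ 0 :=
  mul_ne_zero (qi_ne_zero hp h.nat) (qi_ne_zero hp (h.inv hp0 hx))

lemma np.neg_iff {p x : ℂ} : np p x → ∀ n : ℤ, 1 - x * p ^ n ≠ 0 := fun h n h0 =>
  h n (sub_eq_zero.1 h0).symm

lemma self_np {p : ℂ} (hp : ‖p‖ < 1) (i : ℕ) : p * p ^ i ≠ 1 := by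
  intro h
  have := congrArg norm h
  rw [← pow_succ', norm_pow, norm_one] at this
  exact (pow_lt_one₀ (norm_nonneg _) hp (by omega)).ne this

lemma qi_self_ne {p : ℂ} (hp : ‖p‖ < 1) : qi p p ≠ 0 := qi_ne_zero hp (self_np hp)

lemma inv_bdd {p y : ℂ} (hp : ‖p‖ < 1) (hp0 : p ≠ 0) (hy : y ≠ 0) :
    ∃ C : ℝ, 0 ≤ C ∧ ∀ n : ℕ, ‖(1 - y * p ^ (n:ℤ))⁻¹‖ ≤ C ∧
      ‖(1 - y * p ^ (-(n:ℤ)))⁻¹‖ ≤ C * ‖p‖ ^ n := by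
  have t0 := tendsto_pow_atTop_nhds_zero_of_norm_lt_one hp
  have h1 : Tendsto (fun n : ℕ => (1 - y * p ^ n)⁻¹) atTop (𝓝 ((1 - y * 0)⁻¹)) :=
    ((t0.const_mul y).const_sub 1).inv₀ (by simp)
  have h2 : Tendsto (fun n : ℕ => (p ^ n - y)⁻¹) atTop (𝓝 ((0 - y)⁻¹)) :=
    (t0.sub_const y).inv₀ (by simpa using hy)
  obtain ⟨C, hC0, hC⟩ := bdd_of_tendsto h1
  obtain ⟨D, hD0, hD⟩ := bdd_of_tendsto h2
  refine ⟨max C D, le_max_of_le_left hC0, fun n => ⟨?_, ?_⟩⟩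
  · rw [zpow_natCast]; exact (hC n).trans (le_max_left _ _)
  · have e : (1 - y * p ^ (-(n:ℤ)))⁻¹ = (p ^ n - y)⁻¹ * p ^ n := by
      have hpn : p ^ n ≠ 0 := pow_ne_zero _ hp0
      rw [zpow_neg, zpow_natCast, show 1 - y * (p^n)⁻¹ = (p^n - y)/p^n by field_simp, inv_div,
        div_eq_inv_mul]
    rw [e, norm_mul, norm_pow]
    exact mul_le_mul_of_nonneg_right ((hD n).trans (le_max_right _ _)) (by positivity)

lemma inv_bdd' {p y : ℂ} (hp : ‖p‖ < 1) (hp0 : p ≠ 0) (hy : y ≠ 0) :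
    ∃ C : ℝ, 0 ≤ C ∧ ∀ n : ℤ, ‖(1 - y * p ^ n)⁻¹‖ ≤ C := by
  obtain ⟨C, hC0, hC⟩ := inv_bdd hp hp0 hy
  refine ⟨C, hC0, fun n => ?_⟩
  rcases Int.eq_nat_or_neg n with ⟨m, rfl | rfl⟩
  · exact (hC m).1
  · refine (hC m).2.trans ?_
    exact mul_le_of_le_one_right hC0 (pow_le_one₀ (norm_nonneg _) hp.le)

lemma summ_gauss_nat {x y : ℝ} (hx : 0 < x) (hy : 0 < y) (hy1 : y < 1) :
    Summable fun n : ℕ => x ^ n * y ^ (n * n) := by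
  refine summable_of_ratio_test_tendsto_lt_one (l := 0) one_pos ?_ ?_
  · exact Eventually.of_forall fun n => by positivity
  · have : Tendsto (fun n : ℕ => x * y * (y ^ n) ^ 2) atTop (𝓝 (x * y * 0 ^ 2)) :=
      ((tendsto_pow_atTop_nhds_zero_of_lt_one hy.le hy1).pow 2).const_mul _
    simp only [ne_eq, OfNat.ofNat_ne_zero, not_false_eq_true, zero_pow, mul_zero] at this
    refine this.congr fun n => ?_
    rw [Real.norm_of_nonneg (by positivity), Real.norm_of_nonneg (by positivity)]
    rw [eq_div_iff (by positivity)]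
    ring

lemma summ_theta {r p : ℂ} (hr : r ≠ 0) (hp0 : p ≠ 0) (hp : ‖p‖ < 1) :
    Summable fun n : ℤ => ‖r ^ n * p ^ (n * n)‖ := by
  refine Summable.of_nat_of_neg ?_ ?_
  · refine (summ_gauss_nat (norm_pos_iff.2 hr) (norm_pos_iff.2 hp0) hp).congr fun n => ?_
    rw [norm_mul, ← Nat.cast_mul, zpow_natCast, zpow_natCast, norm_pow, norm_pow]
  · refine (summ_gauss_nat (inv_pos.2 (norm_pos_iff.2 hr)) (norm_pos_iff.2 hp0) hp).congr fun n => ?_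
    rw [neg_mul_neg, norm_mul, ← Nat.cast_mul, zpow_neg, zpow_natCast, zpow_natCast, norm_inv, norm_pow, norm_pow, inv_pow]

/-- Tannery-type lemma. -/
lemma tannery (g : ℤ → ℂ) (c : ℕ → ℤ → ℂ) (L : ℂ) (hg : Summable fun n => ‖g n‖)
    (hb : ∃ C : ℝ, 0 ≤ C ∧ ∀ N n, ‖c N n‖ ≤ C)
    (hl : ∀ n, Tendsto (fun N => c N n) atTop (𝓝 L)) :
    Tendsto (fun N : ℕ => ∑ n ∈ Icc (-(N:ℤ)) N, g n * c N n) atTop (𝓝 (L * ∑' n, g n)) := by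
  obtain ⟨C, hC0, hC⟩ := hb
  have := tendsto_tsum_of_dominated_convergence (𝓕 := atTop)
    (f := fun (N : ℕ) (n : ℤ) => if n ∈ Icc (-(N:ℤ)) N then g n * c N n else 0)
    (g := fun n => g n * L) (bound := fun n => ‖g n‖ * C) (hg.mul_right C) ?_ ?_
  · rw [tsum_mul_right, mul_comm] at this
    refine this.congr fun N => ?_
    rw [tsum_eq_sum (s := Icc (-(N:ℤ)) N)]
    · exact sum_congr rfl fun n hn => if_pos hn
    · intro n hn; exact if_neg hn
  · intro n
    refine ((hl n).const_mul (g n)).congr' ?_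
    filter_upwards [eventually_ge_atTop n.natAbs] with N hN
    rw [if_pos]
    rw [mem_Icc]; omega
  · refine Eventually.of_forall fun N n => ?_
    split_ifs
    · rw [norm_mul]; exact mul_le_mul_of_nonneg_left (hC N n) (norm_nonneg _)
    · simp; positivity

lemma tendsto_toNat (a : ℤ) : Tendsto (fun N : ℕ => ((N:ℤ) + a).toNat) atTop atTop := by
  refine tendsto_atTop.2 fun b => ?_
  filter_upwards [eventually_ge_atTop (b + a.natAbs)] with N hN
  omega

/-- product over integer interval -/
lemma prod_Icc_shift (p x : ℂ) (hp0 : p ≠ 0) (hx : x ≠ 0) (A B : ℕ) :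
    ∏ k ∈ Ico (-(A:ℤ)) B, (1 - x * p ^ k) =
      qp p x B * qp p (p / x) A * (-x) ^ A / ∏ m ∈ range A, p ^ (m+1) := by
  induction A with
  | zero =>
    simp only [Nat.cast_zero, neg_zero, qp_zero, pow_zero, range_zero, prod_empty, mul_one, div_one]
    induction B with
    | zero => simp [qp_zero]
    | succ B ih =>
      rw [qp_succ, ← ih, Nat.cast_succ, ← Finset.prod_Ico_mul_eq_prod_Ico_add_one (by omega)]
      simp
  | succ A ih =>
    have : Ico (-((A+1:ℕ):ℤ)) B = insert (-((A+1:ℕ):ℤ)) (Ico (-(A:ℤ)) B) := by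
      ext k; simp only [mem_Ico, mem_insert]; push_cast; omega
    rw [this, prod_insert (by simp), ih, qp_succ, prod_range_succ]
    have h1 : (∏ m ∈ range A, p ^ (m+1)) ≠ 0 := prod_ne_zero_iff.2 fun m _ => pow_ne_zero _ hp0
    rw [zpow_neg, zpow_natCast]
    field_simp
    ring

lemma tri_sq (p : ℂ) (A : ℕ) : (∏ m ∈ range A, p ^ (m+1)) ^ 2 = p ^ (A * (A+1)) := by
  induction A with
  | zero => simp
  | succ A ih => rw [prod_range_succ, mul_pow, ih]; ring

end
end OV

open Filter Topology Finset
namespace OV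
noncomputable section

open Polynomial in
lemma pf_poly {σ : Type*} [DecidableEq σ] (s : Finset σ) (u : σ → ℂ) (hu : ∀ i ∈ s, u i ≠ 0)
    (inj : Set.InjOn u s) (f : Polynomial ℂ) (hf : f.degree < #s) (z : ℂ) :
    f.eval z = ∑ i ∈ s, (f.eval (u i)⁻¹ / ∏ k ∈ s.erase i, (1 - u k / u i)) *
      ∏ k ∈ s.erase i, (1 - z * u k) := by
  set g : Polynomial ℂ := ∑ i ∈ s, C (f.eval (u i)⁻¹ / ∏ k ∈ s.erase i, (1 - u k / u i)) *
      ∏ k ∈ s.erase i, (1 - X * C (u k)) with hg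
  have key : f = g := by
    refine Polynomial.eq_of_degrees_lt_of_eval_index_eq s (v := fun i => (u i)⁻¹) ?_ hf ?_ ?_
    · intro i hi j hj h
      exact inj hi hj (inv_injective h)
    · rw [hg]
      refine lt_of_le_of_lt (Polynomial.degree_sum_le _ _) ?_
      rw [Finset.sup_lt_iff (by exact WithBot.bot_lt_coe _)]
      intro i hi
      refine lt_of_le_of_lt (Polynomial.degree_mul_le _ _) ?_
      refine lt_of_le_of_lt (add_le_add_left Polynomial.degree_C_le _) ?_
      rw [zero_add, Polynomial.degree_prod]
      refine lt_of_le_of_lt (Finset.sum_le_card_nsmul _ _ 1 ?_) ?_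
      · intro k _
        compute_degree
      · rw [card_erase_of_mem hi]
        have : 0 < #s := card_pos.2 ⟨i, hi⟩
        rw [nsmul_one]
        exact_mod_cast (show #s - 1 < #s by omega)
    · intro i hi
      rw [hg, Polynomial.eval_finsetSum, Finset.sum_eq_single_of_mem i hi]
      · simp only [eval_mul, eval_C, eval_prod, eval_sub, eval_one, eval_X]
        have : ∏ k ∈ s.erase i, (1 - u k / u i) ≠ 0 := by
          rw [prod_ne_zero_iff]
          intro k hk h0
          rw [mem_erase] at hk
          apply hk.1
          apply inj hk.2 hi
          have := hu i hi
          field_simp at h0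
          linear_combination -h0
        rw [show ∏ k ∈ s.erase i, (1 - (u i)⁻¹ * u k) = ∏ k ∈ s.erase i, (1 - u k / u i) from
          prod_congr rfl fun k _ => by rw [div_eq_inv_mul]]
        field_simp
      · intro j hj hji
        simp only [eval_mul, eval_C, eval_prod, eval_sub, eval_one, eval_X]
        have h0 : ∏ k ∈ s.erase j, (1 - (u i)⁻¹ * u k) = 0 := by
          rw [prod_eq_zero (i := i) (mem_erase.2 ⟨hji.symm, hi⟩)]
          rw [inv_mul_cancel₀ (hu i hi), sub_self]
        rw [h0, mul_zero]
  conv_lhs => rw [key]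
  rw [hg, Polynomial.eval_finsetSum]
  simp only [eval_mul, eval_C, eval_prod, eval_sub, eval_one, eval_X]

/-- numerator -/
def nu {τ : Type*} (M : ℕ) (T : Finset τ) (v : τ → ℂ) (z : ℂ) : ℂ := z ^ M * ∏ j ∈ T, (1 - z * v j)

open Polynomial in
lemma pf_nu {σ τ : Type*} [DecidableEq σ] (s : Finset σ) (u : σ → ℂ) (hu : ∀ i ∈ s, u i ≠ 0)
    (inj : Set.InjOn u s) (M : ℕ) (T : Finset τ) (v : τ → ℂ) (hM : M + #T < #s) (z : ℂ) :
    nu M T v z = ∑ i ∈ s, (nu M T v (u i)⁻¹ / ∏ k ∈ s.erase i, (1 - u k / u i)) *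
      ∏ k ∈ s.erase i, (1 - z * u k) := by
  have := pf_poly s u hu inj (X ^ M * ∏ j ∈ T, (1 - X * C (v j))) ?_ z
  · simpa only [eval_mul, eval_pow, eval_X, eval_prod, eval_sub, eval_one, eval_C, nu] using this
  · rw [degree_mul, degree_X_pow, degree_prod]
    have h : ∑ i ∈ T, (1 - X * C (v i)).degree ≤ #T • (1 : WithBot ℕ) :=
      Finset.sum_le_card_nsmul _ _ 1 (by intro k _; compute_degree)
    rw [nsmul_one] at h
    refine lt_of_le_of_lt (add_le_add_right h _) ?_
    exact_mod_cast hM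

lemma pf {σ τ : Type*} [DecidableEq σ] (s : Finset σ) (u : σ → ℂ) (hu : ∀ i ∈ s, u i ≠ 0)
    (inj : Set.InjOn u s) (M : ℕ) (T : Finset τ) (v : τ → ℂ) (hM : M + #T < #s) (z : ℂ)
    (hz : ∀ i ∈ s, 1 - z * u i ≠ 0) :
    nu M T v z / ∏ i ∈ s, (1 - z * u i) =
      ∑ i ∈ s, (nu M T v (u i)⁻¹ / ∏ k ∈ s.erase i, (1 - u k / u i)) * (1 - z * u i)⁻¹ := by
  rw [pf_nu s u hu inj M T v hM z, sum_div]
  refine sum_congr rfl fun i hi => ?_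
  rw [← mul_prod_erase s _ hi]
  have h1 := hz i hi
  have h2 : ∏ k ∈ s.erase i, (1 - z * u k) ≠ 0 :=
    prod_ne_zero_iff.2 fun k hk => hz k (mem_of_mem_erase hk)
  field_simp

lemma hasDeriv_prod {τ : Type*} [DecidableEq τ] (T : Finset τ) (v : τ → ℂ) (z : ℂ)
    (h : ∀ j ∈ T, 1 - z * v j ≠ 0) :
    HasDerivAt (fun z => ∏ j ∈ T, (1 - z * v j))
      (-(∏ j ∈ T, (1 - z * v j)) * ∑ j ∈ T, v j / (1 - z * v j)) z := by
  have := HasDerivAt.fun_finsetProd (u := T) (f := fun j z => 1 - z * v j) (f' := fun j => - v j) (x := z)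
    (fun j _ => by simpa using ((hasDerivAt_id z).mul_const (v j)).const_sub 1)
  refine this.congr_deriv ?_
  rw [mul_sum]
  refine sum_congr rfl fun j hj => ?_
  rw [← mul_prod_erase T _ hj]
  have := h j hj
  simp only [smul_eq_mul]
  field_simp

lemma pf_deg {σ τ : Type*} [DecidableEq σ] [DecidableEq τ] (s : Finset σ) (u : σ → ℂ) (hu : ∀ i ∈ s, u i ≠ 0)
    (inj : Set.InjOn u s) (M : ℕ) (T : Finset τ) (v : τ → ℂ) (hM : M + #T < #s) (o : σ) (ho : o ∈ s)
    (z : ℂ) (hzo : z = (u o)⁻¹) (hT : ∀ j ∈ T, 1 - z * v j ≠ 0) :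
    ∑ i ∈ s.erase o, (nu M T v (u i)⁻¹ / ∏ k ∈ s.erase i, (1 - u k / u i)) * (1 - z * u i)⁻¹ =
      - (nu M T v (u o)⁻¹ / ∏ k ∈ s.erase o, (1 - u k / u o)) *
       (M - ∑ j ∈ T, z * v j / (1 - z * v j) + ∑ k ∈ s.erase o, z * u k / (1 - z * u k)) := by
  set r : σ → ℂ := fun i => nu M T v (u i)⁻¹ / ∏ k ∈ s.erase i, (1 - u k / u i) with hr
  have huo := hu o ho
  have hz0 : z ≠ 0 := by rw [hzo]; exact inv_ne_zero huo
  have hs : ∀ k ∈ s.erase o, 1 - z * u k ≠ 0 := by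
    intro k hk h0
    rw [mem_erase] at hk
    apply hk.1
    apply inj hk.2 ho
    rw [hzo] at h0
    field_simp at h0
    linear_combination -h0
  -- derivative of left side
  have d1 : HasDerivAt (nu M T v) (nu M T v z * (M / z - ∑ j ∈ T, v j / (1 - z * v j))) z := by
    have := (hasDerivAt_pow M z).fun_mul (hasDeriv_prod T v z hT)
    refine HasDerivAt.congr_deriv (f := nu M T v) this ?_
    rcases Nat.eq_zero_or_pos M with h | h
    · subst h; simp [nu]
    · rw [nu]
      obtain ⟨m, rfl⟩ : ∃ m, M = m + 1 := ⟨M - 1, by omega⟩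
      simp only [Nat.add_sub_cancel]
      field_simp
      ring
  have d2 : HasDerivAt (nu M T v)
      (r o * (-(∏ k ∈ s.erase o, (1 - z * u k)) * ∑ k ∈ s.erase o, u k / (1 - z * u k)) +
        ∑ i ∈ s.erase o, r i * (- u o * ∏ k ∈ (s.erase i).erase o, (1 - z * u k))) z := by
    have e : nu M T v = fun z => r o * (∏ k ∈ s.erase o, (1 - z * u k)) +
        ∑ i ∈ s.erase o, r i * ((1 - z * u o) * ∏ k ∈ (s.erase i).erase o, (1 - z * u k)) := by
      funext w
      rw [pf_nu s u hu inj M T v hM w, ← add_sum_erase s _ ho]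
      congr 1
      refine sum_congr rfl fun i hi => ?_
      rw [mul_prod_erase (s.erase i) (fun k => 1 - w * u k)]
      rw [mem_erase] at hi ⊢
      exact ⟨hi.1.symm, ho⟩
    rw [e]
    refine ((hasDeriv_prod (s.erase o) u z hs).const_mul (r o)).add ?_
    refine HasDerivAt.fun_sum fun i hi => ?_
    refine HasDerivAt.const_mul (r i) ?_
    have h1 : HasDerivAt (fun z => 1 - z * u o) (- u o) z := by
      simpa using ((hasDerivAt_id z).mul_const (u o)).const_sub 1
    have h2 := hasDeriv_prod ((s.erase i).erase o) u z (fun k hk => hs k (by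
      simp only [mem_erase] at hk ⊢; tauto))
    refine (h1.fun_mul h2).congr_deriv ?_
    rw [hzo, inv_mul_cancel₀ huo]; ring
  have key := d1.unique d2
  have hP : ∏ k ∈ s.erase o, (1 - z * u k) ≠ 0 := prod_ne_zero_iff.2 hs
  have hro : nu M T v z = r o * ∏ k ∈ s.erase o, (1 - z * u k) := by
    have : ∏ k ∈ s.erase o, (1 - u k / u o) = ∏ k ∈ s.erase o, (1 - z * u k) :=
      prod_congr rfl fun k _ => by rw [hzo, div_eq_inv_mul]
    rw [hr]; simp only; rw [this, ← hzo]; field_simp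
  have h3 : ∑ i ∈ s.erase o, r i * (- u o * ∏ k ∈ (s.erase i).erase o, (1 - z * u k)) =
      - u o * (∏ k ∈ s.erase o, (1 - z * u k)) * ∑ i ∈ s.erase o, r i * (1 - z * u i)⁻¹ := by
    rw [mul_sum]
    refine sum_congr rfl fun i hi => ?_
    rw [← mul_prod_erase (s.erase o) _ hi, erase_right_comm]
    have := hs i hi
    field_simp
  rw [h3, hro] at key
  change ∑ i ∈ s.erase o, r i * (1 - z * u i)⁻¹ = - r o * _
  simp only [mul_div_assoc, ← mul_sum]
  have huz : u o = z⁻¹ := by rw [hzo, inv_inv]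
  rw [huz] at key
  set P := ∏ k ∈ s.erase o, (1 - z * u k)
  set S1 := ∑ i ∈ s.erase o, r i * (1 - z * u i)⁻¹
  field_simp at key
  change _ = - r o * _
  linear_combination key

end
end OV

open Filter Topology Finset
namespace OV
noncomputable section

/-- symmetric integer interval -/
def II (N : ℕ) : Finset ℤ := Icc (-(N:ℤ)) N

def RR (p : ℂ) (N : ℕ) (n : ℤ) (x : ℂ) : ℂ :=
  qp p x (N + (-n + 1)).toNat * qp p (p / x) (N + n).toNat
def SS (p : ℂ) (N : ℕ) (n : ℤ) : ℂ :=
  qp p p (N + (-n)).toNat * qp p p (N + n).toNat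
def tri (p : ℂ) (A : ℕ) : ℂ := ∏ m ∈ range A, p ^ (m+1)

lemma tri_ne {p : ℂ} (hp0 : p ≠ 0) (A : ℕ) : tri p A ≠ 0 :=
  prod_ne_zero_iff.2 fun m _ => pow_ne_zero _ hp0

lemma Q_shift {p x : ℂ} (hp0 : p ≠ 0) (hx : x ≠ 0) (N : ℕ) (n : ℤ) (hn : n ∈ II N) :
    ∏ k ∈ II N, (1 - x * p ^ (k - n)) =
      RR p N n x * (-x) ^ (N + n).toNat / tri p (N + n).toNat := by
  rw [II, mem_Icc] at hn
  have := prod_Icc_shift p x hp0 hx (N + n).toNat (N + (-n + 1)).toNat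
  rw [RR, tri, ← this]
  refine prod_nbij' (fun k => k - n) (fun k => k + n) ?_ ?_ ?_ ?_ ?_
  · intro k hk; simp only [II, mem_Icc, mem_Ico] at hk ⊢; omega
  · intro k hk; simp only [II, mem_Icc, mem_Ico] at hk ⊢; omega
  · intro k hk; simp
  · intro k hk; simp
  · intro k hk; rfl

lemma Q_own {p : ℂ} (hp0 : p ≠ 0) (N : ℕ) (n : ℤ) (hn : n ∈ II N) :
    ∏ k ∈ (II N).erase n, (1 - p ^ (k - n)) =
      SS p N n * (-1) ^ (N + n).toNat / tri p (N + n).toNat := by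
  rw [II, mem_Icc] at hn
  set A := (N + n).toNat with hA
  set B := (N + (-n)).toNat with hB
  have h1 : ∏ k ∈ (II N).erase n, (1 - p ^ (k - n)) =
      (∏ k ∈ Ico (-(A:ℤ)) ((0:ℕ):ℤ), (1 - 1 * p ^ k)) * ∏ i ∈ range B, (1 - p * p ^ i) := by
    have h2 : ∏ i ∈ range B, (1 - p * p ^ i) = ∏ k ∈ Ioc (0:ℤ) B, (1 - 1 * p ^ k) := by
      refine prod_nbij' (fun i => (i:ℤ) + 1) (fun k => (k - 1).toNat) ?_ ?_ ?_ ?_ ?_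
      · intro k hk; simp only [mem_range, mem_Ioc] at hk ⊢; omega
      · intro k hk; simp only [mem_range, mem_Ioc] at hk ⊢; omega
      · intro k hk; simp
      · intro k hk; simp only [mem_Ioc] at hk ⊢; omega
      · intro k hk
        rw [one_mul, ← pow_succ', ← zpow_natCast]; push_cast; rfl
    rw [h2, ← prod_union]
    · refine prod_nbij' (fun k => k - n) (fun k => k + n) ?_ ?_ ?_ ?_ ?_
      · intro k hk
        simp only [II, mem_erase, mem_union, mem_Icc, mem_Ico, mem_Ioc] at hk ⊢; omega
      · intro k hk
        simp only [II, mem_erase, mem_union, mem_Icc, mem_Ico, mem_Ioc] at hk ⊢; omega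
      · intro k hk; simp
      · intro k hk; simp
      · intro k hk; simp
    · rw [disjoint_left]; intro k hk; simp only [mem_Ico, mem_Ioc] at hk ⊢; omega
  rw [h1, prod_Icc_shift p 1 hp0 one_ne_zero, SS, qp_zero, tri, div_one]
  have h3 : ∏ i ∈ range B, (1 - p * p ^ i) = qp p p B := rfl
  rw [h3]
  ring

/-- the index set of three families -/
def s3 (N : ℕ) : Finset (Σ _ : Fin 3, ℤ) := univ.sigma fun _ => II N

lemma univ3 {k l m : Fin 3} (h1 : k ≠ l) (h2 : k ≠ m) (h3 : l ≠ m) :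
    (univ : Finset (Fin 3)) = {k, l, m} := by
  revert k l m; decide

lemma prod_s3 {k l m : Fin 3} (h1 : k ≠ l) (h2 : k ≠ m) (h3 : l ≠ m) (N : ℕ)
    (F : (Σ _ : Fin 3, ℤ) → ℂ) :
    ∏ x ∈ s3 N, F x = (∏ j ∈ II N, F ⟨k, j⟩) * ((∏ j ∈ II N, F ⟨l, j⟩) * ∏ j ∈ II N, F ⟨m, j⟩) := by
  rw [s3, prod_sigma, univ3 h1 h2 h3, prod_insert (by simp [h1, h2]), prod_insert (by simp [h3]),
    prod_singleton]

lemma sum_s3 {k l m : Fin 3} (h1 : k ≠ l) (h2 : k ≠ m) (h3 : l ≠ m) (N : ℕ)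
    (F : (Σ _ : Fin 3, ℤ) → ℂ) :
    ∑ x ∈ s3 N, F x = (∑ j ∈ II N, F ⟨k, j⟩) + ((∑ j ∈ II N, F ⟨l, j⟩) + ∑ j ∈ II N, F ⟨m, j⟩) := by
  rw [s3, sum_sigma, univ3 h1 h2 h3, sum_insert (by simp [h1, h2]), sum_insert (by simp [h3]),
    sum_singleton]

lemma prod_s3_erase {k l m : Fin 3} (h1 : k ≠ l) (h2 : k ≠ m) (h3 : l ≠ m) (N : ℕ) (n : ℤ)
    (F : (Σ _ : Fin 3, ℤ) → ℂ) :
    ∏ x ∈ (s3 N).erase ⟨k, n⟩, F x =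
      (∏ j ∈ (II N).erase n, F ⟨k, j⟩) * ((∏ j ∈ II N, F ⟨l, j⟩) * ∏ j ∈ II N, F ⟨m, j⟩) := by
  have : (s3 N).erase ⟨k, n⟩ = univ.sigma (fun i => if i = k then (II N).erase n else II N) := by
    ext ⟨i, j⟩
    simp only [s3, mem_erase, mem_sigma, mem_univ, true_and]
    by_cases h : i = k
    · subst h; simp
    · simp [h]
  rw [this, prod_sigma, univ3 h1 h2 h3, prod_insert (by simp [h1, h2]), prod_insert (by simp [h3]),
    prod_singleton]
  simp [h1.symm, h2.symm]

lemma II_card (N : ℕ) : #(II N) = 2 * N + 1 := by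
  rw [II, Int.card_Icc]; omega

def cc (p : ℂ) (x y w : ℂ) (N : ℕ) (n : ℤ) : ℂ := RR p N n x / (SS p N n * (RR p N n y * RR p N n w))

lemma coef3 {p : ℂ} (hp0 : p ≠ 0) {a : Fin 3 → ℂ} (ha : ∀ i, a i ≠ 0) {b : ℂ} (hb : b ≠ 0)
    {k l m : Fin 3} (h1 : k ≠ l) (h2 : k ≠ m) (h3 : l ≠ m) (N : ℕ) (n : ℤ) (hn : n ∈ II N) :
    nu (2 * N) (II N) (fun j => b * p ^ j) (a k * p ^ n)⁻¹ /
      (∏ x ∈ (s3 N).erase ⟨k, n⟩, (1 - (a x.1 * p ^ x.2) / (a k * p ^ n))) =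
    (b / (a k * a l * a m)) ^ N * p ^ (N * (N + 1)) *
      (((b * a k / (a l * a m)) ^ n * p ^ (n * n + n)) * cc p (b / a k) (a l / a k) (a m / a k) N n) := by
  have hk := ha k
  have hl := ha l
  have hm := ha m
  have e0 : ∀ (x : ℂ) (j : ℤ), x * p ^ j / (a k * p ^ n) = x / a k * p ^ (j - n) := by
    intro x j; rw [zpow_sub₀ hp0]; field_simp
  have e1 : ∏ j ∈ II N, (1 - (a k * p ^ n)⁻¹ * (b * p ^ j)) = ∏ j ∈ II N, (1 - b / a k * p ^ (j - n)) := by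
    refine prod_congr rfl fun j _ => ?_
    rw [← e0, div_eq_inv_mul]
  rw [prod_s3_erase h1 h2 h3, nu, e1]
  simp only [e0, div_self hk, one_mul]
  rw [Q_own hp0 N n hn, Q_shift hp0 (div_ne_zero hb hk) N n hn, Q_shift hp0 (div_ne_zero hl hk) N n hn,
    Q_shift hp0 (div_ne_zero hm hk) N n hn, cc]
  rw [II, mem_Icc] at hn
  set A := (N + n).toNat with hA
  have hnA : n = (A:ℤ) - N := by omega
  have ht := tri_ne hp0 A
  have ht2 : tri p A ^ 2 = p ^ (A * (A+1)) := tri_sq p A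
  have hpe : p ^ (n * n + n) = p ^ (A * (A + 1)) * p ^ (N * N) / (p ^ (2 * A * N) * p ^ N) := by
    rw [← pow_add, ← pow_add, ← zpow_natCast, ← zpow_natCast, ← zpow_sub₀ hp0]
    congr 1
    rw [hnA]; push_cast; ring
  have hab : b * a k / (a l * a m) ≠ 0 := by positivity
  have hx1 : (b * a k / (a l * a m)) ^ n = (b * a k / (a l * a m)) ^ A / (b * a k / (a l * a m)) ^ N := by
    rw [hnA, zpow_sub₀ hab, zpow_natCast, zpow_natCast]
  have hx2 : p ^ n = p ^ A / p ^ N := by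
    rw [hnA, zpow_sub₀ hp0, zpow_natCast, zpow_natCast]
  have scal : (a k * p ^ n)⁻¹ ^ (2 * N) * (-(b / a k)) ^ A * tri p A ^ 2 /
      ((-1) ^ A * (-(a l / a k)) ^ A * (-(a m / a k)) ^ A) = (b / (a k * a l * a m)) ^ N * p ^ (N * (N + 1)) *
      ((b * a k / (a l * a m)) ^ n * p ^ (n * n + n)) := by
    rw [ht2, hpe, hx1, hx2, neg_pow (b / a k), neg_pow (a l / a k), neg_pow (a m / a k)]
    have hs : ((-1:ℂ) ^ A) * (-1) ^ A = 1 := by rw [← mul_pow]; simp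
    have hs0 : ((-1:ℂ) ^ A) ≠ 0 := by simp
    rw [show ((-1:ℂ) ^ A * ((-1) ^ A * (a l / a k) ^ A) * ((-1) ^ A * (a m / a k) ^ A)) =
      (-1) ^ A * ((a l / a k) ^ A * (a m / a k) ^ A) by linear_combination ((-1) ^ A * ((a l / a k) ^ A * (a m / a k) ^ A)) * hs]
    simp only [div_pow, mul_pow, inv_pow, mul_inv]
    field_simp
    ring
  conv_rhs => rw [← mul_assoc]
  rw [← scal]
  generalize (a k * p ^ n)⁻¹ ^ (2 * N) = g
  generalize RR p N n (b / a k) = R1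
  generalize RR p N n (a l / a k) = R2
  generalize RR p N n (a m / a k) = R3
  generalize SS p N n = R4
  field_simp

end
end OV

open Filter Topology Finset
namespace OV
noncomputable section

lemma RR_tendsto {p : ℂ} (hp : ‖p‖ < 1) (x : ℂ) (n : ℤ) :
    Tendsto (fun N => RR p N n x) atTop (𝓝 (br p x)) :=
  ((qp_tendsto hp x).comp (tendsto_toNat (-n+1))).mul ((qp_tendsto hp (p/x)).comp (tendsto_toNat n))

lemma SS_tendsto {p : ℂ} (hp : ‖p‖ < 1) (n : ℤ) :
    Tendsto (fun N => SS p N n) atTop (𝓝 (qi p p * qi p p)) :=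
  ((qp_tendsto hp p).comp (tendsto_toNat (-n))).mul ((qp_tendsto hp p).comp (tendsto_toNat n))

lemma RR_bdd {p : ℂ} (hp : ‖p‖ < 1) (x : ℂ) : ∃ C : ℝ, 0 ≤ C ∧ ∀ N n, ‖RR p N n x‖ ≤ C := by
  obtain ⟨C, hC0, hC⟩ := qp_bdd hp x
  obtain ⟨D, hD0, hD⟩ := qp_bdd hp (p/x)
  refine ⟨C * D, by positivity, fun N n => ?_⟩
  rw [RR, norm_mul]
  exact mul_le_mul (hC _) (hD _) (norm_nonneg _) hC0

lemma RR_inv_bdd {p x : ℂ} (hp : ‖p‖ < 1) (hp0 : p ≠ 0) (hx : x ≠ 0) (h : np p x) :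
    ∃ C : ℝ, 0 ≤ C ∧ ∀ N n, ‖(RR p N n x)⁻¹‖ ≤ C := by
  obtain ⟨C, hC0, hC⟩ := qp_inv_bdd hp h.nat
  obtain ⟨D, hD0, hD⟩ := qp_inv_bdd hp (h.inv hp0 hx)
  refine ⟨C * D, by positivity, fun N n => ?_⟩
  rw [RR, mul_inv, norm_mul]
  exact mul_le_mul (hC _) (hD _) (norm_nonneg _) hC0

lemma SS_inv_bdd {p : ℂ} (hp : ‖p‖ < 1) :
    ∃ C : ℝ, 0 ≤ C ∧ ∀ N n, ‖(SS p N n)⁻¹‖ ≤ C := by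
  obtain ⟨C, hC0, hC⟩ := qp_inv_bdd hp (self_np hp)
  refine ⟨C * C, by positivity, fun N n => ?_⟩
  rw [SS, mul_inv, norm_mul]
  exact mul_le_mul (hC _) (hC _) (norm_nonneg _) hC0

lemma cc_bdd {p x y w : ℂ} (hp : ‖p‖ < 1) (hp0 : p ≠ 0) (hy : y ≠ 0) (hw : w ≠ 0)
    (hy' : np p y) (hw' : np p w) : ∃ C : ℝ, 0 ≤ C ∧ ∀ N n, ‖cc p x y w N n‖ ≤ C := by
  obtain ⟨C1, h10, h1⟩ := RR_bdd hp x
  obtain ⟨C2, h20, h2⟩ := SS_inv_bdd hp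
  obtain ⟨C3, h30, h3⟩ := RR_inv_bdd hp hp0 hy hy'
  obtain ⟨C4, h40, h4⟩ := RR_inv_bdd hp hp0 hw hw'
  refine ⟨C1 * (C2 * (C3 * C4)), by positivity, fun N n => ?_⟩
  rw [cc, div_eq_mul_inv, mul_inv, mul_inv, norm_mul, norm_mul, norm_mul]
  gcongr
  · exact h1 _ _
  · exact h2 _ _
  · exact h3 _ _
  · exact h4 _ _

lemma cc_tendsto {p x y w : ℂ} (hp : ‖p‖ < 1) (hp0 : p ≠ 0) (hy : y ≠ 0) (hw : w ≠ 0)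
    (hy' : np p y) (hw' : np p w) (n : ℤ) :
    Tendsto (fun N => cc p x y w N n) atTop
      (𝓝 (br p x / (qi p p * qi p p * (br p y * br p w)))) := by
  refine (RR_tendsto hp x n).div ((SS_tendsto hp n).mul ((RR_tendsto hp y n).mul (RR_tendsto hp w n))) ?_
  have := qi_self_ne hp
  have := br_ne_zero hp hp0 hy hy'
  have := br_ne_zero hp hp0 hw hw'
  positivity

/-- Appell-Lerch type sum -/
def fam (p r y : ℂ) : ℂ := ∑' n : ℤ, r ^ n * p ^ (n * n + n) * (1 - y * p ^ n)⁻¹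

lemma fam_summable {p r y : ℂ} (hp : ‖p‖ < 1) (hp0 : p ≠ 0) (hr : r ≠ 0) (hy : y ≠ 0) :
    Summable fun n : ℤ => ‖r ^ n * p ^ (n * n + n) * (1 - y * p ^ n)⁻¹‖ := by
  obtain ⟨C, hC0, hC⟩ := inv_bdd' hp hp0 hy
  refine Summable.of_nonneg_of_le (fun _ => norm_nonneg _) (fun n => ?_)
    ((summ_theta (mul_ne_zero hr hp0) hp0 hp).mul_right C)
  rw [norm_mul, zpow_add₀ hp0, mul_zpow, show r ^ n * (p ^ (n * n) * p ^ n) = r ^ n * p ^ n * p ^ (n * n) by ring]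
  exact mul_le_mul_of_nonneg_left (hC n) (norm_nonneg _)

lemma fam_tendsto {p r y x y' w' : ℂ} (hp : ‖p‖ < 1) (hp0 : p ≠ 0) (hr : r ≠ 0) (hy : y ≠ 0)
    (h1 : y' ≠ 0) (h2 : w' ≠ 0) (h3 : np p y') (h4 : np p w') :
    Tendsto (fun N => ∑ n ∈ II N, (r ^ n * p ^ (n * n + n) * (1 - y * p ^ n)⁻¹) * cc p x y' w' N n)
      atTop (𝓝 (br p x / (qi p p * qi p p * (br p y' * br p w')) * fam p r y)) :=
  tannery _ _ _ (fam_summable hp hp0 hr hy) (cc_bdd hp hp0 h1 h2 h3 h4)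
    (cc_tendsto hp hp0 h1 h2 h3 h4)

lemma zpow_inj' {p : ℂ} (hp : ‖p‖ < 1) (hp0 : p ≠ 0) {m n : ℤ} (h : p ^ m = p ^ n) : m = n := by
  have h' := congrArg norm h
  rw [norm_zpow, norm_zpow] at h'
  exact zpow_right_injective₀ (norm_pos_iff.2 hp0) hp.ne h'

/-- hypotheses on the three base points -/
structure Hyp (p : ℂ) (a : Fin 3 → ℂ) (b : ℂ) : Prop where
  hp : ‖p‖ < 1
  hp0 : p ≠ 0
  ha : ∀ i, a i ≠ 0
  hb : b ≠ 0
  hd : ∀ i j, i ≠ j → np p (a i / a j)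

def uu (p : ℂ) (a : Fin 3 → ℂ) (x : Σ _ : Fin 3, ℤ) : ℂ := a x.1 * p ^ x.2

lemma Hyp.inj {p : ℂ} {a : Fin 3 → ℂ} {b : ℂ} (H : Hyp p a b) : Function.Injective (uu p a) := by
  rintro ⟨i, m⟩ ⟨j, n⟩ h
  simp only [uu] at h
  have h1 := zpow_ne_zero n H.hp0
  have h2 := zpow_ne_zero m H.hp0
  have h3 := H.ha i
  have h4 := H.ha j
  by_cases hij : i = j
  · subst hij
    have := zpow_inj' H.hp H.hp0 (mul_left_cancel₀ (H.ha i) h)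
    rw [this]
  · exfalso
    apply H.hd i j hij (m - n)
    rw [zpow_sub₀ H.hp0]
    field_simp
    exact h

lemma Hyp.une {p : ℂ} {a : Fin 3 → ℂ} {b : ℂ} (H : Hyp p a b) (x) : uu p a x ≠ 0 :=
  mul_ne_zero (H.ha _) (zpow_ne_zero _ H.hp0)

lemma s3_card (N : ℕ) : #(s3 N) = 3 * (2 * N + 1) := by
  rw [s3, card_sigma]; simp [II_card]

/-- the residue sum -/
def rsum (p : ℂ) (a : Fin 3 → ℂ) (b z : ℂ) (k l m : Fin 3) (N : ℕ) : ℂ :=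
  ∑ n ∈ II N, ((b * a k / (a l * a m)) ^ n * p ^ (n * n + n) * (1 - z * a k * p ^ n)⁻¹) *
    cc p (b / a k) (a l / a k) (a m / a k) N n

lemma sum_rs {p : ℂ} {a : Fin 3 → ℂ} {b : ℂ} (H : Hyp p a b) (z : ℂ) (N : ℕ) :
    ∑ i ∈ s3 N, (nu (2 * N) (II N) (fun j => b * p ^ j) (uu p a i)⁻¹ /
      ∏ k ∈ (s3 N).erase i, (1 - uu p a k / uu p a i)) * (1 - z * uu p a i)⁻¹ =
    (b / (a 0 * a 1 * a 2)) ^ N * p ^ (N * (N + 1)) *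
      (rsum p a b z 0 1 2 N + (rsum p a b z 1 0 2 N + rsum p a b z 2 0 1 N)) := by
  rw [sum_s3 (k := 0) (l := 1) (m := 2) (by decide) (by decide) (by decide)]
  have key : ∀ {k l m : Fin 3} (_ : k ≠ l) (_ : k ≠ m) (_ : l ≠ m),
      (∑ n ∈ II N, (nu (2 * N) (II N) (fun j => b * p ^ j) (uu p a ⟨k, n⟩)⁻¹ /
      ∏ k' ∈ (s3 N).erase ⟨k, n⟩, (1 - uu p a k' / uu p a ⟨k, n⟩)) * (1 - z * uu p a ⟨k, n⟩)⁻¹) =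
      (b / (a k * a l * a m)) ^ N * p ^ (N * (N + 1)) * rsum p a b z k l m N := by
    intro k l m h1 h2 h3
    rw [rsum, mul_sum]
    refine sum_congr rfl fun n hn => ?_
    have := coef3 H.hp0 H.ha H.hb h1 h2 h3 N n hn
    simp only [uu]
    rw [this, mul_assoc z]
    ring
  rw [key (k := 0) (l := 1) (m := 2) (by decide) (by decide) (by decide),
    key (k := 1) (l := 0) (m := 2) (by decide) (by decide) (by decide),
    key (k := 2) (l := 0) (m := 1) (by decide) (by decide) (by decide),
    show a 1 * a 0 * a 2 = a 0 * a 1 * a 2 by ring, show a 2 * a 0 * a 1 = a 0 * a 1 * a 2 by ring]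
  ring

lemma rsum_tendsto {p : ℂ} {a : Fin 3 → ℂ} {b : ℂ} (H : Hyp p a b) {z : ℂ} (hz : z ≠ 0)
    {k l m : Fin 3} (h1 : k ≠ l) (h2 : k ≠ m) :
    Tendsto (rsum p a b z k l m) atTop (𝓝 (br p (b / a k) /
      (qi p p * qi p p * (br p (a l / a k) * br p (a m / a k))) *
      fam p (b * a k / (a l * a m)) (z * a k))) := by
  have hk := H.ha k
  have hl := H.ha l
  have hm := H.ha m
  have hb := H.hb
  exact fam_tendsto H.hp H.hp0 (by positivity) (by positivity) (by positivity) (by positivity)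
    (H.hd _ _ h1.symm) (H.hd _ _ h2.symm)

lemma Q_zero {p x : ℂ} (hp0 : p ≠ 0) (hx : x ≠ 0) (N : ℕ) :
    ∏ k ∈ II N, (1 - x * p ^ k) = RR p N 0 x * (-x) ^ N / tri p N := by
  have := Q_shift hp0 hx N 0 (by simp [II])
  simpa using this

theorem PF3 {p : ℂ} {a : Fin 3 → ℂ} {b : ℂ} (H : Hyp p a b) {z : ℂ} (hz : z ≠ 0)
    (hzn : ∀ i, np p (z * a i)) :
    br p (z * b) / (br p (z * a 0) * (br p (z * a 1) * br p (z * a 2))) =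
      br p (b / a 0) / (qi p p * qi p p * (br p (a 1 / a 0) * br p (a 2 / a 0))) *
        fam p (b * a 0 / (a 1 * a 2)) (z * a 0) +
      (br p (b / a 1) / (qi p p * qi p p * (br p (a 0 / a 1) * br p (a 2 / a 1))) *
        fam p (b * a 1 / (a 0 * a 2)) (z * a 1) +
      br p (b / a 2) / (qi p p * qi p p * (br p (a 0 / a 2) * br p (a 1 / a 2))) *
        fam p (b * a 2 / (a 0 * a 1)) (z * a 2)) := by
  have hb := H.hb
  have ha0 := H.ha 0
  have ha1 := H.ha 1
  have ha2 := H.ha 2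
  have hp0 := H.hp0
  have T1 := (rsum_tendsto H hz (k := 0) (l := 1) (m := 2) (by decide) (by decide)).add
    ((rsum_tendsto H hz (k := 1) (l := 0) (m := 2) (by decide) (by decide)).add
    (rsum_tendsto H hz (k := 2) (l := 0) (m := 1) (by decide) (by decide)))
  have hbr : ∀ i, br p (z * a i) ≠ 0 := fun i => br_ne_zero H.hp H.hp0 (mul_ne_zero hz (H.ha i)) (hzn i)
  have T2 : Tendsto (fun N => RR p N 0 (z * b) / (RR p N 0 (z * a 0) * (RR p N 0 (z * a 1) * RR p N 0 (z * a 2))))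
      atTop (𝓝 (br p (z * b) / (br p (z * a 0) * (br p (z * a 1) * br p (z * a 2))))) :=
    (RR_tendsto H.hp _ 0).div ((RR_tendsto H.hp _ 0).mul ((RR_tendsto H.hp _ 0).mul (RR_tendsto H.hp _ 0)))
      (mul_ne_zero (hbr 0) (mul_ne_zero (hbr 1) (hbr 2)))
  refine tendsto_nhds_unique T2 (T1.congr fun N => ?_)
  have hK : (b / (a 0 * a 1 * a 2)) ^ N * p ^ (N * (N + 1)) ≠ 0 := by positivity
  apply mul_left_cancel₀ hK
  rw [← sum_rs H z N, ← pf (s3 N) (uu p a) (fun i _ => H.une i) (H.inj.injOn) (2 * N) (II N) _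
    (by rw [II_card, s3_card]; omega) z]
  · rw [prod_s3 (k := 0) (l := 1) (m := 2) (by decide) (by decide) (by decide), nu]
    simp only [uu, ← mul_assoc]
    rw [Q_zero hp0 (by positivity), Q_zero hp0 (by positivity), Q_zero hp0 (by positivity),
      Q_zero hp0 (by positivity)]
    have ht := tri_ne hp0 N
    have ht2 : tri p N ^ 2 = p ^ (N * (N+1)) := tri_sq p N
    rw [← ht2]
    generalize RR p N 0 (z * b) = R1
    generalize RR p N 0 (z * a 0) = R2
    generalize RR p N 0 (z * a 1) = R3
    generalize RR p N 0 (z * a 2) = R4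
    have hs : ((-1:ℂ) ^ N) * (-1) ^ N = 1 := by rw [← mul_pow]; simp
    have hs0 : ((-1:ℂ) ^ N) ≠ 0 := by simp
    have e : z ^ (2 * N) * (-(z * b)) ^ N * tri p N ^ 2 = (b / (a 0 * a 1 * a 2)) ^ N * tri p N ^ 2 *
       ((-(z * a 0)) ^ N * ((-(z * a 1)) ^ N * (-(z * a 2)) ^ N)) := by
      rw [neg_pow (z * b), neg_pow (z * a 0), neg_pow (z * a 1), neg_pow (z * a 2)]
      rw [show ∀ x y w : ℂ, (-1:ℂ) ^ N * x * ((-1) ^ N * y * ((-1) ^ N * w)) = (-1) ^ N * (x * y * w) from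
        fun x y w => by linear_combination ((-1) ^ N * (x * y * w)) * hs]
      simp only [div_pow, mul_pow]
      field_simp
      ring
    have n0 : (-(z * a 0)) ^ N ≠ 0 := pow_ne_zero _ (neg_ne_zero.2 (mul_ne_zero hz ha0))
    have n1 : (-(z * a 1)) ^ N ≠ 0 := pow_ne_zero _ (neg_ne_zero.2 (mul_ne_zero hz ha1))
    have n2 : (-(z * a 2)) ^ N ≠ 0 := pow_ne_zero _ (neg_ne_zero.2 (mul_ne_zero hz ha2))
    rw [← div_eq_iff (mul_ne_zero n0 (mul_ne_zero n1 n2))] at e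
    rw [← e]
    generalize (-(z * a 0)) ^ N = X0 at n0 ⊢
    generalize (-(z * a 1)) ^ N = X1 at n1 ⊢
    generalize (-(z * a 2)) ^ N = X2 at n2 ⊢
    generalize (-(z * b)) ^ N = X3 at ⊢
    generalize tri p N = t at ht ⊢
    field_simp
  · rintro ⟨i, n⟩ _
    have := (hzn i).neg_iff n
    simpa [uu, mul_assoc] using this

end
end OV

open Filter Topology Finset
namespace OV
noncomputable section

/-- Lambert series -/
def lam (p y : ℂ) : ℂ := ∑' n : ℕ, y * p ^ n / (1 - y * p ^ n)
def LL (p y : ℂ) : ℂ := -lam p y + lam p (p / y)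

lemma lam_summable {p : ℂ} (hp : ‖p‖ < 1) (y : ℂ) :
    Summable fun n : ℕ => ‖y * p ^ n / (1 - y * p ^ n)‖ := by
  have t0 := tendsto_pow_atTop_nhds_zero_of_norm_lt_one hp
  have h1 : Tendsto (fun n : ℕ => (1 - y * p ^ n)⁻¹) atTop (𝓝 ((1 - y * 0)⁻¹)) :=
    ((t0.const_mul y).const_sub 1).inv₀ (by simp)
  obtain ⟨C, hC0, hC⟩ := bdd_of_tendsto h1
  refine Summable.of_nonneg_of_le (fun _ => norm_nonneg _) (fun n => ?_) ((summ_geo hp y).mul_right C)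
  rw [div_eq_mul_inv, norm_mul, norm_neg]
  exact mul_le_mul_of_nonneg_left (hC n) (norm_nonneg _)

def LN (p y : ℂ) (N : ℕ) : ℂ := -(∑ n ∈ range (N+1), y * p ^ n / (1 - y * p ^ n)) +
  ∑ n ∈ range N, (p / y) * p ^ n / (1 - (p / y) * p ^ n)

lemma LN_tendsto {p : ℂ} (hp : ‖p‖ < 1) (y : ℂ) : Tendsto (LN p y) atTop (𝓝 (LL p y)) := by
  have h1 := (lam_summable hp y).of_norm.hasSum.tendsto_sum_nat
  have h2 := (lam_summable hp (p/y)).of_norm.hasSum.tendsto_sum_nat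
  exact ((h1.comp (tendsto_add_atTop_nat 1)).neg).add h2

lemma sum_LN {p y : ℂ} (hp0 : p ≠ 0) (hy : y ≠ 0) (h : ∀ n : ℕ, p / y * p ^ n ≠ 1) (N : ℕ) :
    ∑ j ∈ II N, y * p ^ j / (1 - y * p ^ j) = - N - LN p y N := by
  induction N with
  | zero => simp [II, LN]
  | succ N ih =>
    have e : II (N+1) = insert ((N:ℤ)+1) (insert (-((N:ℤ)+1)) (II N)) := by
      ext k; simp only [II, mem_insert, mem_Icc]; push_cast; omega
    have hh : 1 - p / y * p ^ N ≠ 0 := fun h0 => h N (by linear_combination -h0)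
    rw [e, sum_insert (by simp only [II, mem_insert, mem_Icc]; omega),
      sum_insert (by simp only [II, mem_Icc]; omega), ih, LN, LN, sum_range_succ _ (N+1),
      sum_range_succ _ N, sum_range_succ (fun n => p / y * p ^ n / (1 - p / y * p ^ n)) N]
    have e1 : p ^ ((N:ℤ)+1) = p ^ (N+1) := by rw [← zpow_natCast]; push_cast; rfl
    have e2 : p ^ (-((N:ℤ)+1)) = (p ^ (N+1))⁻¹ := by rw [zpow_neg, e1]
    have e3 : y * (p ^ (N+1))⁻¹ / (1 - y * (p ^ (N+1))⁻¹) = -1 - p / y * p ^ N / (1 - p / y * p ^ N) := by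
      have e4 : 1 - y * (p ^ (N+1))⁻¹ ≠ 0 := by
        intro h0; apply hh
        have hpn : p ^ (N+1) ≠ 0 := pow_ne_zero _ hp0
        field_simp at h0 ⊢
        rw [pow_succ] at h0
        linear_combination -h0
      have e5 : 1 - p / y * p ^ N = - (p ^ (N+1) / y) * (1 - y * (p ^ (N+1))⁻¹) := by
        field_simp; ring
      rw [e5]
      have hpn : p ^ (N+1) ≠ 0 := pow_ne_zero _ hp0
      generalize 1 - y * (p ^ (N+1))⁻¹ = w at *
      have e6 : w = 1 - y * (p ^ (N+1))⁻¹ := by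
        have : - (p ^ (N+1) / y) ≠ 0 := by simp [hy, hp0]
        apply mul_left_cancel₀ this
        rw [← e5]; field_simp; ring
      field_simp
      rw [e6]
      field_simp
      ring
    rw [e1, e2, e3]
    push_cast
    ring

theorem PF3deg {p : ℂ} {a : Fin 3 → ℂ} {b : ℂ} (H : Hyp p a b) {z : ℂ} (hz : z = (a 2)⁻¹)
    (hzb : np p (z * b)) :
      br p (b / a 0) / (qi p p * qi p p * (br p (a 1 / a 0) * br p (a 2 / a 0))) *
        fam p (b * a 0 / (a 1 * a 2)) (z * a 0) +
      (br p (b / a 1) / (qi p p * qi p p * (br p (a 0 / a 1) * br p (a 2 / a 1))) *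
        fam p (b * a 1 / (a 0 * a 2)) (z * a 1) +
      br p (b / a 2) / (qi p p * qi p p * (br p (a 0 / a 2) * br p (a 1 / a 2))) *
        fam p (b * a 2 / (a 0 * a 1)) (z * a 2)) =
      -(br p (b / a 2) / (qi p p * qi p p * (br p (a 0 / a 2) * br p (a 1 / a 2)))) *
        (LL p (z * b) - LL p (z * a 0) - LL p (z * a 1)) := by
  have hb := H.hb
  have ha0 := H.ha 0
  have ha1 := H.ha 1
  have ha2 := H.ha 2
  have hp0 := H.hp0
  have hz0 : z ≠ 0 := by rw [hz]; positivity
  have T1 := (rsum_tendsto H hz0 (k := 0) (l := 1) (m := 2) (by decide) (by decide)).add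
    ((rsum_tendsto H hz0 (k := 1) (l := 0) (m := 2) (by decide) (by decide)).add
    (rsum_tendsto H hz0 (k := 2) (l := 0) (m := 1) (by decide) (by decide)))
  have T2 := ((cc_tendsto (x := b / a 2) H.hp H.hp0 (div_ne_zero ha0 ha2) (div_ne_zero ha1 ha2)
    (H.hd 0 2 (by decide)) (H.hd 1 2 (by decide)) 0).neg).mul
    (((LN_tendsto H.hp (z * b)).sub (LN_tendsto H.hp (z * a 0))).sub (LN_tendsto H.hp (z * a 1)))
  refine tendsto_nhds_unique T1 (T2.congr fun N => ?_)
  have hK : (b / (a 0 * a 1 * a 2)) ^ N * p ^ (N * (N + 1)) ≠ 0 := by positivity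
  apply mul_left_cancel₀ hK
  have ho : (⟨2, 0⟩ : Σ _ : Fin 3, ℤ) ∈ s3 N := by simp [s3, II]
  have hzu : z = (uu p a ⟨2, 0⟩)⁻¹ := by simp [uu, hz]
  have key := pf_deg (s3 N) (uu p a) (fun i _ => H.une i) (H.inj.injOn) (2 * N) (II N)
    (fun j => b * p ^ j)
    (by rw [II_card, s3_card]; omega) ⟨2, 0⟩ ho z hzu
    (by intro j _; simpa [mul_assoc] using hzb.neg_iff j)
  have hone : z * uu p a ⟨2, 0⟩ = 1 := by simp [uu, hz, ha2]
  rw [sum_erase _ (by rw [hone]; simp), sum_erase _ (by rw [hone]; simp)] at key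
  rw [sum_rs H z N] at key
  rw [key, sum_s3 (k := 2) (l := 0) (m := 1) (by decide) (by decide) (by decide)]
  have h0 := coef3 H.hp0 H.ha H.hb (k := 2) (l := 0) (m := 1) (by decide) (by decide) (by decide) N 0 (by simp [II])
  have hn0 : np p (z * a 0) := by
    have := H.hd 0 2 (by decide); rwa [div_eq_inv_mul, ← hz] at this
  have hn1 : np p (z * a 1) := by
    have := H.hd 1 2 (by decide); rwa [div_eq_inv_mul, ← hz] at this
  have hz2 : z * a 2 = 1 := by rw [hz]; field_simp
  simp only [uu, ← mul_assoc] at h0 ⊢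
  rw [h0, sum_LN hp0 (by positivity) (hzb.inv hp0 (by positivity)),
    sum_LN hp0 (by positivity) (hn0.inv hp0 (by positivity)),
    sum_LN hp0 (by positivity) (hn1.inv hp0 (by positivity)), hz2,
    sum_LN hp0 one_ne_zero (by intro n; rw [div_one]; exact self_np H.hp n)]
  have hL1 : LN p 1 N = 0 := by
    rw [LN, sum_range_succ', ← sub_eq_neg_add, ← sub_sub, ← sum_sub_distrib]
    simp only [pow_zero, mul_one, sub_self, div_zero, sub_zero]
    refine sum_eq_zero fun n _ => ?_
    rw [div_one, pow_succ', one_mul]; ring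
  rw [hL1]
  simp only [zpow_zero, mul_zero, add_zero, mul_one]
  rw [show a 2 * a 0 * a 1 = a 0 * a 1 * a 2 by ring]
  push_cast
  ring

end
end OV

open Filter Topology Finset
namespace OV
noncomputable section

lemma kron_summable {p x y : ℂ} (hp : ‖p‖ < 1) (hp0 : p ≠ 0) (hy : y ≠ 0) (h1 : ‖p‖ < ‖x‖) (h2 : ‖x‖ < 1) :
    Summable fun n : ℤ => ‖x ^ n * (1 - y * p ^ n)⁻¹‖ := by
  obtain ⟨C, hC0, hC⟩ := inv_bdd hp hp0 hy
  have hx0 : 0 < ‖x‖ := (norm_nonneg _).trans_lt h1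
  refine Summable.of_nat_of_neg ?_ ?_
  · refine Summable.of_nonneg_of_le (fun _ => norm_nonneg _) (fun n => ?_)
      ((summable_geometric_of_lt_one (norm_nonneg _) h2).mul_right C)
    rw [norm_mul, zpow_natCast, norm_pow, ← zpow_natCast]
    simpa using mul_le_mul_of_nonneg_left (hC n).1 (by positivity)
  · refine Summable.of_nonneg_of_le (fun _ => norm_nonneg _) (fun n => ?_)
      ((summable_geometric_of_lt_one (r := ‖p‖ / ‖x‖) (by positivity) ((div_lt_one hx0).2 h1)).mul_right C)
    rw [norm_mul, zpow_neg, zpow_natCast, norm_inv, norm_pow]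
    refine (mul_le_mul_of_nonneg_left (hC n).2 (by positivity)).trans (le_of_eq ?_)
    rw [div_pow]; field_simp

def rk (p x : ℂ) (N : ℕ) (n : ℤ) : ℂ :=
  qp p x (N + (-n)).toNat * qp p (p / x) (N + n).toNat * (SS p N n)⁻¹

theorem kron {p x y : ℂ} (hp : ‖p‖ < 1) (hp0 : p ≠ 0) (hy : y ≠ 0) (hy' : np p y)
    (h1 : ‖p‖ < ‖x‖) (h2 : ‖x‖ < 1) :
    br p (x * y) / br p y = br p x * (qi p p * qi p p)⁻¹ * ∑' n : ℤ, x ^ n * (1 - y * p ^ n)⁻¹ := by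
  have hx0 : x ≠ 0 := norm_pos_iff.1 ((norm_nonneg _).trans_lt h1)
  have hb : ∃ C : ℝ, 0 ≤ C ∧ ∀ N n, ‖rk p x N n‖ ≤ C := by
    obtain ⟨C1, h10, h1⟩ := qp_bdd hp x
    obtain ⟨C2, h20, h2⟩ := qp_bdd hp (p/x)
    obtain ⟨C3, h30, h3⟩ := SS_inv_bdd hp
    refine ⟨C1 * C2 * C3, by positivity, fun N n => ?_⟩
    rw [rk, norm_mul, norm_mul]
    gcongr
    · exact h1 _
    · exact h2 _
    · exact h3 _ _
  have hl : ∀ n, Tendsto (fun N => rk p x N n) atTop (𝓝 (br p x * (qi p p * qi p p)⁻¹)) := by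
    intro n
    refine (((qp_tendsto hp x).comp (tendsto_toNat (-n))).mul
      ((qp_tendsto hp (p/x)).comp (tendsto_toNat n))).mul ((SS_tendsto hp n).inv₀ ?_)
    have := qi_self_ne hp
    positivity
  have T1 := tannery _ _ _ (kron_summable hp hp0 hy h1 h2) hb hl
  have T2 : Tendsto (fun N : ℕ => qp p (x * y) N * qp p (p / (x * y)) N / (qp p y (N+1) * qp p (p / y) N))
      atTop (𝓝 (br p (x * y) / br p y)) :=
    ((qp_tendsto hp _).mul (qp_tendsto hp _)).div
      (((qp_tendsto hp _).comp (tendsto_add_atTop_nat 1)).mul (qp_tendsto hp _)) (br_ne_zero hp hp0 hy hy')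
  refine tendsto_nhds_unique T2 (T1.congr fun N => ?_)
  have hK : x ^ N ≠ 0 := pow_ne_zero _ hx0
  apply mul_left_cancel₀ hK
  have key := pf (II N) (fun j : ℤ => p ^ j) (fun i _ => zpow_ne_zero _ hp0)
    (fun i _ j _ h => zpow_inj' hp hp0 h) 0 (Ico (-(N:ℤ)) N) (fun j => x * p ^ j)
    (by rw [II_card, Int.card_Ico]; omega) y (fun j _ => hy'.neg_iff j)
  have e1 : ∑ n ∈ II N, (nu 0 (Ico (-(N:ℤ)) N) (fun j => x * p ^ j) (p ^ n)⁻¹ /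
      ∏ k ∈ (II N).erase n, (1 - p ^ k / p ^ n)) * (1 - y * p ^ n)⁻¹ =
      x ^ N * ∑ n ∈ II N, x ^ n * (1 - y * p ^ n)⁻¹ * rk p x N n := by
    rw [mul_sum]
    refine sum_congr rfl fun n hn => ?_
    simp only [← zpow_sub₀ hp0]
    rw [Q_own hp0 N n hn, nu, rk]
    have hn' := hn
    rw [II, mem_Icc] at hn
    set A := (N + n).toNat with hA
    have e2 : ∏ j ∈ Ico (-(N:ℤ)) N, (1 - (p ^ n)⁻¹ * (x * p ^ j)) =
        qp p x (N + (-n)).toNat * qp p (p / x) A * (-x) ^ A / tri p A := by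
      rw [tri, ← prod_Icc_shift p x hp0 hx0]
      refine prod_nbij' (fun k => k - n) (fun k => k + n) ?_ ?_ ?_ ?_ ?_
      · intro k hk; simp only [mem_Ico] at hk ⊢; omega
      · intro k hk; simp only [mem_Ico] at hk ⊢; omega
      · intro k hk; simp
      · intro k hk; simp
      · intro k hk; rw [zpow_sub₀ hp0]; ring
    rw [e2]
    have ht := tri_ne hp0 A
    have hnA : n = (A:ℤ) - N := by omega
    have e3 : x ^ n = x ^ A / x ^ N := by
      conv_lhs => rw [hnA, zpow_sub₀ hx0, zpow_natCast, zpow_natCast]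
    rw [e3, neg_pow x]
    have hs0 : ((-1:ℂ) ^ A) ≠ 0 := by simp
    generalize SS p N n = S
    generalize (1 - y * p ^ n)⁻¹ = w
    field_simp
  rw [e1] at key
  change x ^ N * ∑ n ∈ II N, _ = _
  rw [← key, nu, pow_zero, one_mul]
  have e4 : II N = Ico (-(N:ℤ)) ((N+1:ℕ):ℤ) := by
    ext k; simp only [II, mem_Icc, mem_Ico]; push_cast; omega
  simp only [← mul_assoc]
  rw [e4, prod_Icc_shift p y hp0 hy, mul_comm y x, prod_Icc_shift p (x * y) hp0 (by positivity)]
  have ht := tri_ne hp0 N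
  rw [tri] at ht
  generalize ∏ m ∈ range N, p ^ (m+1) = t at *
  rw [neg_pow (x * y), neg_pow y, mul_pow]
  have hs0 : ((-1:ℂ) ^ N) ≠ 0 := by simp
  field_simp

/-- Gaussian binomials -/
def gb (p : ℂ) : ℕ → ℕ → ℂ
  | _, 0 => 1
  | 0, _ + 1 => 0
  | m + 1, k + 1 => gb p m (k+1) + p ^ (m - k) * gb p m k

lemma gb_lt (p : ℂ) (m k : ℕ) (h : m < k) : gb p m k = 0 := by
  induction m generalizing k with
  | zero => obtain ⟨k, rfl⟩ : ∃ j, k = j + 1 := ⟨k - 1, by omega⟩; rw [gb]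
  | succ m ih =>
    obtain ⟨k, rfl⟩ : ∃ j, k = j + 1 := ⟨k - 1, by omega⟩
    rw [gb, ih _ (by omega), ih _ (by omega)]; simp

lemma gb_prod (p : ℂ) (m k j : ℕ) (h : m = k + j) : gb p m k * (qp p p k * qp p p j) = qp p p m := by
  induction m generalizing k j with
  | zero => obtain ⟨rfl, rfl⟩ : k = 0 ∧ j = 0 := by omega
            simp [gb, qp_zero]
  | succ m ih =>
    rcases k with _ | k
    · obtain rfl : j = m + 1 := by omega
      simp [gb, qp_zero]
    · rw [gb]
      rcases j with _ | j
      · obtain rfl : m = k := by omega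
        have h1 := ih m 0 rfl
        rw [gb_lt p m (m+1) (by omega), qp_succ, Nat.sub_self, pow_zero, zero_add, one_mul]
        linear_combination (1 - p * p ^ m) * h1
      · obtain rfl : m = k + (j + 1) := by omega
        have h1 := ih k (j+1) rfl
        have h2 := ih (k+1) j (by ring)
        rw [show k + (j+1) - k = j + 1 by omega]
        rw [qp_succ p p (k + (j+1)), qp_succ p p k, qp_succ p p j] at *
        linear_combination (p ^ (j+1) * (1 - p * p ^ k)) * h1 + (1 - p * p ^ j) * h2

lemma qbinom (r x : ℂ) (m : ℕ) :
    qp (r^2) x m = ∑ k ∈ range (m+1), gb (r^2) m k * ((-x) ^ k * r ^ (k * (k-1))) := by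
  induction m with
  | zero => simp [qp_zero, gb]
  | succ m ih =>
    rw [qp_succ, ih, sum_range_succ' _ (m+1), sum_mul]
    have h1 : ∑ k ∈ range (m+1), gb (r^2) m k * ((-x) ^ k * r ^ (k * (k-1))) =
       ∑ k ∈ range (m+1), gb (r^2) m (k+1) * ((-x) ^ (k+1) * r ^ ((k+1) * k)) + 1 := by
      have := sum_range_succ' (fun k => gb (r^2) m k * ((-x) ^ k * r ^ (k * (k-1)))) (m+1)
      rw [sum_range_succ, gb_lt _ _ _ (by omega : m < m + 1)] at this
      simpa [gb] using this
    simp only [mul_sub, mul_one, sum_sub_distrib]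
    rw [h1]
    have h2 : ∀ k ∈ range (m+1), gb (r^2) (m+1) (k+1) * ((-x) ^ (k+1) * r ^ ((k+1) * (k+1-1))) =
       gb (r^2) m (k+1) * ((-x) ^ (k+1) * r ^ ((k+1) * k)) -
         gb (r^2) m k * ((-x) ^ k * r ^ (k * (k-1))) * (x * (r^2)^m) := by
      intro k hk
      rw [mem_range] at hk
      rw [gb, Nat.add_sub_cancel]
      have h3 : r ^ ((k+1) * k) = r ^ (k * (k-1)) * (r^2)^k := by
        rw [← pow_mul, ← pow_add]; congr 1
        rcases k with _ | k
        · rfl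
        · simp only [Nat.add_sub_cancel]; ring
      have h4 : (r^2)^m = (r^2)^(m-k) * (r^2)^k := by rw [← pow_add]; congr 1; omega
      rw [h3, h4]; ring
    rw [sum_congr rfl h2, sum_sub_distrib]
    simp [gb]; ring

/-- theta series -/
def th (r x : ℂ) : ℂ := ∑' n : ℤ, (-x) ^ n * r ^ (n * n - n)

lemma th_summable {r x : ℂ} (hr : ‖r‖ < 1) (hr0 : r ≠ 0) (hx : x ≠ 0) :
    Summable fun n : ℤ => ‖(-x) ^ n * r ^ (n * n - n)‖ := by
  refine (summ_theta (r := -x / r) (p := r) (by simp [hx, hr0]) hr0 hr).congr fun n => ?_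
  rw [zpow_sub₀ hr0, div_zpow]; congr 1; ring

theorem jtp {r x : ℂ} (hr : ‖r‖ < 1) (hr0 : r ≠ 0) (hx : x ≠ 0) :
    qi (r^2) (r^2) * br (r^2) x = th r x := by
  have hp := norm_sq_lt hr
  have hp0 : r ^ 2 ≠ 0 := by positivity
  have hJ := qi_self_ne hp
  have hb : ∃ C : ℝ, 0 ≤ C ∧ ∀ (N : ℕ) (n : ℤ), ‖qp (r^2) (r^2) (2 * N) * (SS (r^2) N n)⁻¹‖ ≤ C := by
    obtain ⟨C1, h10, h1⟩ := qp_bdd hp (r^2)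
    obtain ⟨C3, h30, h3⟩ := SS_inv_bdd hp
    refine ⟨C1 * C3, by positivity, fun N n => ?_⟩
    rw [norm_mul]
    exact mul_le_mul (h1 _) (h3 _ _) (norm_nonneg _) h10
  have hl : ∀ n : ℤ, Tendsto (fun N : ℕ => qp (r^2) (r^2) (2 * N) * (SS (r^2) N n)⁻¹) atTop
      (𝓝 (qi (r^2) (r^2) * (qi (r^2) (r^2) * qi (r^2) (r^2))⁻¹)) := by
    intro n
    have h2 : Tendsto (fun m : ℕ => 2 * m) atTop atTop :=
      tendsto_id.const_mul_atTop' (by norm_num)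
    exact ((qp_tendsto hp _).comp h2).mul ((SS_tendsto hp n).inv₀ (by positivity))
  have T1 := tannery _ _ _ (th_summable hr hr0 hx) hb hl
  have T2 : Tendsto (fun N : ℕ => qp (r^2) x N * qp (r^2) (r^2 / x) N) atTop (𝓝 (br (r^2) x)) :=
    (qp_tendsto hp _).mul (qp_tendsto hp _)
  have key : br (r^2) x = qi (r^2) (r^2) * (qi (r^2) (r^2) * qi (r^2) (r^2))⁻¹ * th r x := by
    refine tendsto_nhds_unique T2 (T1.congr fun N => ?_)
    have hK : (-x) ^ N / r ^ (N * (N+1)) ≠ 0 := by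
      have : -x ≠ 0 := neg_ne_zero.2 hx
      positivity
    apply mul_left_cancel₀ hK
    have e1 : qp (r^2) (x * (r^2) ^ (-(N:ℤ))) (2 * N) = ∏ k ∈ Ico (-(N:ℤ)) N, (1 - x * (r^2) ^ k) := by
      rw [qp]
      refine prod_nbij' (fun k => (k:ℤ) - N) (fun k => (k + N).toNat) ?_ ?_ ?_ ?_ ?_
      · intro k hk; simp only [mem_Ico, mem_range] at hk ⊢; omega
      · intro k hk; simp only [mem_Ico, mem_range] at hk ⊢; omega
      · intro k hk; simp
      · intro k hk; simp only [mem_Ico] at hk ⊢; omega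
      · intro k hk; rw [zpow_sub₀ hp0, zpow_neg, zpow_natCast, zpow_natCast]; ring
    have htri : ∏ m ∈ range N, (r^2) ^ (m+1) = r ^ (N * (N+1)) := by
      rw [← tri_sq r N, ← prod_pow]
      exact prod_congr rfl fun i _ => by ring
    have e2 := prod_Icc_shift (r^2) x hp0 hx N N
    rw [htri, ← e1, qbinom] at e2
    rw [show (-x) ^ N / r ^ (N * (N+1)) * (qp (r^2) x N * qp (r^2) (r^2 / x) N) =
      qp (r ^ 2) x N * qp (r ^ 2) (r ^ 2 / x) N * (-x) ^ N / r ^ (N * (N + 1)) by ring, ← e2, mul_sum]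
    refine sum_nbij' (fun k => (k + N).toNat) (fun k => (k:ℤ) - N) ?_ ?_ ?_ ?_ ?_
    · intro k hk; simp only [mem_Icc, mem_range] at hk ⊢; omega
    · intro k hk; simp only [mem_Icc, mem_range] at hk ⊢; omega
    · intro k hk; simp only [mem_Icc] at hk ⊢; omega
    · intro k hk; simp
    · intro n hn
      rw [mem_Icc] at hn
      obtain ⟨A, hA⟩ : ∃ A : ℕ, n = (A:ℤ) - N := ⟨(n + N).toNat, by omega⟩
      obtain ⟨B, hB⟩ : ∃ B : ℕ, 2 * N = A + B := ⟨2 * N - A, by omega⟩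
      have h1 := gb_prod (r^2) (2 * N) A B hB
      have h2 : SS (r^2) N n = qp (r^2) (r^2) A * qp (r^2) (r^2) B := by
        rw [SS, mul_comm]; congr 2 <;> omega
      have h3 : qp (r^2) (r^2) A ≠ 0 := qp_ne_zero (self_np hp) A
      have h4 : qp (r^2) (r^2) B ≠ 0 := qp_ne_zero (self_np hp) B
      rw [h2, ← h1, show (n + N).toNat = A by omega]
      have hx' : -x ≠ 0 := neg_ne_zero.2 hx
      have h5 : (-x) ^ n = (-x) ^ A / (-x) ^ N := by
        rw [hA, zpow_sub₀ hx', zpow_natCast, zpow_natCast]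
      have h6 : r ^ (n * n - n) / r ^ (N * (N+1)) = ((r^2) ^ (-(N:ℤ))) ^ A * r ^ (A * (A-1)) := by
        have h7 : ((r^2) ^ (-(N:ℤ))) ^ A = r ^ (-(2 * (N:ℤ) * A)) := by
          rw [← zpow_natCast, ← zpow_natCast, ← zpow_mul, ← zpow_mul]; congr 1; push_cast; ring
        have h8 : r ^ (A * (A-1)) = r ^ ((A:ℤ) * (A - 1)) := by
          rw [← zpow_natCast]; congr 1
          rcases A with _ | A
          · simp
          · push_cast; simp
        rw [h7, h8, ← zpow_natCast r (N * (N+1)), ← zpow_sub₀ hr0, ← zpow_add₀ hr0]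
        congr 1
        rw [hA]; push_cast; ring
      rw [h5, show -(x * (r^2) ^ (-(N:ℤ))) = -x * (r^2) ^ (-(N:ℤ)) by ring, mul_pow, mul_assoc ((-x) ^ A), ← h6]
      field_simp
  rw [key]; field_simp

end
end OV

open Filter Topology Finset
namespace OV
noncomputable section

lemma br_p_div {p x : ℂ} (hp0 : p ≠ 0) (_hx : x ≠ 0) : br p (p / x) = br p x := by
  rw [br, br, div_div_cancel₀ hp0, mul_comm]

lemma br_inv {p x : ℂ} (hp : ‖p‖ < 1) (hx : x ≠ 0) : br p x⁻¹ = - br p x / x := by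
  rw [br, br, qi_step hp x⁻¹, qi_step hp x, show x⁻¹ * p = p / x by ring, show p / x⁻¹ = x * p by field_simp]
  field_simp; ring

lemma br_mul_p {p x : ℂ} (hp : ‖p‖ < 1) (hp0 : p ≠ 0) (hx : x ≠ 0) : br p (p * x) = - br p x / x := by
  rw [← br_inv hp hx, ← br_p_div hp0 (inv_ne_zero hx)]; congr 1; field_simp

/-- even part theta -/
def tA (r x : ℂ) : ℂ := ∑' n : ℤ, (x^2) ^ n * (r^2) ^ (n * n - n)
def tB (r x : ℂ) : ℂ := ∑' n : ℤ, (x^2) ^ n * (r^2) ^ (n * n)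

def parE : (ℤ × ℤ) ⊕ (ℤ × ℤ) ≃ ℤ × ℤ where
  toFun := Sum.elim (fun a => (a.1 + a.2, a.1 - a.2)) (fun a => (a.1 + a.2, a.1 - a.2 + 1))
  invFun := fun b => if (b.1 + b.2) % 2 = 0 then Sum.inl ((b.1+b.2)/2, (b.1-b.2)/2)
    else Sum.inr ((b.1+b.2-1)/2, (b.1-b.2+1)/2)
  left_inv := by
    rintro (⟨a, b⟩ | ⟨a, b⟩)
    · have h : (a + b + (a - b)) % 2 = 0 := by omega
      simp only [Sum.elim_inl, h, if_true]; congr 2 <;> omega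
    · have h : ¬ (a + b + (a - b + 1)) % 2 = 0 := by omega
      simp only [Sum.elim_inr, h, if_false]; congr 2 <;> omega
  right_inv := by
    rintro ⟨a, b⟩
    dsimp only
    split_ifs with h
    · simp only [Sum.elim_inl]; ext <;> simp only <;> omega
    · simp only [Sum.elim_inr]; ext <;> simp only <;> omega

lemma th_mul {r x y : ℂ} (hr : ‖r‖ < 1) (hr0 : r ≠ 0) (hx : x ≠ 0) (hy : y ≠ 0) :
    th r (x * y) * th r (x / y) = tA r x * tB r y - (x / y) * (tB r x * tA r y) := by
  have s1 := th_summable hr hr0 (x := x * y) (by positivity)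
  have s2 := th_summable hr hr0 (x := x / y) (by positivity)
  have hr2 := norm_sq_lt hr
  have hA : ∀ z : ℂ, z ≠ 0 → Summable fun n : ℤ => ‖(z^2) ^ n * (r^2) ^ (n * n - n)‖ := by
    intro z hz
    have := th_summable (r := r^2) (x := -z^2) hr2 (by positivity) (by simpa using hz)
    rw [neg_neg] at this
    exact this
  have hB : ∀ z : ℂ, z ≠ 0 → Summable fun n : ℤ => ‖(z^2) ^ n * (r^2) ^ (n * n)‖ := by
    intro z hz
    exact summ_theta (by positivity) (by positivity) hr2
  rw [tA, tB, tB, tA, th, th, tsum_mul_tsum_of_summable_norm s1 s2,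
    tsum_mul_tsum_of_summable_norm (hA x hx) (hB y hy),
    tsum_mul_tsum_of_summable_norm (hB x hx) (hA y hy), ← tsum_mul_left, ← parE.tsum_eq]
  have t1 := summable_mul_of_summable_norm s1 s2
  have t2 := (parE.summable_iff).2 t1
  have hl := t2.comp_injective (i := (Sum.inl : ℤ × ℤ → _)) Sum.inl_injective
  have hr' := t2.comp_injective (i := (Sum.inr : ℤ × ℤ → _)) Sum.inr_injective
  rw [show (∑' c, (fun z : ℤ × ℤ => (-(x * y)) ^ z.1 * r ^ (z.1 * z.1 - z.1) * ((-(x / y)) ^ z.2 * r ^ (z.2 * z.2 - z.2))) (parE c)) = _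
    from Summable.tsum_sum hl hr', sub_eq_add_neg, ← tsum_neg]
  congr 1
  · refine tsum_congr fun z => ?_
    obtain ⟨u, v⟩ := z
    simp only [Function.comp, parE, Equiv.coe_fn_mk, Sum.elim_inl]
    have e1 : (-(x*y)) ^ (u + v) * (-(x/y)) ^ (u - v) = (x^2)^u * (y^2)^v := by
      have h1 : -(x * y) ≠ 0 := by simp [hx, hy]
      have h2 : -(x / y) ≠ 0 := by simp [hx, hy]
      rw [zpow_add₀ h1, zpow_sub₀ h2, show ∀ a b c d : ℂ, a * b * (c / d) = (a * c) * (b / d) by intros; ring,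
        ← mul_zpow, ← div_zpow]
      congr 2
      · field_simp
      · field_simp
    have e2 : r ^ ((u + v) * (u + v) - (u + v)) * r ^ ((u-v)*(u-v) - (u-v)) =
        (r^2)^(u*u-u) * (r^2)^(v*v) := by
      rw [← zpow_natCast r 2, ← zpow_mul, ← zpow_mul, ← zpow_add₀ hr0, ← zpow_add₀ hr0]; congr 1; push_cast; ring
    linear_combination (r ^ ((u + v) * (u + v) - (u + v)) * r ^ ((u-v)*(u-v) - (u-v))) * e1 + ((x^2)^u * (y^2)^v) * e2
  · refine tsum_congr fun z => ?_
    obtain ⟨u, v⟩ := z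
    simp only [Function.comp, parE, Equiv.coe_fn_mk, Sum.elim_inr]
    have e1 : (-(x*y)) ^ (u + v) * (-(x/y)) ^ (u - v + 1) = -(x/y) * ((x^2)^u * (y^2)^v) := by
      have h1 : -(x * y) ≠ 0 := by simp [hx, hy]
      have h2 : -(x / y) ≠ 0 := by simp [hx, hy]
      rw [zpow_add₀ h1, zpow_add₀ h2, zpow_sub₀ h2, zpow_one, show ∀ a b c d e : ℂ, a * b * (c / d * e) = e * ((a * c) * (b / d)) by intros; ring,
        ← mul_zpow, ← div_zpow]
      congr 3
      · field_simp
      · field_simp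
    have e2 : r ^ ((u + v) * (u + v) - (u + v)) * r ^ ((u-v+1)*(u-v+1) - (u-v+1)) =
        (r^2)^(u*u) * (r^2)^(v*v-v) := by
      rw [← zpow_natCast r 2, ← zpow_mul, ← zpow_mul, ← zpow_add₀ hr0, ← zpow_add₀ hr0]; congr 1; push_cast; ring
    linear_combination (r ^ ((u + v) * (u + v) - (u + v)) * r ^ ((u-v+1)*(u-v+1) - (u-v+1))) * e1 + (-(x/y) * ((x^2)^u * (y^2)^v)) * e2

lemma weier {r x y u v : ℂ} (hr : ‖r‖ < 1) (hr0 : r ≠ 0) (hx : x ≠ 0) (hy : y ≠ 0) (hu : u ≠ 0) (hv : v ≠ 0) :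
    y * ((th r (x * y) * th r (x / y)) * (th r (u * v) * th r (u / v))) -
    u * ((th r (x * u) * th r (x / u)) * (th r (y * v) * th r (y / v))) +
    u * ((th r (x * v) * th r (x / v)) * (th r (y * u) * th r (y / u))) = 0 := by
  rw [th_mul hr hr0 hx hy, th_mul hr hr0 hx hu, th_mul hr hr0 hx hv, th_mul hr hr0 hy hu,
    th_mul hr hr0 hy hv, th_mul hr hr0 hu hv]
  field_simp
  ring

/-- the theta constants -/
def Bq (q : ℂ) (a : ℕ) : ℂ := br (q^10) (q^a)
def J10 (q : ℂ) : ℂ := qi (q^10) (q^10)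


lemma pow_np {q : ℂ} (hq : ‖q‖ < 1) (hq0 : q ≠ 0) (m : ℕ) (a : ℤ) (h : ¬ (m:ℤ) ∣ a) : np (q^m) (q^a) := by
  intro n hn
  rw [← zpow_natCast, ← zpow_mul, ← zpow_add₀ hq0, ← zpow_zero q] at hn
  have := zpow_inj' hq hq0 hn
  exact h ⟨-n, by linarith⟩

lemma Bq_ne {q : ℂ} (hq : ‖q‖ < 1) (hq0 : q ≠ 0) (a : ℕ) (h : ¬ (10 ∣ a)) : Bq q a ≠ 0 := by
  have hp : ‖q^10‖ < 1 := by rw [norm_pow]; exact pow_lt_one₀ (norm_nonneg _) hq (by norm_num)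
  refine br_ne_zero hp (by positivity) (by positivity) ?_
  have := pow_np hq hq0 10 a (by exact_mod_cast h)
  rwa [zpow_natCast] at this

lemma J10_ne {q : ℂ} (hq : ‖q‖ < 1) : J10 q ≠ 0 := by
  have hp : ‖q^10‖ < 1 := by rw [norm_pow]; exact pow_lt_one₀ (norm_nonneg _) hq (by norm_num)
  exact qi_self_ne hp

lemma th_Bq {q : ℂ} (hq : ‖q‖ < 1) (hq0 : q ≠ 0) (x : ℂ) (hx : x ≠ 0) : th (q^5) x = J10 q * br (q^10) x := by
  have hp : ‖q^5‖ < 1 := by rw [norm_pow]; exact pow_lt_one₀ (norm_nonneg _) hq (by norm_num)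
  rw [← jtp hp (by positivity) hx, J10, ← pow_mul]

lemma br_co {q : ℂ} (hq0 : q ≠ 0) (a b : ℕ) (h : a + b = 10) : br (q^10) (q^a) = Bq q b := by
  rw [Bq, ← br_p_div (by positivity : q^10 ≠ 0) (by positivity : q^b ≠ 0), ← h, pow_add]
  congr 1; field_simp


lemma th_a {q : ℂ} (hq : ‖q‖ < 1) (hq0 : q ≠ 0) (a : ℕ) (x : ℂ) (h : x = q ^ a) : th (q^5) x = J10 q * Bq q a := by
  rw [h, th_Bq hq hq0 _ (by positivity), Bq]

lemma th_ac {q : ℂ} (hq : ‖q‖ < 1) (hq0 : q ≠ 0) (a b : ℕ) (x : ℂ) (h : x = q ^ a) (hab : a + b = 10) :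
    th (q^5) x = J10 q * Bq q b := by
  rw [h, th_Bq hq hq0 _ (by positivity), br_co hq0 a b hab]

lemma th_ai {q : ℂ} (hq : ‖q‖ < 1) (hq0 : q ≠ 0) (a : ℕ) (x : ℂ) (h : x = (q ^ a)⁻¹) :
    th (q^5) x = - (J10 q * Bq q a) / q ^ a := by
  have hp : ‖q^10‖ < 1 := by rw [norm_pow]; exact pow_lt_one₀ (norm_nonneg _) hq (by norm_num)
  rw [h, th_Bq hq hq0 _ (by positivity), br_inv hp (by positivity), Bq]; ring

lemma R4 {q : ℂ} (hq : ‖q‖ < 1) (hq0 : q ≠ 0) :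
    Bq q 1 * Bq q 4 ^ 2 * Bq q 5 = Bq q 2 * Bq q 3 ^ 2 * Bq q 4 - q * Bq q 1 * Bq q 2 ^2 * Bq q 3 := by
  have hp5 : ‖q^5‖ < 1 := by rw [norm_pow]; exact pow_lt_one₀ (norm_nonneg _) hq (by norm_num)
  have hJ := J10_ne hq
  have h := weier (r := q^5) (x := q^3) (y := q^2) (u := q^4) (v := 1) hp5 (by positivity) (by positivity)
    (by positivity) (by positivity) one_ne_zero
  rw [th_a hq hq0 5 (q^3*q^2) (by ring), th_a hq hq0 1 (q^3/q^2) (by field_simp), th_a hq hq0 4 (q^4*1) (by ring),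
    th_a hq hq0 4 (q^4/1) (by ring), th_ac hq hq0 7 3 (q^3*q^4) (by ring) rfl, th_ai hq hq0 1 (q^3/q^4) (by field_simp),
    th_a hq hq0 2 (q^2*1) (by ring), th_a hq hq0 2 (q^2/1) (by ring), th_a hq hq0 3 (q^3*1) (by ring),
    th_a hq hq0 3 (q^3/1) (by ring), th_ac hq hq0 6 4 (q^2*q^4) (by ring) rfl, th_ai hq hq0 2 (q^2/q^4) (by field_simp)] at h
  have h2 : q ^ 2 * J10 q ^ 4 ≠ 0 := by positivity
  apply mul_left_cancel₀ h2
  field_simp at h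
  linear_combination h

lemma R2 {q : ℂ} (hq : ‖q‖ < 1) (hq0 : q ≠ 0) :
    Bq q 1 * Bq q 3 * Bq q 4 ^ 2 = Bq q 2 ^ 2 * Bq q 3 * Bq q 5 - q * Bq q 1 ^ 2 * Bq q 2 * Bq q 4 := by
  have hp5 : ‖q^5‖ < 1 := by rw [norm_pow]; exact pow_lt_one₀ (norm_nonneg _) hq (by norm_num)
  have hJ := J10_ne hq
  have h := weier (r := q^5) (x := q^2) (y := q) (u := q^4) (v := 1) hp5 (by positivity) (by positivity)
    (by positivity) (by positivity) one_ne_zero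
  rw [th_a hq hq0 3 (q^2*q) (by ring), th_a hq hq0 1 (q^2/q) (by field_simp), th_a hq hq0 4 (q^4*1) (by ring),
    th_a hq hq0 4 (q^4/1) (by ring), th_ac hq hq0 6 4 (q^2*q^4) (by ring) rfl, th_ai hq hq0 2 (q^2/q^4) (by field_simp),
    th_a hq hq0 1 (q*1) (by ring), th_a hq hq0 1 (q/1) (by ring), th_a hq hq0 2 (q^2*1) (by ring),
    th_a hq hq0 2 (q^2/1) (by ring), th_a hq hq0 5 (q*q^4) (by ring), th_ai hq hq0 3 (q/q^4) (by field_simp)] at h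
  have h2 : q * J10 q ^ 4 ≠ 0 := by positivity
  apply mul_left_cancel₀ h2
  field_simp at h
  linear_combination h

lemma n5 {q : ℂ} (hq : ‖q‖ < 1) (m : ℕ) (hm : m ≠ 0) : ‖q^m‖ < 1 := by
  rw [norm_pow]; exact pow_lt_one₀ (norm_nonneg _) hq hm

lemma c1 {q : ℂ} (hq : ‖q‖ < 1) (hq0 : q ≠ 0) : br (q^5) q = Bq q 1 * Bq q 4 := by
  have h := fun x => qi_split (n5 hq 5 (by norm_num)) x
  rw [br, h, h, Bq, Bq, br, br, ← pow_mul]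
  rw [show q^5/q = q^4 by field_simp, show q^4*q^5 = q^10/q^1 by field_simp, show q*q^5 = q^10/q^4 by field_simp, pow_one]
  ring

lemma c2 {q : ℂ} (hq : ‖q‖ < 1) (hq0 : q ≠ 0) : br (q^5) (q^2) = Bq q 2 * Bq q 3 := by
  have h := fun x => qi_split (n5 hq 5 (by norm_num)) x
  rw [br, h, h, Bq, Bq, br, br, ← pow_mul]
  rw [show q^5/q^2 = q^3 by field_simp, show q^3*q^5 = q^10/q^2 by field_simp, show q^2*q^5 = q^10/q^3 by field_simp]
  ring

lemma c1n {q : ℂ} (hq : ‖q‖ < 1) (hq0 : q ≠ 0) : br (q^5) q * br (q^5) (-q) = Bq q 2 := by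
  have h := fun x => qi_neg (n5 hq 5 (by norm_num)) x
  have h1 := h q
  have h2 := h (q^5/q)
  rw [Bq, br, br, br, show q^5 / -q = -(q^5/q) by field_simp, show q^10/q^2 = (q^5/q)^2 by field_simp,
   show q^10 = (q^5)^2 by ring, ← h1, ← h2]; ring

lemma c2n {q : ℂ} (hq : ‖q‖ < 1) (hq0 : q ≠ 0) : br (q^5) (q^2) * br (q^5) (-q^2) = Bq q 4 := by
  have h := fun x => qi_neg (n5 hq 5 (by norm_num)) x
  have h1 := h (q^2)
  have h2 := h (q^5/q^2)
  rw [Bq, br, br, br, show q^5 / -q^2 = -(q^5/q^2) by field_simp, show q^10/q^4 = (q^5/q^2)^2 by field_simp,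
   show q^10 = (q^5)^2 by ring, show q^4 = (q^2)^2 by ring, ← h1, ← h2]; ring

lemma cJ {q : ℂ} (hq : ‖q‖ < 1) (hq0 : q ≠ 0) : qi (q^5) (q^5) * qi (q^5) (q^5) = J10 q ^ 2 * Bq q 5 := by
  have h := qi_split (n5 hq 5 (by norm_num)) (q^5)
  rw [h, J10, Bq, br, show q^10/q^5=q^5 by field_simp, ← pow_mul, ← pow_add]; ring

lemma cm1 {q : ℂ} (hq : ‖q‖ < 1) (hq0 : q ≠ 0) : br (q^5) (-1) = 2 / Bq q 5 := by
  have h5 := Bq_ne hq hq0 5 (by norm_num)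
  have hJ := J10_ne hq
  have hj := qi_self_ne (n5 hq 5 (by norm_num))
  have h := qi_neg (n5 hq 5 (by norm_num)) (q^5)
  rw [← pow_mul, show q ^ (5*2) = q^10 by rfl, ← J10] at h
  have h3 : qi (q^5) (-(q^5)) = J10 q / qi (q^5) (q^5) := by field_simp; linear_combination h
  rw [br, qi_step (n5 hq 5 (by norm_num)) (-1), show -1 * q^5 = -(q^5) by ring, show q^5 / -1 = -(q^5) by ring, h3]
  have := cJ hq hq0
  field_simp
  linear_combination (-2 : ℂ) * this
end
end OV

open Filter Topology Finset
namespace OV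
noncomputable section

lemma np_inv {p x : ℂ} (h : np p x) (hp0 : p ≠ 0) (hx : x ≠ 0) : np p x⁻¹ := by
  intro n hn
  apply h (-n)
  have : p ^ n ≠ 0 := zpow_ne_zero _ hp0
  rw [zpow_neg]
  field_simp at hn ⊢
  exact hn.symm

lemma HypP {p ζ : ℂ} (hp : ‖p‖ < 1) (hp0 : p ≠ 0) (hζ : ζ ≠ 0) (h1 : np p ζ) (h2 : np p (ζ^2)) :
    Hyp p ![1, ζ, ζ⁻¹] (-1) where
  hp := hp
  hp0 := hp0
  ha := by intro i; fin_cases i <;> simp [hζ]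
  hb := by simp
  hd := by
    have h1' := np_inv h1 hp0 hζ
    have h2' := np_inv h2 hp0 (by positivity)
    have e : ζ⁻¹ / ζ = (ζ^2)⁻¹ := by field_simp
    have e' : ζ / ζ⁻¹ = ζ^2 := by field_simp
    intro i j hij
    fin_cases i <;> fin_cases j <;> simp_all

lemma PPc {p ζ : ℂ} (hp : ‖p‖ < 1) (hζ : ζ ≠ 0) :
    br p (-1 / ζ) = br p (-ζ) / ζ ∧ br p (1/ζ) = - br p ζ / ζ ∧ br p (ζ⁻¹/ζ) = - br p (ζ^2) / ζ^2 := by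
  refine ⟨?_, ?_, ?_⟩
  · rw [show -1 / ζ = (-ζ)⁻¹ by field_simp, br_inv hp (by simpa using hζ)]; field_simp
  · rw [one_div, br_inv hp hζ]
  · rw [show ζ⁻¹ / ζ = (ζ^2)⁻¹ by field_simp, br_inv hp (by positivity)]

theorem PP {p ζ z : ℂ} (hp : ‖p‖ < 1) (hp0 : p ≠ 0) (hζ : ζ ≠ 0) (h1 : np p ζ) (h2 : np p (ζ^2))
    (hm : np p (-ζ)) (hz : z ≠ 0) (z0 : np p z) (z1 : np p (z * ζ)) (z2 : np p (z * ζ⁻¹)) :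
    ζ^2 * fam p (-ζ^2) (z * ζ) + fam p (-(ζ^2)⁻¹) (z * ζ⁻¹) =
      ζ * (br p (-1) * br p (ζ^2) / (br p ζ * br p (-ζ))) * fam p (-1) z +
      (qi p p * qi p p) * br p ζ * br p (ζ^2) * br p (-z) / (br p (-ζ) * br p z * br p (z * ζ) * br p (z * ζ⁻¹)) := by
  have H := PF3 (HypP hp hp0 hζ h1 h2) hz (by intro i; fin_cases i <;> simp [z0, z1, z2])
  simp only [Matrix.cons_val_zero, Matrix.cons_val_one, Matrix.cons_val] at H
  obtain ⟨c1, c2, c3⟩ := PPc hp hζ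
  have hJ := qi_self_ne hp
  have b1 := br_ne_zero hp hp0 hζ h1
  have b2 := br_ne_zero hp hp0 (by positivity) h2
  have b3 := br_ne_zero hp hp0 (by simpa using hζ) hm
  have b4 := br_ne_zero hp hp0 hz z0
  have b5 := br_ne_zero hp hp0 (by positivity) z1
  have b6 := br_ne_zero hp hp0 (by positivity) z2
  rw [c1, c2, c3, show -1 / ζ⁻¹ = -ζ by field_simp, show 1/ζ⁻¹ = ζ by field_simp, show ζ/ζ⁻¹ = ζ^2 by field_simp,
    show -1 / 1 = (-1:ℂ) by norm_num, div_one, div_one, ← one_div, c2, show -1 * 1 / (ζ * (1/ζ)) = -1 by field_simp,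
    mul_one, show -1 * ζ / (1 * (1/ζ)) = -ζ^2 by field_simp, show -1 * (1/ζ)/(1*ζ) = -(ζ^2)⁻¹ by field_simp,
    mul_neg_one, one_div] at H
  generalize fam p (-1) z = X at *
  generalize fam p (-ζ^2) (z*ζ) = Y at *
  generalize fam p (-(ζ^2)⁻¹) (z*ζ⁻¹) = W at *
  have e : qi p p * qi p p * br p ζ * br p (ζ ^ 2) * br p (-z) / (br p (-ζ) * br p z * br p (z * ζ) * br p (z * ζ⁻¹)) =
    qi p p * qi p p * br p ζ * br p (ζ ^ 2) / br p (-ζ) * (br p (-z) / (br p z * (br p (z * ζ) * br p (z * ζ⁻¹)))) := by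
    field_simp
  rw [e, H]
  field_simp
  ring

theorem PPd {p ζ : ℂ} (hp : ‖p‖ < 1) (hp0 : p ≠ 0) (hζ : ζ ≠ 0) (h1 : np p ζ) (h2 : np p (ζ^2))
    (hm : np p (-ζ)) :
    ζ^2 * fam p (-ζ^2) (ζ^2) + fam p (-(ζ^2)⁻¹) 1 =
      ζ * (br p (-1) * br p (ζ^2) / (br p ζ * br p (-ζ))) * fam p (-1) ζ +
      (LL p ζ + LL p (ζ^2) - LL p (-ζ)) := by
  have H := PF3deg (HypP hp hp0 hζ h1 h2) (z := ζ) (by simp) (by simpa using hm)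
  simp only [Matrix.cons_val_zero, Matrix.cons_val_one, Matrix.cons_val] at H
  obtain ⟨c1, c2, c3⟩ := PPc hp hζ
  have hJ := qi_self_ne hp
  have b1 := br_ne_zero hp hp0 hζ h1
  have b2 := br_ne_zero hp hp0 (by positivity) h2
  have b3 := br_ne_zero hp hp0 (by simpa using hζ) hm
  rw [c1, c2, c3, show -1 / ζ⁻¹ = -ζ by field_simp, show 1/ζ⁻¹ = ζ by field_simp, show ζ/ζ⁻¹ = ζ^2 by field_simp,
    show -1 / 1 = (-1:ℂ) by norm_num, div_one, div_one, ← one_div, c2, show -1 * 1 / (ζ * (1/ζ)) = -1 by field_simp,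
    mul_one, show -1 * ζ / (1 * (1/ζ)) = -ζ^2 by field_simp, show -1 * (1/ζ)/(1*ζ) = -(ζ^2)⁻¹ by field_simp,
    mul_neg_one, show ζ * (1/ζ) = 1 by field_simp, ← pow_two ζ] at H
  generalize fam p (-1) ζ = X at *
  generalize fam p (-ζ^2) (ζ^2) = Y at *
  generalize fam p (-(ζ^2)⁻¹) 1 = W at *
  have e : (LL p ζ + LL p (ζ^2) - LL p (-ζ)) = qi p p * qi p p * br p ζ * br p (ζ ^ 2) / br p (-ζ) *
     (-(br p (-ζ) / (qi p p * qi p p * (br p ζ * br p (ζ ^ 2)))) * (LL p (-ζ) - LL p ζ - LL p (ζ ^ 2))) := by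
    field_simp; ring
  rw [e, ← H]
  field_simp
  ring

lemma neg_np {q : ℂ} (hq : ‖q‖ < 1) (hq0 : q ≠ 0) (m : ℕ) (a : ℤ) (h : ¬ (m:ℤ) ∣ a) : np (q^m) (-q^a) := by
  intro n hn
  rw [← zpow_natCast, ← zpow_mul, neg_mul, ← zpow_add₀ hq0] at hn
  have h2 : q ^ (2 * (a + m * n)) = q ^ (0:ℤ) := by
    rw [two_mul, zpow_add₀ hq0, zpow_zero]
    linear_combination (-q ^ (a + m * n) + 1) * hn
  have := zpow_inj' hq hq0 h2
  exact h ⟨-n, by linarith⟩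

lemma np_of {q : ℂ} (hq : ‖q‖ < 1) (hq0 : q ≠ 0) (m : ℕ) (a : ℤ) (x : ℂ) (hx : x = q ^ a) (h : ¬ (m:ℤ) ∣ a) : np (q^m) x :=
  hx ▸ pow_np hq hq0 m a h
lemma nnp_of {q : ℂ} (hq : ‖q‖ < 1) (hq0 : q ≠ 0) (m : ℕ) (a : ℤ) (x : ℂ) (hx : x = -q ^ a) (h : ¬ (m:ℤ) ∣ a) : np (q^m) x :=
  hx ▸ neg_np hq hq0 m a h

lemma conv1 {q : ℂ} (hq : ‖q‖ < 1) (hq0 : q ≠ 0) :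
    br (q^5) (-1) * br (q^5) (q^2) / (br (q^5) q * br (q^5) (-q)) = 2 * Bq q 3 / Bq q 5 := by
  have h2 := Bq_ne hq hq0 2 (by norm_num)
  have h5 := Bq_ne hq hq0 5 (by norm_num)
  rw [c1n hq hq0, cm1 hq hq0, c2 hq hq0]; field_simp

lemma br4 {q : ℂ} (hq0 : q ≠ 0) : br (q^5) (q^4) = br (q^5) q := by
  rw [← br_p_div (by positivity : q^5 ≠ 0) hq0]; congr 1; field_simp
lemma br3 {q : ℂ} (hq0 : q ≠ 0) : br (q^5) (q^3) = br (q^5) (q^2) := by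
  rw [← br_p_div (by positivity : q^5 ≠ 0) (by positivity : q^2 ≠ 0)]; congr 1; field_simp

lemma conv2 {q : ℂ} (hq : ‖q‖ < 1) (hq0 : q ≠ 0) :
    br (q^5) (-1) * br (q^5) ((q^2)^2) / (br (q^5) (q^2) * br (q^5) (-q^2)) = 2 * Bq q 1 / Bq q 5 := by
  have h4 := Bq_ne hq hq0 4 (by norm_num)
  have h5 := Bq_ne hq hq0 5 (by norm_num)
  rw [c2n hq hq0, cm1 hq hq0, ← pow_mul, br4 hq0, c1 hq hq0]; field_simp

def Uq (q : ℂ) : ℂ := q^2 * fam (q^5) (-q^2) (q^3) + fam (q^5) (-(q^2)⁻¹) q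
def Vq (q : ℂ) : ℂ := q^4 * fam (q^5) (-q^4) (q^3) + fam (q^5) (-(q^4)⁻¹) q⁻¹
def X1 (q : ℂ) : ℂ := q^4 * fam (q^5) (-q^4) (q^4) + fam (q^5) (-(q^4)⁻¹) 1
def X2 (q : ℂ) : ℂ := q^2 * fam (q^5) (-q^2) (q^2) + fam (q^5) (-(q^2)⁻¹) 1

lemma U_eq {q : ℂ} (hq : ‖q‖ < 1) (hq0 : q ≠ 0) :
    Uq q = 2 * q * (Bq q 3 / Bq q 5) * fam (q^5) (-1) (q^2) +
      J10 q ^ 2 * (Bq q 4 / Bq q 2 ^ 2 - q * Bq q 1 / (Bq q 2 * Bq q 3)) := by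
  have hJ := J10_ne hq
  have h1 := Bq_ne hq hq0 1 (by norm_num)
  have h2 := Bq_ne hq hq0 2 (by norm_num)
  have h3 := Bq_ne hq hq0 3 (by norm_num)
  have h4 := Bq_ne hq hq0 4 (by norm_num)
  have h5 := Bq_ne hq hq0 5 (by norm_num)
  have H := PP (p := q^5) (ζ := q) (z := q^2) (n5 hq 5 (by norm_num)) (by positivity) hq0
    (np_of hq hq0 5 1 _ (by simp) (by norm_num)) (np_of hq hq0 5 2 _ (by norm_cast) (by norm_num))
    (nnp_of hq hq0 5 1 _ (by simp) (by norm_num)) (by positivity)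
    (np_of hq hq0 5 2 _ (by norm_cast) (by norm_num))
    (np_of hq hq0 5 3 _ (by rw [show (3:ℤ) = (3:ℕ) by rfl, zpow_natCast]; ring) (by norm_num))
    (np_of hq hq0 5 1 _ (by field_simp) (by norm_num))
  rw [show q^2*q = q^3 by ring, show q^2*q⁻¹ = q by field_simp, ← Uq, conv1 hq hq0] at H
  rw [H, cJ hq hq0, br3 hq0]
  have e1 : br (q^5) (-q) = Bq q 2 / (Bq q 1 * Bq q 4) := by
    rw [← c1n hq hq0, ← c1 hq hq0]; have := c1 hq hq0 ▸ mul_ne_zero h1 h4; field_simp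
  have e2 : br (q^5) (-q^2) = Bq q 4 / (Bq q 2 * Bq q 3) := by
    rw [← c2n hq hq0, ← c2 hq hq0]; have := c2 hq hq0 ▸ mul_ne_zero h2 h3; field_simp
  rw [e1, e2, c1 hq hq0, c2 hq hq0]
  have r4 := R4 hq hq0
  have e3 : Bq q 4 / Bq q 2 ^ 2 - q * Bq q 1 / (Bq q 2 * Bq q 3) = Bq q 1 * Bq q 4 ^ 2 * Bq q 5 / (Bq q 2 ^3 * Bq q 3 ^ 2) := by
    rw [r4]; field_simp
  rw [e3]
  field_simp

lemma V_eq {q : ℂ} (hq : ‖q‖ < 1) (hq0 : q ≠ 0) :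
    Vq q = -q * (-2 * q * (Bq q 1 / Bq q 5) * fam (q^5) (-1) q +
      J10 q ^ 2 * (Bq q 5 / (Bq q 2 * Bq q 3) + 4 * q * Bq q 1 / (Bq q 2 * Bq q 5)
        - 2 * q * Bq q 1 ^ 2 * Bq q 4 / (Bq q 2 ^ 2 * Bq q 3 ^ 2))) := by
  have hJ := J10_ne hq
  have h1 := Bq_ne hq hq0 1 (by norm_num)
  have h2 := Bq_ne hq hq0 2 (by norm_num)
  have h3 := Bq_ne hq hq0 3 (by norm_num)
  have h4 := Bq_ne hq hq0 4 (by norm_num)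
  have h5 := Bq_ne hq hq0 5 (by norm_num)
  have H := PP (p := q^5) (ζ := q^2) (z := q) (n5 hq 5 (by norm_num)) (by positivity) (by positivity)
    (np_of hq hq0 5 2 _ (by norm_cast) (by norm_num)) (np_of hq hq0 5 4 _ (by rw [show (4:ℤ) = (4:ℕ) by rfl, zpow_natCast]; ring) (by norm_num))
    (nnp_of hq hq0 5 2 _ (by norm_cast) (by norm_num)) (by positivity)
    (np_of hq hq0 5 1 _ (by simp) (by norm_num))
    (np_of hq hq0 5 3 _ (by rw [show (3:ℤ) = (3:ℕ) by rfl, zpow_natCast]; ring) (by norm_num))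
    (np_of hq hq0 5 (-1) _ (by field_simp) (by norm_num))
  rw [show q*q^2 = q^3 by ring, show q*(q^2)⁻¹ = q⁻¹ by field_simp, conv2 hq hq0, ← pow_mul, show 2*2=4 by rfl, ← Vq, ] at H
  rw [H, cJ hq hq0, br3 hq0, br4 hq0, br_inv (n5 hq 5 (by norm_num)) hq0]
  have e1 : br (q^5) (-q) = Bq q 2 / (Bq q 1 * Bq q 4) := by
    rw [← c1n hq hq0, ← c1 hq hq0]; have := c1 hq hq0 ▸ mul_ne_zero h1 h4; field_simp
  have e2 : br (q^5) (-q^2) = Bq q 4 / (Bq q 2 * Bq q 3) := by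
    rw [← c2n hq hq0, ← c2 hq hq0]; have := c2 hq hq0 ▸ mul_ne_zero h2 h3; field_simp
  rw [e1, e2, c1 hq hq0, c2 hq hq0]
  have r4 := R4 hq hq0
  have r2 := R2 hq hq0
  have T : Bq q 2 ^4 * Bq q 3 ^ 3 * Bq q 5 ^ 2 = Bq q 1 ^2 * Bq q 4 ^3 * (Bq q 2 * Bq q 3 * Bq q 5 ^2
      + 4 * q * Bq q 1 * Bq q 2 * Bq q 3^2 - 2 * q * Bq q 1 ^2 * Bq q 4 * Bq q 5) := by
    apply mul_left_cancel₀ (mul_ne_zero h1 h4)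
    generalize Bq q 1 = b1 at *
    generalize Bq q 2 = b2 at *
    generalize Bq q 3 = b3 at *
    generalize Bq q 4 = b4 at *
    generalize Bq q 5 = b5 at *
    linear_combination (-(b1*b4*((b2^2*b3*b5 + b1*b4*(b3*b4+q*b1*b2))*b3)) + (b1^2*b4^2*b3*(b3*b4-q*b1*b2))) * r2
      - b1^2*b4^2*(b2*b3*b5-2*q*b1^2*b4) * r4
  have e3 : (Bq q 5 / (Bq q 2 * Bq q 3) + 4 * q * Bq q 1 / (Bq q 2 * Bq q 5)
        - 2 * q * Bq q 1 ^ 2 * Bq q 4 / (Bq q 2 ^ 2 * Bq q 3 ^ 2)) = Bq q 2 ^2 * Bq q 3 * Bq q 5 / (Bq q 1 ^2 * Bq q 4 ^3) := by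
    field_simp; linear_combination -T
  rw [e3]
  field_simp
  ring

lemma X1_eq {q : ℂ} (hq : ‖q‖ < 1) (hq0 : q ≠ 0) :
    X1 q = 2 * q^2 * (Bq q 1 / Bq q 5) * fam (q^5) (-1) (q^2) + (LL (q^5) (q^2) + LL (q^5) (q^4) - LL (q^5) (-q^2)) := by
  have H := PPd (p := q^5) (ζ := q^2) (n5 hq 5 (by norm_num)) (by positivity) (by positivity)
    (np_of hq hq0 5 2 _ (by norm_cast) (by norm_num)) (np_of hq hq0 5 4 _ (by rw [show (4:ℤ) = (4:ℕ) by rfl, zpow_natCast]; ring) (by norm_num))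
    (nnp_of hq hq0 5 2 _ (by norm_cast) (by norm_num))
  rw [conv2 hq hq0, ← pow_mul, show 2*2=4 by rfl, ← X1] at H
  rw [H]; ring

lemma X2_eq {q : ℂ} (hq : ‖q‖ < 1) (hq0 : q ≠ 0) :
    X2 q = 2 * q * (Bq q 3 / Bq q 5) * fam (q^5) (-1) q + (LL (q^5) q + LL (q^5) (q^2) - LL (q^5) (-q)) := by
  have H := PPd (p := q^5) (ζ := q) (n5 hq 5 (by norm_num)) (by positivity) hq0
    (np_of hq hq0 5 1 _ (by simp) (by norm_num)) (np_of hq hq0 5 2 _ (by norm_cast) (by norm_num))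
    (nnp_of hq hq0 5 1 _ (by simp) (by norm_num))
  rw [conv1 hq hq0, ← X2] at H
  rw [H]; ring

end
end OV

open Filter Topology Finset
namespace OV
noncomputable section

/-- Lambert swap -/
lemma lam_swap {p y : ℂ} (hp : ‖p‖ < 1) (hy : ‖y‖ < 1) :
    HasSum (fun k : ℕ => y^(k+1) / (1 - p^(k+1))) (lam p y) := by
  have hs : Summable fun z : ℕ × ℕ => (y * p ^ z.1) ^ (z.2 + 1) := by
    have g1 := summable_geometric_of_lt_one (norm_nonneg _) hp
    have g2 : Summable fun k : ℕ => ‖y‖^(k+1) :=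
      (summable_nat_add_iff 1).2 (summable_geometric_of_lt_one (norm_nonneg _) hy)
    have h1 : Summable fun z : ℕ × ℕ => ‖p‖^z.1 * ‖y‖^(z.2+1) :=
      g1.mul_of_nonneg g2 (fun n => pow_nonneg (norm_nonneg _) _) (fun n => pow_nonneg (norm_nonneg _) _)
    refine Summable.of_norm_bounded h1 fun z => ?_
    rw [norm_pow, norm_mul, norm_pow, mul_pow, mul_comm, ← pow_mul]
    refine mul_le_mul_of_nonneg_right (pow_le_pow_of_le_one (norm_nonneg _) hp.le ?_) (by positivity)
    nlinarith [Nat.zero_le (z.1 * z.2)]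
  have e1 : lam p y = ∑' z : ℕ × ℕ, (y * p ^ z.1) ^ (z.2 + 1) := by
    rw [hs.tsum_prod, lam]
    refine tsum_congr fun n => ?_
    have hlt : ‖y * p ^ n‖ < 1 := by
      rw [norm_mul, norm_pow]
      exact mul_lt_one_of_nonneg_of_lt_one_left (norm_nonneg _) hy (pow_le_one₀ (norm_nonneg _) hp.le)
    simp only [pow_succ' (y * p ^ n)]
    rw [tsum_mul_left, tsum_geometric_of_norm_lt_one hlt]; rfl
  rw [e1]
  refine (((Equiv.prodComm ℕ ℕ).hasSum_iff).2 hs.hasSum).prod_fiberwise fun k => ?_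
  have hlt : ‖p^(k+1)‖ < 1 := n5 hp _ (by omega)
  have := (hasSum_geometric_of_norm_lt_one hlt).mul_left (y^(k+1))
  rw [← div_eq_mul_inv] at this
  refine this.congr_fun fun n => ?_
  simp only [Function.comp, Equiv.prodComm_apply, Prod.swap]
  ring

lemma lam_q {q : ℂ} (hq : ‖q‖ < 1) (c : ℕ) (hc : c ≠ 0) :
    HasSum (fun k : ℕ => q^(c*(k+1)) / (1 - q^(5*(k+1)))) (lam (q^5) (q^c)) := by
  simpa only [← pow_mul] using lam_swap (n5 hq 5 (by norm_num)) (n5 hq c hc)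

lemma lam_even {q : ℂ} (hq : ‖q‖ < 1) (c : ℕ) (hc : c ≠ 0) :
    HasSum (fun k : ℕ => 2 * (q^(2*c*(k+1)) / (1 - q^(10*(k+1))))) (lam (q^5) (q^c) + lam (q^5) (-q^c)) := by
  have h1 := lam_q hq c hc
  have h2 := lam_swap (y := -q^c) (n5 hq 5 (by norm_num)) (by rw [norm_neg]; exact n5 hq c hc)
  have h3 := h1.add h2
  have e : Function.Injective (fun k : ℕ => 2 * k + 1) := fun a b h => by simpa using h
  rw [← e.hasSum_iff] at h3
  · convert h3 using 2 with k
    simp only [Function.comp]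
    rw [neg_pow, show 2 * k + 1 + 1 = 2 * (k+1) by ring, pow_mul (-1:ℂ) 2]
    simp only [← pow_mul]
    rw [show c * (2 * (k+1)) = 2 * c * (k+1) by ring, show 5 * (2 * (k+1)) = 10 * (k+1) by ring]
    norm_num; ring
  · intro x hx
    have hx' : Even x := by
      by_contra h
      obtain ⟨m, hm⟩ := Nat.not_even_iff_odd.1 h
      exact hx ⟨m, hm.symm⟩
    obtain ⟨m, rfl⟩ := hx'
    rw [neg_pow, ← two_mul, pow_succ (-1:ℂ), pow_mul (-1:ℂ)]
    simp only [← pow_mul]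
    norm_num; ring

def K1 (q : ℂ) : ℂ := ∑' n : ℤ, (q^2)^n * (1 - (-1) * (q^5)^n)⁻¹
def K2 (q : ℂ) : ℂ := ∑' n : ℤ, (q^5)^n * (1 - q^4 * (q^10)^n)⁻¹

lemma m1_np {q : ℂ} (hq : ‖q‖ < 1) (hq0 : q ≠ 0) : np (q^5) (-1) := by
  intro n hn
  rw [← zpow_natCast, ← zpow_mul] at hn
  have h2 : q ^ (2 * ((5:ℕ) * n)) = q ^ (0:ℤ) := by
    rw [two_mul, zpow_add₀ hq0, zpow_zero]
    linear_combination (-q ^ ((5:ℕ) * n) + 1) * hn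
  have := zpow_inj' hq hq0 h2
  obtain rfl : n = 0 := by push_cast at this; omega
  norm_num at hn

lemma K1_eq {q : ℂ} (hq : ‖q‖ < 1) (hq0 : q ≠ 0) :
    2 * K1 q = J10 q ^ 2 * (Bq q 5 ^ 2 * Bq q 4 / (Bq q 2 ^2 * Bq q 3 ^ 2)) := by
  have h2 := Bq_ne hq hq0 2 (by norm_num)
  have h3 := Bq_ne hq hq0 3 (by norm_num)
  have h4 := Bq_ne hq hq0 4 (by norm_num)
  have h5 := Bq_ne hq hq0 5 (by norm_num)
  have hn : 0 < ‖q‖ := norm_pos_iff.2 hq0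
  have h := kron (p := q^5) (x := q^2) (y := -1) (n5 hq 5 (by norm_num)) (by positivity) (by simp)
    (m1_np hq hq0)
    (by rw [norm_pow, norm_pow]; exact pow_lt_pow_right_of_lt_one₀ hn hq (by norm_num)) (n5 hq 2 (by norm_num))
  have hJ := J10_ne hq
  have e2 : br (q^5) (-q^2) = Bq q 4 / (Bq q 2 * Bq q 3) := by
    rw [← c2n hq hq0, ← c2 hq hq0]; have := c2 hq hq0 ▸ mul_ne_zero h2 h3; field_simp
  rw [← K1, mul_neg_one, e2, cm1 hq hq0, c2 hq hq0, cJ hq hq0] at h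
  field_simp at h ⊢
  linear_combination -h

lemma K2_eq {q : ℂ} (hq : ‖q‖ < 1) (hq0 : q ≠ 0) :
    K2 q = J10 q ^ 2 * (Bq q 1 / (Bq q 4 * Bq q 5)) := by
  have h4 := Bq_ne hq hq0 4 (by norm_num)
  have h5 := Bq_ne hq hq0 5 (by norm_num)
  have hn : 0 < ‖q‖ := norm_pos_iff.2 hq0
  have h := kron (p := q^10) (x := q^5) (y := q^4) (n5 hq 10 (by norm_num)) (by positivity) (by positivity)
    (np_of hq hq0 10 4 _ (by norm_cast) (by norm_num))
    (by rw [norm_pow, norm_pow]; exact pow_lt_pow_right_of_lt_one₀ hn hq (by norm_num)) (n5 hq 5 (by norm_num))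
  have hJ := J10_ne hq
  rw [← K2, ← pow_add, br_co hq0 _ 1 rfl, ← J10, ← Bq, ← Bq] at h
  field_simp at h ⊢
  linear_combination -h

lemma one_sub_ne {q : ℂ} (hq : ‖q‖ < 1) (m : ℕ) (hm : m ≠ 0) : 1 - q^m ≠ 0 ∧ 1 + q^m ≠ 0 := by
  have h := n5 hq m hm
  constructor
  · intro h0
    rw [← sub_eq_zero.1 h0] at h; simp at h
  · intro h0
    rw [show q^m = -1 by linear_combination h0] at h; simp at h

lemma int_split1 (f : ℤ → ℂ) (hs : Summable f) :
    ∑' n, f n = ∑' k : ℕ, f k + ∑' k : ℕ, f (-((k:ℤ)+1)) :=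
  tsum_of_nat_of_neg_add_one (hs.comp_injective Nat.cast_injective)
    (hs.comp_injective (i := fun n : ℕ => -((n:ℤ)+1)) (fun a b h => by simpa using h))

lemma int_split2 (f : ℤ → ℂ) (hs : Summable f) :
    ∑' n, f n = f 0 + ∑' k : ℕ, (f ((k+1 : ℕ):ℤ) + f (-((k+1:ℕ):ℤ))) := by
  have s1 : Summable fun k : ℕ => f k := hs.comp_injective Nat.cast_injective
  have s2 : Summable fun k : ℕ => f (-((k:ℤ)+1)) :=
    (hs.comp_injective (i := fun n : ℕ => -((n:ℤ)+1)) (fun a b h => by simpa using h))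
  have s1' := (summable_nat_add_iff 1).2 s1
  rw [int_split1 f hs, s1.tsum_eq_zero_add, add_assoc, ← s1'.tsum_add s2]
  simp

lemma K1_lam {q : ℂ} (hq : ‖q‖ < 1) (hq0 : q ≠ 0) :
    K1 q = 1/2 + (lam (q^5) (q^3) - lam (q^5) (q^2) + (lam (q^5) q + lam (q^5) (-q))
      - (lam (q^5) (q^4) + lam (q^5) (-q^4))) := by
  have hn : 0 < ‖q‖ := norm_pos_iff.2 hq0
  have hs := (kron_summable (p := q^5) (x := q^2) (y := -1) (n5 hq 5 (by norm_num)) (by positivity) (by simp)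
    (by rw [norm_pow, norm_pow]; exact pow_lt_pow_right_of_lt_one₀ hn hq (by norm_num)) (n5 hq 2 (by norm_num))).of_norm
  have h1 := lam_even hq 1 one_ne_zero
  rw [pow_one] at h1
  have h4 := lam_even hq 4 (by norm_num)
  have hS := (((lam_q hq 3 (by norm_num)).sub (lam_q hq 2 (by norm_num))).add h1).sub h4
  rw [K1, int_split2 _ hs, ← hS.tsum_eq]
  congr 1
  · norm_num
  · refine tsum_congr fun k => ?_
    rw [zpow_neg, zpow_neg, zpow_natCast, zpow_natCast]
    simp only [← pow_mul]
    obtain ⟨a1, a2⟩ := one_sub_ne hq (k+1) (by omega)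
    obtain ⟨b1, b2⟩ := one_sub_ne hq (5*(k+1)) (by omega)
    obtain ⟨d1, d2⟩ := one_sub_ne hq (10*(k+1)) (by omega)
    have hQ : q^(k+1) ≠ 0 := by positivity
    have f : ∀ c, q^(c*(k+1)) = (q^(k+1))^c := fun c => by rw [← pow_mul, mul_comm]
    simp only [f] at *
    generalize q^(k+1) = Q at *
    have b3 : Q^5 + 1 ≠ 0 := by rwa [add_comm]
    have d3 : 1 - Q^10 = (1 - Q^5) * (1 + Q^5) := by ring
    rw [d3]
    have b4 : 1 - -1 * (Q^5)⁻¹ = (1 + Q^5) / Q^5 := by field_simp; ring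
    rw [b4, show 1 - -1 * Q^5 = 1 + Q^5 by ring, inv_div]
    field_simp
    ring

lemma K2_lam {q : ℂ} (hq : ‖q‖ < 1) (hq0 : q ≠ 0) :
    2 * q^2 * K2 q = lam (q^5) (q^2) - lam (q^5) (-q^2) - lam (q^5) (q^3) + lam (q^5) (-q^3) := by
  have hn : 0 < ‖q‖ := norm_pos_iff.2 hq0
  have hs := (kron_summable (p := q^10) (x := q^5) (y := q^4) (n5 hq 10 (by norm_num)) (by positivity) (by positivity)
    (by rw [norm_pow, norm_pow]; exact pow_lt_pow_right_of_lt_one₀ hn hq (by norm_num)) (n5 hq 5 (by norm_num))).of_norm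
  have l := fun y => (lam_summable (n5 hq 5 (by norm_num)) y).of_norm
  rw [K2, int_split1 _ hs, mul_add, ← tsum_mul_left, ← tsum_mul_left]
  simp only [lam]
  rw [← (l (q^2)).tsum_sub (l (-q^2)), sub_add, ← (l (q^3)).tsum_sub (l (-q^3)), sub_eq_add_neg, ← tsum_neg]
  congr 1
  · refine tsum_congr fun k => ?_
    obtain ⟨a1, a2⟩ := one_sub_ne hq (5*k+2) (by omega)
    obtain ⟨d1, d2⟩ := one_sub_ne hq (10*k+4) (by omega)
    rw [zpow_natCast, zpow_natCast]
    simp only [← pow_mul, ← pow_add, neg_mul]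
    rw [show 4 + 10 * k = 10*k+4 by ring, show 2 + 5 * k = 5*k+2 by ring]
    have d3 : 1 - q^(10*k+4) = (1 - q^(5*k+2)) * (1 + q^(5*k+2)) := by ring
    rw [d3, show 2 * q^2 * (q^(5*k) * ((1 - q^(5*k+2)) * (1 + q^(5*k+2)))⁻¹) = 2 * q^(5*k+2) * ((1 - q^(5*k+2)) * (1 + q^(5*k+2)))⁻¹ by ring]
    generalize q^(5*k+2) = Q at *
    rw [sub_neg_eq_add]
    field_simp
    ring
  · refine tsum_congr fun k => ?_
    obtain ⟨a1, a2⟩ := one_sub_ne hq (5*k+3) (by omega)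
    obtain ⟨d1, d2⟩ := one_sub_ne hq (10*k+6) (by omega)
    have e1 : ((k+1:ℕ):ℤ) = (k:ℤ) + 1 := by push_cast; rfl
    rw [← e1, zpow_neg, zpow_neg, zpow_natCast, zpow_natCast]
    simp only [← pow_mul, ← pow_add, neg_mul]
    rw [show 3 + 5 * k = 5*k+3 by ring]
    have d3 : 1 - q^4 * (q^(10*(k+1)))⁻¹ = -((1 - q^(5*k+3)) * (1 + q^(5*k+3)) / (q^(5*k+3))^2) := by
      field_simp; ring
    have d4 : 2 * q^2 * (q^(5*(k+1)))⁻¹ = 2 / q^(5*k+3) := by field_simp; ring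
    have hQ : q^(5*k+3) ≠ 0 := by positivity
    rw [← mul_assoc, d4, d3]
    generalize q^(5*k+3) = Q at *
    rw [sub_neg_eq_add]
    field_simp
    ring

/-- the identity E, combined with X1, X2 : the zeroth component -/
lemma G0_eq {q : ℂ} (hq : ‖q‖ < 1) (hq0 : q ≠ 0) :
    1 + 4 * X1 q + 2 * X2 q = 8 * q^2 * (Bq q 1 / Bq q 5) * fam (q^5) (-1) (q^2)
      + 4 * q * (Bq q 3 / Bq q 5) * fam (q^5) (-1) q
      + J10 q ^ 2 * (Bq q 5 ^ 2 * Bq q 4 / (Bq q 2 ^2 * Bq q 3 ^ 2) - 8 * q * Bq q 3 / (Bq q 2 * Bq q 5)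
        + 8 * q * Bq q 1 * Bq q 4 / (Bq q 2 ^2 * Bq q 3)) := by
  have h1 := Bq_ne hq hq0 1 (by norm_num)
  have h2 := Bq_ne hq hq0 2 (by norm_num)
  have h3 := Bq_ne hq hq0 3 (by norm_num)
  have h4 := Bq_ne hq hq0 4 (by norm_num)
  have h5 := Bq_ne hq hq0 5 (by norm_num)
  have r4 := R4 hq hq0
  have e1 : Bq q 1 * Bq q 4 / (Bq q 2 ^2 * Bq q 3) = Bq q 3 / (Bq q 2 * Bq q 5) - q * (Bq q 1 / (Bq q 4 * Bq q 5)) := by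
    field_simp
    linear_combination r4
  have k1 := K1_eq hq hq0
  have k2 := K2_eq hq hq0
  rw [K1_lam hq hq0] at k1
  have k3 := K2_lam hq hq0
  rw [k2] at k3
  rw [X1_eq hq hq0, X2_eq hq hq0]
  simp only [LL]
  rw [show q^5/q = q^4 by field_simp, show q^5/q^2 = q^3 by field_simp, show q^5/q^4 = q by field_simp,
    show q^5 / -q = -q^4 by field_simp, show q^5 / -q^2 = -q^3 by field_simp]
  linear_combination k1 + 4 * k3 - 8 * q * J10 q ^ 2 * e1

end
end OV

open Filter Topology Finset
namespace OV
noncomputable section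

lemma shift_tsum (f : ℤ → ℂ) (a : ℤ) : ∑' j, f (j + a) = ∑' j, f j :=
  (Equiv.addRight a).tsum_eq f

lemma mod5 (f : ℤ → ℂ) (hs : Summable f) :
    ∑' n, f n = ∑' j : ℤ, f (5*j) + ∑' j : ℤ, f (5*j+1) + ∑' j : ℤ, f (5*j+2) + ∑' j : ℤ, f (5*j-2)
      + ∑' j : ℤ, f (5*j-1) := by
  have e := (Int.divModEquiv 5).symm
  have h1 : ∑' n, f n = ∑' z : Fin 5 × ℤ, f (z.2 * 5 + (z.1:ℕ)) := by
    rw [← (Int.divModEquiv 5).symm.tsum_eq f, ← (Equiv.prodComm (Fin 5) ℤ).tsum_eq]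
    rfl
  have h2 : Summable fun z : Fin 5 × ℤ => f (z.2 * 5 + (z.1:ℕ)) := by
    have := ((Equiv.prodComm (Fin 5) ℤ).trans (Int.divModEquiv 5).symm).summable_iff.2 hs
    exact this
  rw [h1, h2.tsum_prod, tsum_fintype, Fin.sum_univ_five]
  have h3 : ∑' j : ℤ, f (5*j-2) = ∑' j : ℤ, f (j*5+3) := by
    rw [← shift_tsum (fun j => f (5*j-2)) 1]; refine tsum_congr fun j => ?_; congr 1; ring
  have h4 : ∑' j : ℤ, f (5*j-1) = ∑' j : ℤ, f (j*5+4) := by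
    rw [← shift_tsum (fun j => f (5*j-1)) 1]; refine tsum_congr fun j => ?_; congr 1; ring
  rw [h3, h4]
  simp [mul_comm (5:ℤ)]

lemma fam_shift {p r y : ℂ} (hp0 : p ≠ 0) (hr : r ≠ 0) : fam p r y = r⁻¹ * fam p (r * (p^2)⁻¹) (y / p) := by
  rw [fam, fam, ← shift_tsum _ (-1), ← tsum_mul_left]
  refine tsum_congr fun n => ?_
  have h : (r * (p^2)⁻¹)^n * p^(n*n+n) = r^n * p^((n + -1)*(n+ -1) + (n + -1)) := by
    rw [mul_zpow, ← zpow_natCast p 2, ← zpow_neg, ← zpow_mul, mul_assoc, ← zpow_add₀ hp0]; congr 2; push_cast; ring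
  rw [h, zpow_add₀ hr, zpow_add₀ hp0 n (-1), zpow_neg_one, zpow_neg_one, show y * (p^n * p⁻¹) = y / p * p^n by ring]; ring

lemma fam_refl {p r y : ℂ} (hp0 : p ≠ 0) (hy : y ≠ 0) :
    fam p r y = -y⁻¹ * fam p (r⁻¹ * p⁻¹) y⁻¹ := by
  rw [fam, fam, ← (Equiv.neg ℤ).tsum_eq, ← tsum_mul_left]
  refine tsum_congr fun n => ?_
  simp only [Equiv.neg_apply]
  have hP : p^n ≠ 0 := zpow_ne_zero _ hp0
  have h : (r⁻¹ * p⁻¹)^n * p^(n*n+n) = r^(-n) * p^(-n * -n + -n) * p^n := by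
    rw [mul_zpow, inv_zpow', inv_zpow', mul_assoc, mul_assoc, ← zpow_add₀ hp0, ← zpow_add₀ hp0]; congr 2; ring
  have h2 : (1 - y * p^(-n))⁻¹ = -y⁻¹ * p^n * (1 - y⁻¹ * p^n)⁻¹ := by
    rw [zpow_neg]
    by_cases h0 : y = p^n
    · rw [h0]; field_simp; simp
    · have a1 : 1 - y * (p^n)⁻¹ ≠ 0 := by
        intro h; apply h0; field_simp at h; linear_combination -h
      have a2 : 1 - y⁻¹ * p^n ≠ 0 := by
        intro h; apply h0; field_simp at h; linear_combination h
      have a3 : p^n - y ≠ 0 := fun h => h0 (by linear_combination -h)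
      have a4 : y - p^n ≠ 0 := fun h => h0 (by linear_combination h)
      rw [show 1 - y * (p^n)⁻¹ = (p^n - y) / p^n by field_simp, show 1 - y⁻¹ * p^n = (y - p^n)/y by field_simp, inv_div, inv_div]
      rw [show p^n - y = -(y - p^n) by ring]
      field_simp
  rw [h2]; linear_combination y⁻¹ * (1 - y⁻¹ * p^n)⁻¹ * h

/-- Appell type sum -/
def Sb (t : ℂ) (b : ℤ) : ℂ := ∑' k : ℤ, (-1)^k * t^(k*k+b*k) * (1 - (t^5)^k)⁻¹

lemma Sb_summable {t : ℂ} (ht : ‖t‖ < 1) (ht0 : t ≠ 0) (b : ℤ) :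
    Summable fun k : ℤ => (-1)^k * t^(k*k+b*k) * (1 - (t^5)^k)⁻¹ := by
  obtain ⟨C, hC0, hC⟩ := inv_bdd' (p := t^5) (y := 1) (n5 ht 5 (by norm_num)) (by positivity) one_ne_zero
  have h := (summ_theta (r := -t^b) (p := t) (by simp [zpow_ne_zero _ ht0]) ht0 ht).mul_right C
  refine Summable.of_norm_bounded h fun k => ?_
  rw [norm_mul]
  have h1 := hC k
  rw [one_mul] at h1
  refine (mul_le_mul_of_nonneg_left h1 (norm_nonneg _)).trans (le_of_eq ?_)
  rw [neg_eq_neg_one_mul (t^b), mul_zpow, zpow_add₀ ht0, zpow_mul t b k]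
  congr 2; ring

lemma Sb_comp {t : ℂ} (ht0 : t ≠ 0) (b c : ℤ) :
    ∑' j : ℤ, (-1)^(5*j+c) * t^((5*j+c)*(5*j+c)+b*(5*j+c)) * (1 - (t^5)^(5*j+c))⁻¹ =
      (-1)^c * t^(c*c+b*c) * fam ((t^5)^5) (-(t^5)^(2*c+b-5)) ((t^5)^c) := by
  rw [fam, ← tsum_mul_left]
  refine tsum_congr fun j => ?_
  have ht5 : t^5 ≠ 0 := by positivity
  have h1 : (t^5)^(5*j+c) = (t^5)^c * ((t^5)^5)^j := by
    rw [zpow_add₀ ht5, zpow_mul, mul_comm]; norm_cast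
  rw [h1, neg_eq_neg_one_mul ((t^5)^(2*c+b-5)), mul_zpow]
  have h2 : (-1:ℂ)^(5*j+c) = (-1)^c * (-1)^j := by
    rw [zpow_add₀ (by norm_num), zpow_mul]; norm_num; ring
  have h3 : t^((5*j+c)*(5*j+c)+b*(5*j+c)) = t^(c*c+b*c) * (((t^5)^(2*c+b-5))^j * ((t^5)^5)^(j*j+j)) := by
    rw [← pow_mul, ← zpow_natCast t 5, ← zpow_natCast t (5*5), ← zpow_mul, ← zpow_mul, ← zpow_mul, ← zpow_add₀ ht0, ← zpow_add₀ ht0]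
    congr 1; push_cast; ring
  rw [h2, h3]; ring

lemma Sb_split {t : ℂ} (ht : ‖t‖ < 1) (ht0 : t ≠ 0) (b : ℤ) :
    Sb t b = fam ((t^5)^5) (-(t^5)^(b-5)) 1
     - t^(1+b) * fam ((t^5)^5) (-(t^5)^(b-3)) (t^5)
     + t^(4+2*b) * fam ((t^5)^5) (-(t^5)^(b-1)) ((t^5)^(2:ℤ))
     + t^(4-2*b) * fam ((t^5)^5) (-(t^5)^(b-9)) ((t^5)^(-2:ℤ))
     - t^(1-b) * fam ((t^5)^5) (-(t^5)^(b-7)) ((t^5)^(-1:ℤ)) := by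
  have h0 := Sb_comp ht0 b 0
  have h1 := Sb_comp ht0 b 1
  have h2 := Sb_comp ht0 b 2
  have h3 := Sb_comp ht0 b (-2)
  have h4 := Sb_comp ht0 b (-1)
  simp only [add_zero] at h0
  simp only [← sub_eq_add_neg] at h3 h4
  rw [Sb, mod5 _ (Sb_summable ht ht0 b), h0, h1, h2, h3, h4]
  rw [show 2*0+b-5 = b-5 by ring, show 2*1+b-5 = b-3 by ring, show 2*2+b-5 = b-1 by ring, show 2 * -2+b-5 = b-9 by ring,
    show 2 * -1 + b - 5 = b - 7 by ring]
  rw [show (2*2+b*2 : ℤ) = 4+2*b by ring, show (-2 * -2 + b * -2 : ℤ) = 4-2*b by ring, show (-1 * -1 + b * -1 : ℤ) = 1 - b by ring,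
    show (1*1+b*1 : ℤ) = 1+b by ring]
  norm_num [zpow_neg]
  ring

def GG (t : ℂ) : ℂ := 1 + 4 * Sb t 1 - 2 * Sb t 2

lemma GG_split {t : ℂ} (ht : ‖t‖ < 1) (ht0 : t ≠ 0) :
    GG t = (1 + 4 * X1 (t^5) + 2 * X2 (t^5)) + 4 * t * (t^5) * fam ((t^5)^5) (-1) ((t^5)^2)
      - 4 * t^2 * Uq (t^5) - 2 * t^3 * (Vq (t^5) / t^5) - 2 * t^4 * fam ((t^5)^5) (-1) (t^5) := by
  rw [GG, Sb_split ht ht0, Sb_split ht ht0, X1, X2, Uq, Vq]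
  have hq0 : t^5 ≠ 0 := by positivity
  have e6 : t^(4+2*1:ℤ) = t * t^5 := by rw [← pow_succ']; norm_cast
  have e8 : t^(4+2*2:ℤ) = t^3 * t^5 := by rw [← pow_add]; norm_cast
  have em1 : t^(1-2:ℤ) = t^4 / t^5 := by rw [show (1-2:ℤ) = -1 by norm_num, zpow_neg_one]; field_simp
  rw [e6, e8, em1]
  generalize t^5 = q at *
  have hp0 : q^5 ≠ 0 := by positivity
  have s1 := fam_shift (p := q^5) (r := -q^4) (y := q^4) hp0 (by simpa using hq0)
  have s2 := fam_shift (p := q^5) (r := -q^2) (y := q^3) hp0 (by simpa using hq0)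
  have s3 := fam_shift (p := q^5) (r := -q^4) (y := q^3) hp0 (by simpa using hq0)
  have r1 := fam_refl (p := q^5) (r := -(q^3)⁻¹) (y := 1) hp0 one_ne_zero
  have r2 := fam_refl (p := q^5) (r := -q^2) (y := q^2) hp0 (by positivity)
  have r3 := fam_refl (p := q^5) (r := -q⁻¹) (y := q) hp0 (by positivity)
  have r4 := fam_refl (p := q^5) (r := -q) (y := q^2) hp0 (by positivity)
  have r5 := fam_refl (p := q^5) (r := -1) (y := q) hp0 (by positivity)
  have a1 : -q^4 * ((q^5)^2)⁻¹ = -(q^6)⁻¹ := by field_simp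
  have a2 : -q^2 * ((q^5)^2)⁻¹ = -(q^8)⁻¹ := by field_simp
  have a4 : (-(q^3)⁻¹)⁻¹ * (q^5)⁻¹ = -(q^2)⁻¹ := by field_simp
  have a5 : (-q^2)⁻¹ * (q^5)⁻¹ = -(q^7)⁻¹ := by field_simp
  have a6 : (-q⁻¹)⁻¹ * (q^5)⁻¹ = -(q^4)⁻¹ := by field_simp
  have a7 : (-q)⁻¹ * (q^5)⁻¹ = -(q^6)⁻¹ := by field_simp
  have a8 : (-1)⁻¹ * (q^5)⁻¹ = -(q^5)⁻¹ := by field_simp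
  have a9 : q^4/q^5 = q⁻¹ := by field_simp
  have a10 : q^3/q^5 = (q^2)⁻¹ := by field_simp
  rw [a1, a9] at s1
  rw [a2, a10] at s2
  rw [a1, a10] at s3
  rw [a4, inv_one] at r1
  rw [a5] at r2
  rw [a6] at r3
  rw [a7] at r4
  rw [a8] at r5
  have z1 : q^(1-5:ℤ) = (q^4)⁻¹ := by rw [← zpow_natCast, ← zpow_neg]; norm_num
  have z2 : q^(1-3:ℤ) = (q^2)⁻¹ := by rw [← zpow_natCast, ← zpow_neg]; norm_num
  have z3 : q^(1-1:ℤ) = 1 := by norm_num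
  have z4 : q^(1-9:ℤ) = (q^8)⁻¹ := by rw [← zpow_natCast, ← zpow_neg]; norm_num
  have z5 : q^(1-7:ℤ) = (q^6)⁻¹ := by rw [← zpow_natCast, ← zpow_neg]; norm_num
  have z6 : q^(2-5:ℤ) = (q^3)⁻¹ := by rw [← zpow_natCast, ← zpow_neg]; norm_num
  have z7 : q^(2-3:ℤ) = q⁻¹ := by norm_num
  have z8 : q^(2-1:ℤ) = q := by norm_num
  have z9 : q^(2-9:ℤ) = (q^7)⁻¹ := by rw [← zpow_natCast, ← zpow_neg]; norm_num
  have z10 : q^(2-7:ℤ) = (q^5)⁻¹ := by rw [← zpow_natCast, ← zpow_neg]; norm_num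
  have z11 : q^(2:ℤ) = q^2 := by norm_cast
  have z12 : q^(-2:ℤ) = (q^2)⁻¹ := by rw [← zpow_natCast, ← zpow_neg]; norm_num
  have z13 : q^(-1:ℤ) = q⁻¹ := by norm_num
  have w1 : t^(1+1:ℤ) = t^2 := by norm_cast
  have w2 : t^(4-2*1:ℤ) = t^2 := by norm_cast
  have w3 : t^(1-1:ℤ) = 1 := by norm_num
  have w4 : t^(1+2:ℤ) = t^3 := by norm_cast
  have w5 : t^(4-2*2:ℤ) = 1 := by norm_num
  rw [z1, z2, z3, z4, z5, z6, z7, z8, z9, z10, z11, z12, z13, w1, w2, w3, w4, w5]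
  rw [r1, s1, s2, s3, r5, r4, r2, r3]
  field_simp
  ring

lemma phi_split {t : ℂ} (ht : ‖t‖ < 1) (ht0 : t ≠ 0) :
    th t t = J10 (t^5) * (Bq (t^5) 5 - 2 * t * Bq (t^5) 3 + 2 * t^4 * Bq (t^5) 1) := by
  have hc : ∀ c : ℤ, ∑' j : ℤ, (-t)^(5*j+c) * t^((5*j+c)*(5*j+c)-(5*j+c)) = (-1)^c * t^(c*c) * th ((t^5)^5) ((t^5)^(5+2*c)) := by
    intro c
    rw [th, ← tsum_mul_left]
    refine tsum_congr fun j => ?_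
    have h2 : (-1:ℂ)^(5*j+c) = (-1)^c * (-1)^j := by
      rw [zpow_add₀ (by norm_num), zpow_mul]; norm_num; ring
    rw [neg_eq_neg_one_mul t, mul_zpow, h2, neg_eq_neg_one_mul ((t^5)^_), mul_zpow]
    have h3 : t^(5*j+c) * t^((5*j+c)*(5*j+c)-(5*j+c)) = t^(c*c) * (((t^5)^(5+2*c))^j * ((t^5)^5)^(j*j-j)) := by
      rw [← pow_mul, ← zpow_natCast t 5, ← zpow_natCast t (5*5), ← zpow_mul, ← zpow_mul, ← zpow_mul, ← zpow_add₀ ht0, ← zpow_add₀ ht0, ← zpow_add₀ ht0]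
      congr 1; push_cast; ring
    linear_combination ((-1)^c * (-1)^j) * h3
  have h0 := hc 0
  have h1 := hc 1
  have h2 := hc 2
  have h3 := hc (-2)
  have h4 := hc (-1)
  simp only [add_zero] at h0
  simp only [← sub_eq_add_neg] at h3 h4
  have hq := n5 ht 5 (by norm_num)
  have hq0 : t^5 ≠ 0 := by positivity
  conv_lhs => rw [th]
  rw [mod5 _ (th_summable ht ht0 ht0).of_norm, h0, h1, h2, h3, h4]
  rw [th_a hq hq0 5 _ (by norm_cast), th_ac hq hq0 7 3 _ (by norm_cast) rfl, th_ac hq hq0 9 1 _ (by norm_cast) rfl,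
    th_a hq hq0 1 _ (by norm_cast), th_a hq hq0 3 _ (by norm_cast)]
  have w : t^(2*2:ℤ) = t^4 := by norm_cast
  have w' : t^(-2 * -2:ℤ) = t^4 := by norm_cast
  rw [w, w']
  norm_num [zpow_neg]
  ring

def F0 (q : ℂ) : ℂ := J10 q * (Bq q 5 * Bq q 4 / (Bq q 2 ^2 * Bq q 3 ^2))
def F1 (q : ℂ) : ℂ := 4 * q * fam (q^5) (-1) (q^2) / (J10 q * Bq q 5) + 2 * J10 q * (Bq q 4 / (Bq q 2 ^2 * Bq q 3))
def F3 (q : ℂ) : ℂ := 2 * J10 q / (Bq q 2 * Bq q 3)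
def F4 (q : ℂ) : ℂ := - 2 * fam (q^5) (-1) q / (J10 q * Bq q 5) + 4 * J10 q / (Bq q 2 * Bq q 5)
  - 2 * J10 q * (Bq q 1 * Bq q 4 / (Bq q 2 ^2 * Bq q 3 ^ 2))

theorem GG_main {t : ℂ} (ht : ‖t‖ < 1) (ht0 : t ≠ 0) :
    GG t = th t t * (F0 (t^5) + t * F1 (t^5) + t^3 * F3 (t^5) + t^4 * F4 (t^5)) := by
  have hq := n5 ht 5 (by norm_num)
  have hq0 : t^5 ≠ 0 := by positivity
  rw [GG_split ht ht0, phi_split ht ht0, G0_eq hq hq0, U_eq hq hq0, V_eq hq hq0, F0, F1, F3, F4]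
  have h2 := Bq_ne hq hq0 2 (by norm_num)
  have h3 := Bq_ne hq hq0 3 (by norm_num)
  have h5 := Bq_ne hq hq0 5 (by norm_num)
  have hJ := J10_ne hq
  generalize fam _ (-1) (t^5) = H1 at *
  generalize fam _ (-1) ((t^5)^2) = H2 at *
  generalize Bq (t^5) 1 = b1 at *
  generalize Bq (t^5) 2 = b2 at *
  generalize Bq (t^5) 3 = b3 at *
  generalize Bq (t^5) 4 = b4 at *
  generalize Bq (t^5) 5 = b5 at *
  generalize J10 (t^5) = J at *
  field_simp
  ring
end
end OV

open Filter Topology Finset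



namespace OV
noncomputable section

lemma overN_eq (s m n : ℕ) : overN s m n = ∑ p : Nat.Partition n,
    if ((p.parts.sup : ℤ) - (Multiset.card p.parts : ℤ)) % (m : ℤ) = (s : ℤ) % (m : ℤ)
      then 2^p.parts.toFinset.card else 0 := by
  rw [overN, Finset.card_filter, Finset.sum_sigma]
  refine Finset.sum_congr rfl fun p _ => ?_
  split_ifs <;> simp

/-- weighted counts -/
def WG (n l m : ℕ) : ℕ := ∑ p : Nat.Partition n,
  if p.parts.sup ≤ l ∧ Multiset.card p.parts = m then 2^p.parts.toFinset.card else 0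

def WE (n l m : ℕ) : ℕ := ∑ p : Nat.Partition n,
  if p.parts.sup = l ∧ Multiset.card p.parts = m then 2^p.parts.toFinset.card else 0

lemma WG_succ (n l m : ℕ) : WG n (l+1) m = WG n l m + WE n (l+1) m := by
  rw [WG, WG, WE, ← Finset.sum_add_distrib]
  refine Finset.sum_congr rfl fun p _ => ?_
  by_cases h : Multiset.card p.parts = m
  · rcases lt_trichotomy p.parts.sup (l+1) with h1 | h1 | h1
    · have : p.parts.sup ≤ l := by omega
      have h3 : p.parts.sup ≠ l+1 := by omega
      simp [h, this, h3, h1.le]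
    · simp [h, h1]
    · have : ¬ p.parts.sup ≤ l := by omega
      have h3 : p.parts.sup ≠ l+1 := by omega
      have h4 : ¬ p.parts.sup ≤ l+1 := by omega
      rw [if_neg (fun hh => h4 hh.1), if_neg (fun hh => this hh.1), if_neg (fun hh => h3 hh.1)]
  · simp [h]

lemma sup_mem (s : Multiset ℕ) (h : s.sup ≠ 0) : s.sup ∈ s := by
  induction s using Multiset.induction with
  | empty => simp at h
  | cons a s ih =>
    rw [Multiset.sup_cons] at h ⊢
    rcases le_total a s.sup with h1 | h1
    · rw [sup_of_le_right h1] at h ⊢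
      exact Multiset.mem_cons_of_mem (ih h)
    · rw [sup_of_le_left h1] ; simp

lemma WE_lt {n l : ℕ} (m : ℕ) (h : n < l) : WE n l m = 0 := by
  rw [WE]
  refine Finset.sum_eq_zero fun p _ => ?_
  rw [if_neg]
  rintro ⟨h1, _⟩
  have := sup_mem p.parts (by omega)
  have := Nat.Partition.le_of_mem_parts this
  omega

lemma WE_rec (n l m : ℕ) : WE (n+(l+1)) (l+1) (m+1) = WG n (l+1) m + WG n l m := by
  have e := Nat.Partition.partitionWithPartEquiv (n := n+(l+1)) (a := l+1) (by omega) (by omega)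
  have key : WE (n+(l+1)) (l+1) (m+1) = ∑ p : Nat.Partition (n+(l+1)-(l+1)),
      (if p.parts.sup ≤ l+1 ∧ Multiset.card p.parts = m then
        2^(insert (l+1) p.parts.toFinset).card else 0) := by
    rw [WE]
    have h1 : ∀ p : Nat.Partition (n+(l+1)), (if p.parts.sup = l+1 ∧ Multiset.card p.parts = m+1 then 2^p.parts.toFinset.card else 0) =
       if l+1 ∈ p.parts then (if p.parts.sup = l+1 ∧ Multiset.card p.parts = m+1 then 2^p.parts.toFinset.card else 0) else 0 := by
      intro p
      by_cases h : l+1 ∈ p.parts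
      · rw [if_pos h]
      · rw [if_neg h, if_neg]
        rintro ⟨h1, _⟩
        have h5 := sup_mem p.parts (by omega)
        rw [h1] at h5
        exact h h5
    rw [Finset.sum_congr rfl fun p _ => h1 p, ← Finset.sum_filter]
    rw [Finset.sum_subtype (p := fun p : Nat.Partition (n+(l+1)) => l+1 ∈ p.parts) _ (by simp)]
    refine (Fintype.sum_equiv (Nat.Partition.partitionWithPartEquiv (n := n+(l+1)) (a := l+1) (by omega) (by omega)).symm _ _ ?_).symm
    intro p
    rw [Nat.Partition.partitionWithPartEquiv_symm_apply_parts]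
    simp
  rw [key, Nat.add_sub_cancel, WG, WG, ← Finset.sum_add_distrib]
  refine Finset.sum_congr rfl fun p _ => ?_
  by_cases h : Multiset.card p.parts = m
  · rcases lt_trichotomy p.parts.sup (l+1) with h1 | h1 | h1
    · have h2 : p.parts.sup ≤ l := by omega
      have h3 : l+1 ∉ p.parts.toFinset := by
        intro h4
        have := Multiset.le_sup (Multiset.mem_toFinset.1 h4)
        omega
      rw [Finset.card_insert_of_notMem h3]
      simp [h, h2, h1.le, pow_succ]; ring
    · have h3 : l+1 ∈ p.parts.toFinset := by
        rw [Multiset.mem_toFinset, ← h1]; exact sup_mem _ (by omega)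
      simp [h, h1, Finset.insert_eq_of_mem h3]
    · have : ¬ p.parts.sup ≤ l := by omega
      have h3 : ¬ p.parts.sup ≤ l+1 := by omega
      simp [this, h3]
  · simp [h]

lemma part_card (n : ℕ) : Fintype.card (Nat.Partition n) ≤ 2^n := by
  refine (Fintype.card_le_of_surjective _ (Nat.Partition.ofComposition_surj (n := n))).trans ?_
  rw [composition_card]
  exact Nat.pow_le_pow_right (by norm_num) (by omega)

lemma dist_le {n : ℕ} (p : Nat.Partition n) : p.parts.toFinset.card ≤ n := by
  refine (Multiset.toFinset_card_le _).trans ?_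
  conv_rhs => rw [← p.parts_sum]
  have := Multiset.card_nsmul_le_sum (s := p.parts) (a := 1) (fun x hx => p.parts_pos hx)
  simpa using this

lemma W_sum_le (n : ℕ) : ∑ p : Nat.Partition n, 2^p.parts.toFinset.card ≤ 4^n := by
  refine (Finset.sum_le_card_nsmul _ _ (2^n) fun p _ => Nat.pow_le_pow_right (by norm_num) (dist_le p)).trans ?_
  rw [smul_eq_mul, Finset.card_univ, show 4 = 2*2 by norm_num, mul_pow]
  exact Nat.mul_le_mul_right _ (part_card n)

lemma WG_le (n l m : ℕ) : WG n l m ≤ 4^n :=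
  (Finset.sum_le_sum fun p _ => by split_ifs <;> simp).trans (W_sum_le n)
lemma WE_le (n l m : ℕ) : WE n l m ≤ 4^n :=
  (Finset.sum_le_sum fun p _ => by split_ifs <;> simp).trans (W_sum_le n)

lemma pow4_summable {t : ℂ} (ht : ‖t‖ < 1/8) : Summable fun n : ℕ => ((4:ℝ)^n) * ‖t‖^n := by
  simp only [← mul_pow]
  exact summable_geometric_of_lt_one (by positivity) (by linarith)

lemma wsumm {t : ℂ} (ht : ‖t‖ < 1/8) (a : ℕ → ℕ) (ha : ∀ n, a n ≤ 4^n) :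
    Summable fun n => (a n : ℂ) * t^n := by
  refine Summable.of_norm_bounded (pow4_summable ht) fun n => ?_
  rw [norm_mul, norm_pow, Complex.norm_natCast]
  exact mul_le_mul_of_nonneg_right (by exact_mod_cast ha n) (by positivity)

def gW (t : ℂ) (l m : ℕ) : ℂ := ∑' n, (WG n l m : ℂ) * t^n
def eW (t : ℂ) (l m : ℕ) : ℂ := ∑' n, (WE n l m : ℂ) * t^n

lemma gW_succ {t : ℂ} (ht : ‖t‖ < 1/8) (l m : ℕ) : gW t (l+1) m = gW t l m + eW t (l+1) m := by
  rw [gW, gW, eW, ← (wsumm ht _ fun n => WG_le n l m).tsum_add (wsumm ht _ fun n => WE_le n _ m)]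
  refine tsum_congr fun n => ?_
  rw [WG_succ]; push_cast; ring

lemma eW_rec {t : ℂ} (ht : ‖t‖ < 1/8) (l m : ℕ) :
    eW t (l+1) (m+1) = t^(l+1) * (gW t (l+1) m + gW t l m) := by
  rw [eW, ← (wsumm ht _ fun n => WE_le n _ _).sum_add_tsum_nat_add (l+1), Finset.sum_eq_zero, zero_add]
  · rw [gW, gW, ← (wsumm ht _ fun n => WG_le n (l+1) m).tsum_add (wsumm ht _ fun n => WG_le n l m), ← tsum_mul_left]
    refine tsum_congr fun n => ?_
    rw [WE_rec, pow_add]; push_cast; ring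
  · intro n hn
    rw [WE_lt _ (Finset.mem_range.1 hn)]; simp

lemma parts_zero {n : ℕ} (p : Nat.Partition n) (h : p.parts = 0) : n = 0 := by
  rw [← p.parts_sum, h]; simp

lemma sup_zero_iff {n : ℕ} (p : Nat.Partition n) : p.parts.sup = 0 ↔ p.parts = 0 := by
  constructor
  · intro h
    refine Multiset.eq_zero_of_forall_notMem fun a ha => ?_
    have h1 := Multiset.le_sup ha
    have := p.parts_pos ha
    omega
  · intro h; simp [h]

lemma W_point (f : ℕ → ℕ) (P : ∀ n, Nat.Partition n → Prop) [∀ n p, Decidable (P n p)] (t : ℂ)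
    (hf : ∀ n, f n = ∑ p : Nat.Partition n, if P n p then 2^p.parts.toFinset.card else 0)
    (hP : ∀ n p, P n p ↔ p.parts = 0) : ∑' n, (f n : ℂ) * t^n = 1 := by
  rw [tsum_eq_single 0]
  · rw [hf 0]
    simp [hP]
  · intro n hn
    rw [hf n, Finset.sum_eq_zero]
    · simp
    · intro p _
      rw [if_neg]
      intro h
      exact hn (parts_zero p ((hP n p).1 h))

lemma gW_zero_right (t : ℂ) (l : ℕ) : gW t l 0 = 1 := by
  refine W_point _ (fun n p => p.parts.sup ≤ l ∧ Multiset.card p.parts = 0) t (fun n => rfl) fun n p => ?_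
  rw [Multiset.card_eq_zero]
  constructor
  · exact fun h => h.2
  · intro h; simp [h]

lemma gW_zero_zero (t : ℂ) : gW t 0 0 = 1 := gW_zero_right t 0
lemma eW_zero_zero (t : ℂ) : eW t 0 0 = 1 := by
  refine W_point _ (fun n p => p.parts.sup = 0 ∧ Multiset.card p.parts = 0) t (fun n => rfl) fun n p => ?_
  rw [Multiset.card_eq_zero, sup_zero_iff]; simp

lemma gW_zero_left (t : ℂ) (m : ℕ) : gW t 0 (m+1) = 0 := by
  rw [gW]
  refine (tsum_congr fun n => ?_).trans tsum_zero
  rw [WG, Finset.sum_eq_zero]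
  · simp
  · intro p _
    rw [if_neg]
    rintro ⟨h1, h2⟩
    rw [(sup_zero_iff p).1 (by omega)] at h2
    simp at h2

lemma eW_zero_left (t : ℂ) (m : ℕ) : eW t 0 (m+1) = 0 := by
  rw [eW]
  refine (tsum_congr fun n => ?_).trans tsum_zero
  rw [WE, Finset.sum_eq_zero]
  · simp
  · intro p _
    rw [if_neg]
    rintro ⟨h1, h2⟩
    rw [(sup_zero_iff p).1 (by omega)] at h2
    simp at h2

lemma eW_zero_right (t : ℂ) (l : ℕ) : eW t (l+1) 0 = 0 := by
  rw [eW]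
  refine (tsum_congr fun n => ?_).trans tsum_zero
  rw [WE, Finset.sum_eq_zero]
  · simp
  · intro p _
    rw [if_neg]
    rintro ⟨h1, h2⟩
    rw [Multiset.card_eq_zero] at h2
    simp [h2] at h1

lemma gW_rec {t : ℂ} (ht : ‖t‖ < 1/8) (l m : ℕ) :
    gW t (l+1) (m+1) = gW t l (m+1) + t^(l+1) * (gW t (l+1) m + gW t l m) := by
  rw [gW_succ ht, eW_rec ht]

/-- cumulative sums -/
def bW (t : ℂ) (l m : ℕ) : ℂ := ∑ k ∈ range (m+1), gW t l k

lemma bW_zr (t : ℂ) (l : ℕ) : bW t l 0 = 1 := by simp [bW, gW_zero_right]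
lemma bW_zl (t : ℂ) (m : ℕ) : bW t 0 m = 1 := by
  rw [bW, Finset.sum_range_succ']; simp [gW_zero_left, gW_zero_zero]
lemma bW_rec {t : ℂ} (ht : ‖t‖ < 1/8) (l m : ℕ) :
    bW t (l+1) (m+1) = bW t l (m+1) + t^(l+1) * (bW t (l+1) m + bW t l m) := by
  rw [bW, bW, bW, bW, Finset.sum_range_succ', Finset.sum_range_succ' (fun k => gW t l k) (m+1), ← Finset.sum_add_distrib, Finset.mul_sum,
    Finset.sum_congr rfl fun k _ => gW_rec ht l k, Finset.sum_add_distrib, gW_zero_right, gW_zero_right]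
  ring

lemma bW_rec2 {t : ℂ} (ht : ‖t‖ < 1/8) (l m : ℕ) :
    bW t (l+1) (m+1) = bW t (l+1) m + t^(m+1) * (bW t l (m+1) + bW t l m) := by
  induction l generalizing m with
  | zero =>
    induction m with
    | zero => rw [bW_rec ht]; simp only [bW_zr, bW_zl]
    | succ m ih =>
      rw [bW_rec ht]
      have := bW_rec ht 0 m
      simp only [bW_zl] at this ih ⊢
      linear_combination t * ih - this
  | succ l ihl =>
    induction m with
    | zero =>
      have h1 := bW_rec ht (l+1) 0
      have h2 := ihl 0
      have h3 := bW_rec ht l 0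
      simp only [bW_zr] at *
      linear_combination h1 + h2 - t * h3
    | succ m ih =>
      have h1 := bW_rec ht (l+1) (m+1)
      have h2 := bW_rec ht (l+1) m
      have h3 := bW_rec ht l (m+1)
      have h4 := bW_rec ht l m
      have i1 := ihl (m+1)
      have i2 := ihl m
      linear_combination h1 - h2 - t^(m+1+1) * (h3 + h4) + i1 + t^(l+1+1) * (ih + i2)

lemma bW_symm {t : ℂ} (ht : ‖t‖ < 1/8) (l m : ℕ) : bW t l m = bW t m l := by
  induction l generalizing m with
  | zero => rw [bW_zl, bW_zr]
  | succ l ih =>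
    induction m with
    | zero => rw [bW_zl, bW_zr]
    | succ m ih2 => rw [bW_rec ht, bW_rec2 ht m l, ih, ih2, ih m]

lemma eW_symm {t : ℂ} (ht : ‖t‖ < 1/8) (l m : ℕ) : eW t (l+1) (m+1) = eW t (m+1) (l+1) := by
  have h : ∀ l m, eW t (l+1) (m+1) = bW t (l+1) (m+1) - bW t l (m+1) - bW t (l+1) m + bW t l m := by
    intro l m
    have := gW_succ ht l (m+1)
    rw [bW, bW, Finset.sum_range_succ, Finset.sum_range_succ _ (m+1), bW, bW]
    linear_combination -this
  rw [h, h, bW_symm ht (l+1) (m+1), bW_symm ht l (m+1), bW_symm ht (l+1) m, bW_symm ht l m]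
  ring

end
end OV

open Filter Topology Finset
namespace OV
noncomputable section

def be (t : ℂ) (i : ℕ) : ℂ := qp t (-1) i / qp t t i
def bb (t : ℂ) (i : ℕ) : ℂ := t^i * be t i
def aa (t : ℂ) (j : ℕ) : ℂ := (-1)^j * qp t (-t) j / qp t t j

lemma be_zero (t : ℂ) : be t 0 = 1 := by simp [be, qp_zero]

lemma be_rec {t : ℂ} (ht : ‖t‖ < 1) (n : ℕ) : be t (n+1) * (1 - t^(n+1)) = be t n * (1 + t^n) := by
  have h1 := qp_ne_zero (self_np ht) n
  have h2 : 1 - t^(n+1) ≠ 0 := (one_sub_ne ht _ (by omega)).1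
  rw [be, be, qp_succ, qp_succ, ← pow_succ' t n]
  field_simp
  ring

def FF (t : ℂ) : PowerSeries ℂ := PowerSeries.mk (bb t)

lemma FF_eq {t : ℂ} (ht : ‖t‖ < 1) :
    FF t * (1 - PowerSeries.C t * PowerSeries.X) = PowerSeries.rescale t (FF t) * (1 + PowerSeries.C t * PowerSeries.X) := by
  ext n
  rw [mul_sub, mul_add, mul_one, mul_one, map_sub, map_add, ← mul_assoc, ← mul_assoc, PowerSeries.coeff_rescale]
  cases n with
  | zero => simp [FF, bb]
  | succ n =>
    rw [PowerSeries.coeff_succ_mul_X, PowerSeries.coeff_succ_mul_X, PowerSeries.coeff_mul_C, PowerSeries.coeff_mul_C, PowerSeries.coeff_rescale]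
    simp only [FF, PowerSeries.coeff_mk, bb]
    linear_combination t^(n+1) * be_rec ht n

lemma FF_resc {t : ℂ} (ht : ‖t‖ < 1) (x : ℂ) :
    PowerSeries.rescale x (FF t) * (1 - PowerSeries.C (x*t) * PowerSeries.X) =
      PowerSeries.rescale (x*t) (FF t) * (1 + PowerSeries.C (x*t) * PowerSeries.X) := by
  have h := congrArg (PowerSeries.rescale x) (FF_eq ht)
  simp only [map_mul, map_sub, map_add, map_one, PowerSeries.rescale_X, PowerSeries.rescale_rescale] at h
  have hc : ∀ y : ℂ, PowerSeries.rescale x (PowerSeries.C y) = PowerSeries.C y := by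
    intro y; ext n; rw [PowerSeries.coeff_rescale, PowerSeries.coeff_C]; split_ifs with hn <;> simp [hn]
  rw [hc, mul_comm t x] at h
  rw [map_mul]
  linear_combination h

lemma lin_ne (c : ℂ) : (1 - PowerSeries.C c * PowerSeries.X : PowerSeries ℂ) ≠ 0 := by
  intro h
  have := congrArg (PowerSeries.coeff 0) h
  simp at this
lemma lin_ne' (c : ℂ) : (1 + PowerSeries.C c * PowerSeries.X : PowerSeries ℂ) ≠ 0 := by
  intro h
  have := congrArg (PowerSeries.coeff 0) h
  simp at this

lemma FF_inv {t : ℂ} (ht : ‖t‖ < 1) : FF t * PowerSeries.rescale (-1) (FF t) = 1 := by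
  have h1 := FF_eq ht
  have h2 := FF_resc ht (-1)
  rw [neg_one_mul, map_neg] at h2
  have h3 : FF t * PowerSeries.rescale (-1) (FF t) = PowerSeries.rescale t (FF t * PowerSeries.rescale (-1) (FF t)) := by
    rw [map_mul, PowerSeries.rescale_rescale, neg_one_mul]
    refine mul_right_cancel₀ (mul_ne_zero (lin_ne t) (lin_ne' t)) ?_
    have e1 : (1 - -PowerSeries.C t * PowerSeries.X : PowerSeries ℂ) = 1 + PowerSeries.C t * PowerSeries.X := by ring
    have e2 : (1 + -PowerSeries.C t * PowerSeries.X : PowerSeries ℂ) = 1 - PowerSeries.C t * PowerSeries.X := by ring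
    rw [e1, e2] at h2
    generalize PowerSeries.rescale (-1) (FF t) = A at *
    generalize PowerSeries.rescale (-t) (FF t) = B at *
    generalize PowerSeries.rescale (t) (FF t) = D at *
    linear_combination A * (1 + PowerSeries.C t * PowerSeries.X) * h1 + D * (1 + PowerSeries.C t * PowerSeries.X) * h2
  ext n
  cases n with
  | zero =>
    rw [PowerSeries.coeff_mul, Finset.Nat.antidiagonal_zero, Finset.sum_singleton, PowerSeries.coeff_rescale, FF, PowerSeries.coeff_mk]
    simp [bb, be_zero]
  | succ n =>
    have h4 := congrArg (PowerSeries.coeff (n+1)) h3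
    rw [PowerSeries.coeff_rescale] at h4
    have h5 : 1 - t^(n+1) ≠ 0 := (one_sub_ne ht _ (by omega)).1
    rw [PowerSeries.coeff_one, if_neg (by omega)]
    refine mul_left_cancel₀ h5 ?_
    linear_combination h4

lemma GF {t : ℂ} (ht : ‖t‖ < 1/8) (l : ℕ) :
    PowerSeries.mk (gW t l) * PowerSeries.rescale (t^l) (FF t) = FF t := by
  have ht1 : ‖t‖ < 1 := by linarith
  induction l with
  | zero =>
    have : PowerSeries.mk (gW t 0) = 1 := by
      ext n
      cases n with
      | zero => simp [gW_zero_zero]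
      | succ n => simp [gW_zero_left, PowerSeries.coeff_one]
    rw [this]; simp
  | succ l ih =>
    have h := FF_resc ht1 (t^l)
    rw [← pow_succ] at h
    have h2 : PowerSeries.mk (gW t (l+1)) * (1 - PowerSeries.C (t^(l+1)) * PowerSeries.X) =
        PowerSeries.mk (gW t l) * (1 + PowerSeries.C (t^(l+1)) * PowerSeries.X) := by
      ext n
      rw [mul_sub, mul_add, mul_one, mul_one, map_sub, map_add, ← mul_assoc, ← mul_assoc]
      cases n with
      | zero => simp [gW_zero_right]
      | succ n =>
        rw [PowerSeries.coeff_succ_mul_X, PowerSeries.coeff_succ_mul_X, PowerSeries.coeff_mul_C, PowerSeries.coeff_mul_C]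
        simp only [PowerSeries.coeff_mk]
        linear_combination gW_rec ht l n
    refine mul_right_cancel₀ (lin_ne (t^(l+1))) ?_
    generalize PowerSeries.C (t^(l+1)) * PowerSeries.X = Y at *
    linear_combination PowerSeries.rescale (t^(l+1)) (FF t) * h2 - PowerSeries.mk (gW t l) * h + (1 - Y) * ih

lemma gW_closed {t : ℂ} (ht : ‖t‖ < 1/8) (l m : ℕ) :
    gW t l m = ∑ x ∈ antidiagonal m, bb t x.1 * ((-t^l)^x.2 * bb t x.2) := by
  have ht1 : ‖t‖ < 1 := by linarith
  have h1 := GF ht l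
  have h2 := congrArg (PowerSeries.rescale (t^l)) (FF_inv ht1)
  rw [map_mul, map_one, PowerSeries.rescale_rescale, neg_one_mul] at h2
  have h3 : PowerSeries.mk (gW t l) = FF t * PowerSeries.rescale (-t^l) (FF t) := by
    linear_combination PowerSeries.rescale (-t^l) (FF t) * h1 - PowerSeries.mk (gW t l) * h2
  have h4 := congrArg (PowerSeries.coeff m) h3
  rw [PowerSeries.coeff_mul] at h4
  simpa [PowerSeries.coeff_rescale, FF] using h4

lemma eW_closed {t : ℂ} (ht : ‖t‖ < 1/8) (l m : ℕ) :
    eW t (l+1) (m+1) = 2 * ∑ x ∈ antidiagonal m, aa t x.2 * bb t x.1 * t^((l+1)*(x.2+1)) := by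
  have ht1 : ‖t‖ < 1 := by linarith
  have h := gW_succ ht l (m+1)
  rw [gW_closed ht, gW_closed ht, Finset.Nat.sum_antidiagonal_succ', Finset.Nat.sum_antidiagonal_succ'] at h
  rw [Finset.mul_sum]
  have h2 : ∀ x ∈ antidiagonal m, 2 * (aa t x.2 * bb t x.1 * t^((l+1)*(x.2+1))) =
     bb t x.1 * ((-t^(l+1))^(x.2+1) * bb t (x.2+1)) - bb t x.1 * ((-t^l)^(x.2+1) * bb t (x.2+1)) := by
    rintro ⟨i, j⟩ _
    simp only
    have h1 := qp_ne_zero (self_np ht1) j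
    have h2 : 1 - t^(j+1) ≠ 0 := (one_sub_ne ht1 _ (by omega)).1
    have h3 : bb t (j+1) = 2 * t^(j+1) * qp t (-t) j / (qp t t j * (1 - t^(j+1))) := by
      rw [bb, be, qp_succ', qp_succ, neg_one_mul, ← pow_succ' t j]; ring
    rw [h3, aa]
    have e1 : (-t^(l+1))^(j+1) = -(-1)^j * t^((l+1)*(j+1)) := by rw [neg_pow, ← pow_mul]; ring
    have e2 : (-t^l)^(j+1) = -(-1)^j * t^(l*(j+1)) := by rw [neg_pow, ← pow_mul]; ring
    have e3 : t^((l+1)*(j+1)) = t^(l*(j+1)) * t^(j+1) := by rw [← pow_add]; congr 1; ring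
    rw [e1, e2, e3]
    field_simp
    ring
  rw [Finset.sum_congr rfl h2, Finset.sum_sub_distrib]
  simp only [pow_zero] at h
  linear_combination -h

lemma be_bdd {t : ℂ} (ht : ‖t‖ < 1) : ∃ C : ℝ, 0 ≤ C ∧ ∀ n, ‖be t n‖ ≤ C := by
  obtain ⟨C1, h1, k1⟩ := qp_bdd ht (-1)
  obtain ⟨C2, h2, k2⟩ := qp_inv_bdd ht (self_np ht)
  refine ⟨C1*C2, by positivity, fun n => ?_⟩
  rw [be, div_eq_mul_inv, norm_mul]
  exact mul_le_mul (k1 n) (k2 n) (norm_nonneg _) h1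

lemma aa_bdd {t : ℂ} (ht : ‖t‖ < 1) : ∃ C : ℝ, 0 ≤ C ∧ ∀ n, ‖aa t n‖ ≤ C := by
  obtain ⟨C1, h1, k1⟩ := qp_bdd ht (-t)
  obtain ⟨C2, h2, k2⟩ := qp_inv_bdd ht (self_np ht)
  refine ⟨C1*C2, by positivity, fun n => ?_⟩
  rw [aa, div_eq_mul_inv, norm_mul, norm_mul, norm_pow, norm_neg, norm_one, one_pow, one_mul]
  exact mul_le_mul (k1 n) (k2 n) (norm_nonneg _) h1

lemma be_summable {t x : ℂ} (ht : ‖t‖ < 1) (hx : ‖x‖ < 1) : Summable fun i => be t i * x^i := by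
  obtain ⟨C, h0, hC⟩ := be_bdd ht
  refine Summable.of_norm_bounded ((summable_geometric_of_lt_one (norm_nonneg x) hx).mul_left C) fun i => ?_
  rw [norm_mul, norm_pow]
  exact mul_le_mul_of_nonneg_right (hC i) (by positivity)

lemma be_func {t x : ℂ} (ht : ‖t‖ < 1) (hx : ‖x‖ < 1) :
    (∑' i, be t i * x^i) * (1 - x) = (∑' i, be t i * (x*t)^i) * (1 + x) := by
  have hx2 : ‖x*t‖ < 1 := by
    rw [norm_mul]; exact mul_lt_one_of_nonneg_of_lt_one_left (norm_nonneg _) hx ht.le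
  have s1 := be_summable ht hx
  have s2 := be_summable ht hx2
  have h1 := s1.tsum_eq_zero_add
  have h2 := s2.tsum_eq_zero_add
  have s1' := (summable_nat_add_iff 1).2 s1
  have s2' := (summable_nat_add_iff 1).2 s2
  have h3 : (∑' i, be t (i+1) * x^(i+1)) - (∑' i, be t (i+1) * (x*t)^(i+1)) =
      x * ((∑' i, be t i * x^i) + ∑' i, be t i * (x*t)^i) := by
    rw [← s1'.tsum_sub s2', ← s1.tsum_add s2, ← tsum_mul_left]
    refine tsum_congr fun n => ?_
    rw [mul_pow, mul_pow]
    linear_combination x^(n+1) * be_rec ht n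
  simp only [pow_zero] at h1 h2
  linear_combination h1 - h2 + h3

lemma be_iter {t x : ℂ} (ht : ‖t‖ < 1) (hx : ‖x‖ < 1) (n : ℕ) :
    (∑' i, be t i * x^i) * qp t x n = (∑' i, be t i * (x*t^n)^i) * qp t (-x) n := by
  induction n with
  | zero => simp [qp_zero]
  | succ n ih =>
    have hx2 : ‖x*t^n‖ < 1 := by
      rw [norm_mul, norm_pow]; exact mul_lt_one_of_nonneg_of_lt_one_left (norm_nonneg _) hx (pow_le_one₀ (norm_nonneg _) ht.le)
    have := be_func ht hx2
    rw [mul_assoc x, ← pow_succ] at this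
    rw [qp_succ, qp_succ]
    linear_combination (1 - x*t^n) * ih + qp t (-x) n * this

lemma be_sum {t x : ℂ} (ht : ‖t‖ < 1) (hx : ‖x‖ < 1) :
    (∑' i, be t i * x^i) * qi t x = qi t (-x) := by
  have h1 : Tendsto (fun n => (∑' i, be t i * x^i) * qp t x n) atTop (𝓝 ((∑' i, be t i * x^i) * qi t x)) :=
    (qp_tendsto ht x).const_mul _
  have h2 : Tendsto (fun n => ∑' i, be t i * (x*t^n)^i) atTop (𝓝 (∑' i, if i = 0 then (1:ℂ) else 0)) := by
    obtain ⟨C, h0, hC⟩ := be_bdd ht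
    refine tendsto_tsum_of_dominated_convergence (bound := fun i => C * ‖x‖^i) ((summable_geometric_of_lt_one (norm_nonneg x) hx).mul_left C) ?_ ?_
    · intro i
      by_cases hi : i = 0
      · simp [hi, be_zero]
      · rw [if_neg hi]
        have h3 : Tendsto (fun n => x * t^n) atTop (𝓝 0) := by
          simpa using (tendsto_pow_atTop_nhds_zero_of_norm_lt_one ht).const_mul x
        have := (h3.pow i).const_mul (be t i)
        simpa [hi] using this
    · refine Eventually.of_forall fun n i => ?_
      rw [norm_mul, norm_pow, norm_mul, norm_pow]
      refine mul_le_mul (hC i) (pow_le_pow_left₀ (by positivity) ?_ i) (by positivity) h0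
      exact mul_le_of_le_one_right (norm_nonneg _) (pow_le_one₀ (norm_nonneg _) ht.le)
  rw [tsum_ite_eq] at h2
  have h3 := h2.mul (qp_tendsto ht (-x))
  rw [one_mul] at h3
  refine tendsto_nhds_unique h1 (h3.congr fun n => (be_iter ht hx n).symm)

/-- overpartition generating product -/
def PB (t : ℂ) : ℂ := qi t (-t) / qi t t

lemma aa_sum {t : ℂ} (ht : ‖t‖ < 1) (j : ℕ) :
    aa t j * ∑' i, bb t i * (t^(j+1))^i = PB t * ((-1)^j * (1 - t^(j+1)) / (1 + t^(j+1))) := by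
  have e : ∀ i, bb t i * (t^(j+1))^i = be t i * (t^(j+2))^i := by
    intro i; rw [bb, pow_succ t (j+1), mul_pow]; ring
  rw [tsum_congr e]
  have h := be_sum ht (n5 ht (j+2) (by omega))
  have h1 := qi_shift ht t (j+1)
  have h2 := qi_shift ht (-t) (j+1)
  have n1 := qp_ne_zero (self_np ht) (j+1)
  have n0 := qi_self_ne ht
  obtain ⟨n2, n3⟩ := one_sub_ne ht (j+1) (by omega)
  rw [neg_mul, ← pow_succ' t (j+1)] at h2
  rw [← pow_succ' t (j+1)] at h1
  rw [qp_succ, ← pow_succ'] at h1 n1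
  rw [qp_succ, neg_mul, ← pow_succ' t j, sub_neg_eq_add] at h2
  have n4 : qp t t j ≠ 0 := left_ne_zero_of_mul n1
  have n5' : qi t (t^(j+1+1)) ≠ 0 := by
    intro h0; rw [h0, mul_zero] at h1; exact n0 h1
  rw [aa, PB, h1, h2, ← h]
  field_simp

lemma th_eq {t : ℂ} (ht : ‖t‖ < 1) (ht0 : t ≠ 0) : PB t * th t t = 1 := by
  rw [← jtp ht ht0 ht0, br, show t^2/t = t by field_simp, PB]
  have h1 := qi_neg ht t
  have h2 := qi_split ht t
  rw [← pow_two] at h2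
  have n0 := qi_self_ne ht
  have n1 := qi_self_ne (norm_sq_lt ht)
  have h3 : qi t (-t) * qi (t^2) t = 1 := by
    refine mul_right_cancel₀ n1 ?_
    linear_combination h1 - qi t (-t) * h2
  rw [div_mul_eq_mul_div, div_eq_one_iff_eq n0]
  linear_combination qi (t^2) (t^2) * qi (t^2) t * h3 - h2

end
end OV

open Filter Topology Finset
namespace OV
noncomputable section

def chi (r : ℤ) : ℂ := (if r % 5 = 0 then 1 else 0) - (if r % 5 = 2 then 1 else 0)

lemma chi_norm (r : ℤ) : ‖chi r‖ ≤ 1 := by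
  rw [chi]
  by_cases h : r % 5 = 0
  · simp [h]
  · by_cases h2 : r % 5 = 2
    · simp [h2]
    · simp [h, h2]

lemma chi_add (r : ℤ) : chi (r+5) = chi r := by simp [chi]
lemma chi_sub (r : ℤ) : chi (r-5) = chi r := by simp [chi]

/-- the index type of all partitions -/
abbrev AP := Σ n : ℕ, Nat.Partition n

def wt (t : ℂ) (x : AP) : ℂ := 2^x.2.parts.toFinset.card * t^x.1
def gs (x : AP) : ℕ × ℕ := (x.2.parts.sup, Multiset.card x.2.parts)

lemma wt_summable {t : ℂ} (ht : ‖t‖ < 1/8) : Summable fun x => ‖wt t x‖ := by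
  rw [summable_sigma_of_nonneg (fun _ => norm_nonneg _)]
  refine ⟨fun n => (hasSum_fintype _).summable, ?_⟩
  refine Summable.of_nonneg_of_le (fun n => tsum_nonneg fun _ => norm_nonneg _) (fun n => ?_) (pow4_summable ht)
  rw [tsum_fintype]
  simp only [wt, norm_mul, norm_pow, Complex.norm_ofNat]
  rw [← Finset.sum_mul]
  exact mul_le_mul_of_nonneg_right (by exact_mod_cast W_sum_le n) (by positivity)

lemma graph_summable {t : ℂ} (ht : ‖t‖ < 1/8) (c : ℕ × ℕ → ℂ) (hc : ∀ y, ‖c y‖ ≤ 1) :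
    Summable fun z : AP × (ℕ × ℕ) => if gs z.1 = z.2 then c z.2 * wt t z.1 else 0 := by
  have hi : Function.Injective fun x : AP => (x, gs x) := fun a b h => (Prod.ext_iff.1 h).1
  rw [← hi.summable_iff]
  · refine Summable.of_norm_bounded (wt_summable ht) fun x => ?_
    simp only [Function.comp, if_true, norm_mul]
    exact mul_le_of_le_one_left (norm_nonneg _) (hc _)
  · rintro ⟨x, y⟩ h
    simp only [Set.mem_range, not_exists] at h
    rw [if_neg]
    intro h2
    exact h x (Prod.ext rfl h2)

lemma eW_tsum {t : ℂ} (ht : ‖t‖ < 1/8) (y : ℕ × ℕ) :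
    ∑' x : AP, (if gs x = y then wt t x else 0) = eW t y.1 y.2 := by
  have hs : Summable fun x : AP => (if gs x = y then wt t x else 0) := by
    refine Summable.of_norm_bounded (wt_summable ht) fun x => ?_
    split_ifs <;> simp
  rw [hs.tsum_sigma, eW]
  refine tsum_congr fun n => ?_
  rw [tsum_fintype, WE]
  push_cast
  rw [Finset.sum_mul]
  refine Finset.sum_congr rfl fun p _ => ?_
  simp only [gs, wt, Prod.ext_iff]
  split_ifs <;> simp

lemma regroup {t : ℂ} (ht : ‖t‖ < 1/8) (c : ℕ × ℕ → ℂ) (hc : ∀ y, ‖c y‖ ≤ 1) :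
    (Summable fun y : ℕ × ℕ => c y * eW t y.1 y.2) ∧
    ∑' x : AP, c (gs x) * wt t x = ∑' y : ℕ × ℕ, c y * eW t y.1 y.2 := by
  have hs := graph_summable ht c hc
  have e1 : ∀ y : ℕ × ℕ, ∑' x : AP, (if gs x = y then c y * wt t x else 0) = c y * eW t y.1 y.2 := by
    intro y
    rw [← eW_tsum ht, ← tsum_mul_left]
    refine tsum_congr fun x => ?_
    split_ifs <;> simp
  constructor
  · have := hs.prod_symm.prod
    simp only [Prod.swap] at this
    exact this.congr fun y => e1 y
  · rw [← tsum_congr e1]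
    rw [Summable.tsum_comm (f := fun (x : AP) (y : ℕ × ℕ) => if gs x = y then c y * wt t x else 0) hs]
    refine tsum_congr fun x => ?_
    rw [tsum_eq_single (gs x)]
    · simp
    · intro y hy; rw [if_neg (Ne.symm hy)]

def dn (n : ℕ) : ℂ := (overN 0 5 n : ℂ) - overN 2 5 n
def DD (t : ℂ) : ℂ := ∑' n, dn n * t^n

lemma dn_eq (n : ℕ) : dn n = ∑ p : Nat.Partition n, chi ((p.parts.sup : ℤ) - (Multiset.card p.parts : ℤ)) * 2^p.parts.toFinset.card := by
  rw [dn, overN_eq, overN_eq]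
  push_cast
  rw [← Finset.sum_sub_distrib]
  refine Finset.sum_congr rfl fun p _ => ?_
  rw [chi, sub_mul, ite_mul, ite_mul]
  simp

lemma dn_norm (n : ℕ) : ‖dn n‖ ≤ 4^n := by
  rw [dn_eq]
  refine (norm_sum_le _ _).trans ?_
  have : ((∑ p : Nat.Partition n, 2^p.parts.toFinset.card : ℕ) : ℝ) ≤ 4^n := by exact_mod_cast W_sum_le n
  refine le_trans ?_ this
  push_cast
  refine Finset.sum_le_sum fun p _ => ?_
  rw [norm_mul, norm_pow, Complex.norm_ofNat]
  exact mul_le_of_le_one_left (by positivity) (chi_norm _)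

lemma dn_summable {t : ℂ} (ht : ‖t‖ < 1/8) : Summable fun n => dn n * t^n := by
  refine Summable.of_norm_bounded (pow4_summable ht) fun n => ?_
  rw [norm_mul, norm_pow]
  exact mul_le_mul_of_nonneg_right (dn_norm n) (by positivity)

lemma DD_eq1 {t : ℂ} (ht : ‖t‖ < 1/8) :
    DD t = ∑' y : ℕ × ℕ, chi ((y.1 : ℤ) - y.2) * eW t y.1 y.2 := by
  rw [← (regroup ht (fun y => chi ((y.1 : ℤ) - y.2)) fun y => chi_norm _).2]
  have hs : Summable fun x : AP => chi (((gs x).1 : ℤ) - (gs x).2) * wt t x := by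
    refine Summable.of_norm_bounded (wt_summable ht) fun x => ?_
    rw [norm_mul]
    exact mul_le_of_le_one_left (norm_nonneg _) (chi_norm _)
  rw [hs.tsum_sigma, DD]
  refine tsum_congr fun n => ?_
  rw [tsum_fintype, dn_eq, Finset.sum_mul]
  refine Finset.sum_congr rfl fun p _ => ?_
  simp only [gs, wt]; ring

lemma chiE_summable {t : ℂ} (ht : ‖t‖ < 1/8) :
    Summable fun y : ℕ × ℕ => chi ((y.1 : ℤ) - y.2) * eW t (y.1+1) (y.2+1) := by
  have h := (regroup ht (fun y => chi ((y.1 : ℤ) - y.2)) fun y => chi_norm _).1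
  have hi : Function.Injective fun y : ℕ × ℕ => (y.1+1, y.2+1) := by
    rintro ⟨a, b⟩ ⟨c, d⟩ h; simpa using h
  refine (h.comp_injective hi).congr fun y => ?_
  simp [Function.comp]

lemma DD_eq2 {t : ℂ} (ht : ‖t‖ < 1/8) :
    DD t = 1 + ∑' y : ℕ × ℕ, chi ((y.1 : ℤ) - y.2) * eW t (y.1+1) (y.2+1) := by
  have h := (regroup ht (fun y => chi ((y.1 : ℤ) - y.2)) fun y => chi_norm _).1
  rw [DD_eq1 ht, h.tsum_prod, h.prod.tsum_eq_zero_add, (chiE_summable ht).tsum_prod]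
  congr 1
  · rw [tsum_eq_single 0]
    · simp [eW_zero_zero, chi]
    · intro m hm
      obtain ⟨k, rfl⟩ := Nat.exists_eq_succ_of_ne_zero hm
      simp [eW_zero_left]
  · refine tsum_congr fun l => ?_
    rw [(h.prod_factor (l+1)).tsum_eq_zero_add]
    simp [eW_zero_right]

/-- splitting the quadrant along the diagonal -/
def diagEquiv : (ℕ × ℕ) ⊕ (ℕ × ℕ) ≃ ℕ × ℕ where
  toFun x := match x with
    | Sum.inl (m, r) => (m + r, m)
    | Sum.inr (m, r) => (m, m + r + 1)
  invFun y := if y.2 ≤ y.1 then Sum.inl (y.2, y.1 - y.2) else Sum.inr (y.1, y.2 - y.1 - 1)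
  left_inv x := by
    rcases x with ⟨m, r⟩ | ⟨m, r⟩
    · simp
    · have : ¬ (m + r + 1 ≤ m) := by omega
      simp only [this, if_false]
      congr 2; omega
  right_inv y := by
    obtain ⟨a, b⟩ := y
    by_cases h : b ≤ a
    · simp [h]
    · simp only [h, if_false]
      ext <;> simp; omega

lemma DD_eq3 {t : ℂ} (ht : ‖t‖ < 1/8) :
    (Summable fun x : ℕ × ℕ => chi x.2 * eW t (x.1+x.2+0+1) (x.1+1)) ∧
    (Summable fun x : ℕ × ℕ => chi (-(x.2:ℤ)-1) * eW t (x.1+x.2+1+1) (x.1+1)) ∧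
    DD t = 1 + (∑' x : ℕ × ℕ, chi x.2 * eW t (x.1+x.2+0+1) (x.1+1) +
      ∑' x : ℕ × ℕ, chi (-(x.2:ℤ)-1) * eW t (x.1+x.2+1+1) (x.1+1)) := by
  have hs := chiE_summable ht
  have hs2 := diagEquiv.summable_iff.2 hs
  have h1 := hs2.comp_injective Sum.inl_injective
  have h2 := hs2.comp_injective Sum.inr_injective
  have e1 : ∀ x : ℕ × ℕ, chi (((diagEquiv (Sum.inl x)).1 : ℤ) - (diagEquiv (Sum.inl x)).2) * eW t ((diagEquiv (Sum.inl x)).1+1) ((diagEquiv (Sum.inl x)).2+1) =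
      chi x.2 * eW t (x.1+x.2+0+1) (x.1+1) := by
    rintro ⟨m, r⟩; simp [diagEquiv]
  have e2 : ∀ x : ℕ × ℕ, chi (((diagEquiv (Sum.inr x)).1 : ℤ) - (diagEquiv (Sum.inr x)).2) * eW t ((diagEquiv (Sum.inr x)).1+1) ((diagEquiv (Sum.inr x)).2+1) =
      chi (-(x.2:ℤ)-1) * eW t (x.1+x.2+1+1) (x.1+1) := by
    rintro ⟨m, r⟩
    simp only [diagEquiv, Equiv.coe_fn_mk]
    rw [eW_symm ht]
    congr 2; push_cast; ring
  refine ⟨h1.congr fun x => e1 x, h2.congr fun x => e2 x, ?_⟩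
  have h3 := Summable.tsum_sum h1 h2
  simp only [Function.comp] at h3
  rw [DD_eq2 ht, ← diagEquiv.tsum_eq, h3, tsum_congr e1, tsum_congr e2]

lemma per_sum {X : ℂ} (hX : ‖X‖ < 1) (c : ℕ → ℂ) (hc : ∀ r, ‖c r‖ ≤ 1) :
    Summable (fun r => c r * X^r) := by
  refine Summable.of_norm_bounded (summable_geometric_of_lt_one (norm_nonneg X) hX) fun i => ?_
  rw [norm_mul, norm_pow]
  exact mul_le_of_le_one_left (by positivity) (hc i)

lemma per_eval {X : ℂ} (hX : ‖X‖ < 1) (c : ℕ → ℂ) (hc : ∀ r, ‖c r‖ ≤ 1) (h5 : ∀ r, c (r+5) = c r) :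
    (∑' r, c r * X^r) * (1 - X^5) = c 0 + c 1 * X + c 2 * X^2 + c 3 * X^3 + c 4 * X^4 := by
  have h := (per_sum hX c hc).sum_add_tsum_nat_add 5
  have e : ∀ r, c (r+5) * X^(r+5) = X^5 * (c r * X^r) := by intro r; rw [h5]; ring
  rw [tsum_congr e, tsum_mul_left] at h
  simp only [Finset.sum_range_succ, Finset.sum_range_zero] at h
  linear_combination -h

lemma dsum {t : ℂ} (ht : ‖t‖ < 1/8) (c : ℕ → ℂ) (hc : ∀ r, ‖c r‖ ≤ 1) (s : ℕ)
    (hs : Summable fun x : ℕ × ℕ => c x.2 * eW t (x.1+x.2+s+1) (x.1+1)) :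
    (Summable fun j : ℕ => PB t * ((-1)^j * (1 - t^(j+1)) / (1 + t^(j+1))) * ((t^(j+1))^(j+1+s) * ∑' r, c r * (t^(j+1))^r)) ∧
    ∑' x : ℕ × ℕ, c x.2 * eW t (x.1+x.2+s+1) (x.1+1) =
      2 * ∑' j : ℕ, PB t * ((-1)^j * (1 - t^(j+1)) / (1 + t^(j+1))) * ((t^(j+1))^(j+1+s) * ∑' r, c r * (t^(j+1))^r) := by
  have ht1 : ‖t‖ < 1 := by linarith
  have hX : ∀ j : ℕ, ‖t^(j+1)‖ < 1 := fun j => n5 ht1 (j+1) (by omega)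
  have hX' : ∀ j : ℕ, ‖t^(j+1)‖ ≤ ‖t‖ := by
    intro j; rw [norm_pow, pow_succ]; exact mul_le_of_le_one_left (norm_nonneg _) (pow_le_one₀ (norm_nonneg _) ht1.le)
  set S : ℕ → ℂ := fun j => ∑' r, c r * (t^(j+1))^r with hS
  set K : ℕ × ℕ → ℂ := fun x => aa t x.2 * bb t x.1 * (t^(x.2+1))^(x.1+x.2+1+s) * S x.2 with hK
  have hSb : ∀ j, ‖S j‖ ≤ (1 - ‖t‖)⁻¹ := by
    intro j
    refine tsum_of_norm_bounded (hasSum_geometric_of_lt_one (norm_nonneg t) ht1) fun r => ?_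
    rw [norm_mul, norm_pow]
    calc _ ≤ 1 * ‖t^(j+1)‖^r := mul_le_mul_of_nonneg_right (hc r) (by positivity)
      _ ≤ _ := by rw [one_mul]; exact pow_le_pow_left₀ (norm_nonneg _) (hX' j) r
  have hKs : Summable K := by
    obtain ⟨Ca, ha0, ha⟩ := aa_bdd ht1
    obtain ⟨Cb, hb0, hb⟩ := be_bdd ht1
    have hg := summable_geometric_of_lt_one (norm_nonneg t) ht1
    have hgg := hg.mul_of_nonneg hg (fun _ => by positivity) (fun _ => by positivity)
    have hpos : 0 ≤ (1 - ‖t‖)⁻¹ := inv_nonneg.2 (by linarith)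
    refine Summable.of_norm_bounded (hgg.mul_left (Ca * Cb * (1 - ‖t‖)⁻¹)) ?_
    rintro ⟨i, j⟩
    simp only [hK, norm_mul, bb, norm_pow]
    have h1 : (‖t‖^(j+1))^(i+j+1+s) ≤ ‖t‖^j := by
      rw [← pow_mul]
      exact pow_le_pow_of_le_one (norm_nonneg _) ht1.le (by nlinarith)
    calc ‖aa t j‖ * (‖t‖^i * ‖be t i‖) * (‖t‖^(j+1))^(i+j+1+s) * ‖S j‖
        ≤ Ca * (‖t‖^i * Cb) * ‖t‖^j * (1 - ‖t‖)⁻¹ := by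
          gcongr
          · exact ha j
          · exact hb i
          · exact hSb j
      _ = _ := by ring
  have hj : ∀ j, ∑' i, K (i, j) = PB t * ((-1)^j * (1 - t^(j+1)) / (1 + t^(j+1))) * ((t^(j+1))^(j+1+s) * S j) := by
    intro j
    rw [← aa_sum ht1, ← tsum_mul_left, ← tsum_mul_right]
    refine tsum_congr fun i => ?_
    simp only [hK]; ring
  have hsw := hKs.prod_symm
  constructor
  · exact hsw.prod.congr fun j => hj j
  · have e1 : ∑' j, (PB t * ((-1)^j * (1 - t^(j+1)) / (1 + t^(j+1))) * ((t^(j+1))^(j+1+s) * S j)) = ∑' x, K x := by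
      rw [← tsum_congr hj, ← (Equiv.prodComm ℕ ℕ).tsum_eq K]
      exact hsw.tsum_prod.symm
    have e0 := ((HasAntidiagonal.sigmaAntidiagonalEquivProd.summable_iff (f := K)).2 hKs).tsum_sigma
    simp only [Function.comp] at e0
    rw [e1, hs.tsum_prod, ← HasAntidiagonal.sigmaAntidiagonalEquivProd.tsum_eq K, e0, ← tsum_mul_left]
    refine tsum_congr fun m => ?_
    have e2 : ∑' b : {x // x ∈ antidiagonal m}, K (HasAntidiagonal.sigmaAntidiagonalEquivProd ⟨m, b⟩) = ∑ x ∈ antidiagonal m, K x := by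
      rw [tsum_fintype]
      exact Finset.sum_coe_sort (antidiagonal m) K
    rw [e2]
    have e3 : ∀ r, c r * eW t (m+r+s+1) (m+1) = 2 * ∑ x ∈ antidiagonal m, aa t x.2 * bb t x.1 * (t^(x.2+1))^(x.1+x.2+1+s) * (c r * (t^(x.2+1))^r) := by
      intro r
      rw [eW_closed ht, mul_left_comm, Finset.mul_sum]
      congr 1
      refine Finset.sum_congr rfl ?_
      rintro ⟨i, j⟩ hij
      rw [HasAntidiagonal.mem_antidiagonal] at hij
      simp only at hij ⊢
      subst hij
      have : t^((i+j+r+s+1)*(j+1)) = (t^(j+1))^(i+j+1+s) * (t^(j+1))^r := by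
        rw [← pow_add, ← pow_mul]; congr 1; ring
      rw [this]; ring
    rw [tsum_congr e3, tsum_mul_left, Summable.tsum_finsetSum]
    · congr 1
      refine Finset.sum_congr rfl fun x _ => ?_
      rw [tsum_mul_left]
    · intro x _
      exact (per_sum (hX x.2) c hc).mul_left _

lemma DD_eq4 {t : ℂ} (ht : ‖t‖ < 1/8) :
    (Summable fun j : ℕ => PB t * ((-1)^j * (t^(j+1))^(j+1) * (1 - t^(j+1))^2 * (1 - (t^(j+1))^3) / (1 - (t^(j+1))^5))) ∧
    DD t = 1 + 2 * ∑' j : ℕ, PB t * ((-1)^j * (t^(j+1))^(j+1) * (1 - t^(j+1))^2 * (1 - (t^(j+1))^3) / (1 - (t^(j+1))^5)) := by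
  have ht1 : ‖t‖ < 1 := by linarith
  obtain ⟨h1, h2, h3⟩ := DD_eq3 ht
  obtain ⟨a1, a2⟩ := dsum ht (fun r => chi r) (fun r => chi_norm _) 0 h1
  obtain ⟨b1, b2⟩ := dsum ht (fun r => chi (-(r:ℤ)-1)) (fun r => chi_norm _) 1 h2
  have key : ∀ j : ℕ, PB t * ((-1)^j * (1 - t^(j+1)) / (1 + t^(j+1))) * ((t^(j+1))^(j+1+0) * ∑' r : ℕ, chi r * (t^(j+1))^r)
     + PB t * ((-1)^j * (1 - t^(j+1)) / (1 + t^(j+1))) * ((t^(j+1))^(j+1+1) * ∑' r : ℕ, chi (-(r:ℤ)-1) * (t^(j+1))^r)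
     = PB t * ((-1)^j * (t^(j+1))^(j+1) * (1 - t^(j+1))^2 * (1 - (t^(j+1))^3) / (1 - (t^(j+1))^5)) := by
    intro j
    have hX := n5 ht1 (j+1) (by omega)
    have n2 := (one_sub_ne ht1 (j+1) (by omega)).2
    have n3 := (one_sub_ne ht1 ((j+1)*5) (by omega)).1
    rw [pow_mul] at n3
    have p1 := per_eval hX (fun r => chi r) (fun r => chi_norm _) (fun r => by push_cast; exact chi_add _)
    have p2 := per_eval hX (fun r => chi (-(r:ℤ)-1)) (fun r => chi_norm _)
      (fun r => by rw [← chi_sub (-(r:ℤ)-1)]; congr 1; push_cast; ring)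
    have c0 : chi 0 = 1 := by norm_num [chi]
    have c1 : chi 1 = 0 := by norm_num [chi]
    have c2 : chi 2 = -1 := by norm_num [chi]
    have c3 : chi 3 = 0 := by norm_num [chi]
    have c4 : chi 4 = 0 := by norm_num [chi]
    have d0 : chi (-0-1) = 0 := by norm_num [chi]
    have d1 : chi (-1-1) = 0 := by norm_num [chi]
    have d2 : chi (-2-1) = -1 := by norm_num [chi]
    have d3 : chi (-3-1) = 0 := by norm_num [chi]
    have d4 : chi (-4-1) = 1 := by norm_num [chi]
    simp only [Nat.cast_zero, Nat.cast_one, Nat.cast_ofNat, c0, c1, c2, c3, c4, d0, d1, d2, d3, d4] at p1 p2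
    generalize ∑' r : ℕ, chi r * (t^(j+1))^r = S1 at *
    generalize ∑' r : ℕ, chi (-(r:ℤ)-1) * (t^(j+1))^r = S2 at *
    rw [add_zero, pow_succ (t^(j+1)) (j+1)]
    generalize (t^(j+1))^(j+1) = Y at *
    generalize t^(j+1) = X at *
    field_simp
    linear_combination PB t * Y * (1 - X) * (p1 + X * p2)
  have hsum := (a1.add b1).congr key
  refine ⟨hsum, ?_⟩
  rw [h3, a2, b2, ← mul_add, ← a1.tsum_add b1, tsum_congr key]

lemma th_term {t : ℂ} (ht0 : t ≠ 0) (n : ℤ) : (-t)^n * t^(n*n-n) = (-1)^n * t^(n*n) := by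
  rw [neg_eq_neg_one_mul t, mul_zpow, mul_assoc, ← zpow_add₀ ht0]
  congr 2; ring

lemma th_split {t : ℂ} (ht : ‖t‖ < 1) (ht0 : t ≠ 0) :
    (Summable fun k : ℕ => (-1)^(k+1) * (t^(k+1))^(k+1)) ∧
    th t t = 1 + 2 * ∑' k : ℕ, (-1)^(k+1) * (t^(k+1))^(k+1) := by
  have hs := (th_summable ht ht0 ht0).of_norm
  have e1 : ∀ k : ℕ, (-t)^((k+1:ℕ):ℤ) * t^(((k+1:ℕ):ℤ)*((k+1:ℕ):ℤ)-((k+1:ℕ):ℤ)) = (-1)^(k+1) * (t^(k+1))^(k+1) := by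
    intro k
    rw [th_term ht0, zpow_natCast, ← Nat.cast_mul, zpow_natCast, pow_mul]
  have e2 : ∀ k : ℕ, (-t)^(-((k+1:ℕ):ℤ)) * t^(-((k+1:ℕ):ℤ) * -((k+1:ℕ):ℤ) - -((k+1:ℕ):ℤ)) = (-1)^(k+1) * (t^(k+1))^(k+1) := by
    intro k
    rw [th_term ht0, neg_mul_neg, zpow_neg, zpow_natCast, ← Nat.cast_mul, zpow_natCast, pow_mul, ← inv_pow]
    norm_num
  constructor
  · have hi : Function.Injective fun k : ℕ => ((k+1:ℕ):ℤ) := fun a b h => by simpa using h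
    exact (hs.comp_injective hi).congr fun k => e1 k
  · rw [th, int_split2 _ hs, ← tsum_mul_left]
    congr 1
    · simp
    · refine tsum_congr fun k => ?_
      rw [e1, e2]; ring

lemma Sb_half {t : ℂ} (ht : ‖t‖ < 1) (ht0 : t ≠ 0) (b c : ℕ) (hbc : b + c = 5) :
    (Summable fun k : ℕ => (-1)^(k+1) * (t^(k+1))^(k+1) * ((t^(k+1))^b - (t^(k+1))^c) / (1 - (t^(k+1))^5)) ∧
    Sb t b = ∑' k : ℕ, (-1)^(k+1) * (t^(k+1))^(k+1) * ((t^(k+1))^b - (t^(k+1))^c) / (1 - (t^(k+1))^5) := by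
  have hs := Sb_summable ht ht0 b
  have e : ∀ k : ℕ, (-1)^((k+1:ℕ):ℤ) * t^(((k+1:ℕ):ℤ)*((k+1:ℕ):ℤ)+b*((k+1:ℕ):ℤ)) * (1 - (t^5)^((k+1:ℕ):ℤ))⁻¹ +
      (-1)^(-((k+1:ℕ):ℤ)) * t^(-((k+1:ℕ):ℤ) * -((k+1:ℕ):ℤ)+b * -((k+1:ℕ):ℤ)) * (1 - (t^5)^(-((k+1:ℕ):ℤ)))⁻¹ =
      (-1)^(k+1) * (t^(k+1))^(k+1) * ((t^(k+1))^b - (t^(k+1))^c) / (1 - (t^(k+1))^5) := by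
    intro k
    have n3 := (one_sub_ne ht ((k+1)*5) (by omega)).1
    rw [pow_mul] at n3
    have hX0 : t^(k+1) ≠ 0 := pow_ne_zero _ ht0
    have f1 : (t^5)^((k+1:ℕ):ℤ) = (t^(k+1))^5 := by rw [zpow_natCast, ← pow_mul, ← pow_mul, mul_comm]
    have f2 : t^(((k+1:ℕ):ℤ)*((k+1:ℕ):ℤ)) = (t^(k+1))^(k+1) := by rw [← Nat.cast_mul, zpow_natCast, pow_mul]
    have f3 : t^((b:ℤ)*((k+1:ℕ):ℤ)) = (t^(k+1))^b := by rw [← Nat.cast_mul, zpow_natCast, mul_comm, pow_mul]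
    have f4 : (-1:ℂ)^((k+1:ℕ):ℤ) = (-1)^(k+1) := zpow_natCast _ _
    have f5 : ((-1:ℂ)^(k+1))⁻¹ = (-1)^(k+1) := by rw [← inv_pow]; norm_num
    rw [neg_mul_neg, mul_neg, zpow_add₀ ht0, zpow_add₀ ht0, zpow_neg, zpow_neg, zpow_neg, f1, f2, f3, f4, f5]
    generalize (t^(k+1))^(k+1) = Y at *
    generalize t^(k+1) = X at *
    have h5 : X^5 = X^b * X^c := by rw [← pow_add, hbc]
    have n4 : X^5 - 1 ≠ 0 := by intro h; apply n3; linear_combination -h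
    have g1 : (1 - (X^5)⁻¹)⁻¹ = - X^5 / (1 - X^5) := by
      rw [← div_eq_one_iff_eq (div_ne_zero (neg_ne_zero.2 (pow_ne_zero _ hX0)) n3)]
      rw [inv_eq_one_div, div_div]
      have : (1 - (X^5)⁻¹) * (-X^5 / (1 - X^5)) = 1 := by field_simp; ring
      rw [this, div_one]
    have g2 : (X^b)⁻¹ * X^5 = X^c := by rw [h5]; field_simp
    rw [g1]
    linear_combination (-(-1)^(k+1) * Y / (1 - X^5)) * g2
  have hpos : Function.Injective fun k : ℕ => ((k+1:ℕ):ℤ) := fun a b h => by simpa using h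
  have hneg : Function.Injective fun k : ℕ => -((k+1:ℕ):ℤ) := fun a b h => by simpa using h
  constructor
  · exact ((hs.comp_injective hpos).add (hs.comp_injective hneg)).congr fun k => e k
  · rw [Sb, int_split2 _ hs, tsum_congr e]
    simp

theorem DD_GG {t : ℂ} (ht : ‖t‖ < 1/8) (ht0 : t ≠ 0) : th t t * DD t = GG t := by
  have ht1 : ‖t‖ < 1 := by linarith
  obtain ⟨s0, h0⟩ := th_split ht1 ht0
  obtain ⟨s1, h1⟩ := Sb_half ht1 ht0 1 4 (by norm_num)
  obtain ⟨s2, h2⟩ := Sb_half ht1 ht0 2 3 (by norm_num)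
  obtain ⟨s3, h3⟩ := DD_eq4 ht
  have hP := th_eq ht1 ht0
  push_cast at h1 h2
  rw [h3, GG, h1, h2]
  have key : ∀ k : ℕ, th t t * (PB t * ((-1)^k * (t^(k+1))^(k+1) * (1 - t^(k+1))^2 * (1 - (t^(k+1))^3) / (1 - (t^(k+1))^5))) =
     2 * ((-1)^(k+1) * (t^(k+1))^(k+1) * ((t^(k+1))^1 - (t^(k+1))^4) / (1 - (t^(k+1))^5))
     - (-1)^(k+1) * (t^(k+1))^(k+1) * ((t^(k+1))^2 - (t^(k+1))^3) / (1 - (t^(k+1))^5)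
     - (-1)^(k+1) * (t^(k+1))^(k+1) := by
    intro k
    have n3 := (one_sub_ne ht1 ((k+1)*5) (by omega)).1
    rw [pow_mul] at n3
    rw [← mul_assoc, mul_comm (th t t), hP]
    generalize (t^(k+1))^(k+1) = Y at *
    generalize t^(k+1) = X at *
    field_simp
    ring
  have hk : th t t * ∑' k : ℕ, PB t * ((-1)^k * (t^(k+1))^(k+1) * (1 - t^(k+1))^2 * (1 - (t^(k+1))^3) / (1 - (t^(k+1))^5)) =
      2 * (∑' k : ℕ, (-1)^(k+1) * (t^(k+1))^(k+1) * ((t^(k+1))^1 - (t^(k+1))^4) / (1 - (t^(k+1))^5))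
      - (∑' k : ℕ, (-1)^(k+1) * (t^(k+1))^(k+1) * ((t^(k+1))^2 - (t^(k+1))^3) / (1 - (t^(k+1))^5))
      - ∑' k : ℕ, (-1)^(k+1) * (t^(k+1))^(k+1) := by
    rw [← tsum_mul_left, tsum_congr key, ((s1.mul_left 2).sub s2).tsum_sub s0, (s1.mul_left 2).tsum_sub s2, tsum_mul_left]
  linear_combination 2 * hk + h0

end
end OV

open Filter Topology Finset
namespace OV
noncomputable section

lemma DD_split {t : ℂ} (ht : ‖t‖ < 1/8) (ht0 : t ≠ 0) :
    DD t = F0 (t^5) + t * F1 (t^5) + t^3 * F3 (t^5) + t^4 * F4 (t^5) := by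
  have ht1 : ‖t‖ < 1 := by linarith
  have hne : th t t ≠ 0 := by
    intro h
    have := th_eq ht1 ht0
    rw [h, mul_zero] at this
    exact zero_ne_one this
  exact mul_left_cancel₀ hne ((DD_GG ht ht0).trans (GG_main ht1 ht0))

lemma exists_root5 : ∃ w : ℂ, w^5 = 1 ∧ 1 + w + w^2 + w^3 + w^4 = 0 ∧ ‖w‖ = 1 := by
  have h := Complex.isPrimitiveRoot_exp 5 (by norm_num)
  refine ⟨_, h.pow_eq_one, ?_, h.norm'_eq_one (by norm_num)⟩
  have := h.geom_sum_eq_zero (by norm_num)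
  simpa [Finset.sum_range_succ] using this

/-- the part of the generating function in the residue class 2 mod 5 -/
def un (n : ℕ) : ℂ := if n % 5 = 2 then dn n else 0

lemma un_norm (n : ℕ) : ‖un n‖ ≤ 4^n := by
  unfold un
  split_ifs
  · exact dn_norm n
  · simp

lemma un_zero_sum {s : ℂ} (hs : ‖s‖ < 1/8) (hs0 : s ≠ 0) : ∑' n, un n * s^n = 0 := by
  obtain ⟨w, h5, hw, hn⟩ := exists_root5
  have hw0 : w ≠ 0 := by intro h; rw [h] at hn; simp at hn
  have hk : ∀ k : ℕ, ‖w^k * s‖ < 1/8 := fun k => by rw [norm_mul, norm_pow, hn]; simpa using hs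
  have hk0 : ∀ k : ℕ, w^k * s ≠ 0 := fun k => mul_ne_zero (pow_ne_zero _ hw0) hs0
  have hk5 : ∀ k : ℕ, (w^k * s)^5 = s^5 := fun k => by
    rw [mul_pow, ← pow_mul, mul_comm k, pow_mul, h5, one_pow, one_mul]
  have hD : ∀ k : ℕ, DD (w^k*s) = F0 (s^5) + (w^k*s) * F1 (s^5) + (w^k*s)^3 * F3 (s^5) + (w^k*s)^4 * F4 (s^5) := by
    intro k
    rw [DD_split (hk k) (hk0 k), hk5]
  have hz : ∑ k ∈ range 5, w^(3*k) * DD (w^k*s) = 0 := by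
    simp only [hD, Finset.sum_range_succ, Finset.sum_range_zero]
    have e6 : w^6 = w := by linear_combination w * h5
    have e7 : w^7 = w^2 := by linear_combination w^2 * h5
    have e8 : w^8 = w^3 := by linear_combination w^3 * h5
    have e9 : w^9 = w^4 := by linear_combination w^4 * h5
    have p : ∀ j : ℕ, w^(j+5) = w^j := fun j => by rw [pow_add, h5, mul_one]
    have q : ∀ j r : ℕ, w^(5*j+r) = w^r := fun j r => by rw [pow_add, pow_mul, h5, one_pow, one_mul]
    have a12 : w^12 = w^2 := q 2 2
    have a16 : w^16 = w := by simpa using q 3 1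
    have a18 : w^18 = w^3 := q 3 3
    have a24 : w^24 = w^4 := q 4 4
    have a21 : w^21 = w := by simpa using q 4 1
    have a28 : w^28 = w^3 := q 5 3
    have a14 : w^14 = w^4 := q 2 4
    ring_nf
    simp only [e6, e7, e8, e9, a12, a16, a18, a24, a21, a28, a14, h5]
    linear_combination (F0 (s^5) + s * F1 (s^5) + s^3 * F3 (s^5) + s^4 * F4 (s^5)) * hw
  have hsum : ∀ n : ℕ, ∑ k ∈ range 5, w^(3*k) * (dn n * (w^k*s)^n) = 5 * (un n * s^n) := by
    intro n
    have : ∑ k ∈ range 5, w^(3*k) * (dn n * (w^k*s)^n) = dn n * s^n * ∑ k ∈ range 5, (w^(n+3))^k := by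
      rw [Finset.mul_sum]
      refine Finset.sum_congr rfl fun k _ => ?_
      rw [mul_pow, ← pow_mul, ← pow_mul]
      have : w^((n+3)*k) = w^(k*n) * w^(3*k) := by rw [← pow_add]; congr 1; ring
      rw [this]; ring
    rw [this]
    have hr : w^(n+3) = w^((n+3)%5) := by
      conv_lhs => rw [← Nat.div_add_mod (n+3) 5, pow_add, pow_mul, h5, one_pow, one_mul]
    rw [hr]
    have hlt : (n+3)%5 < 5 := Nat.mod_lt _ (by norm_num)
    have hg : ∀ m : ℕ, w^m * w^m = w^(2*m) := fun m => by rw [← pow_add]; congr 1; ring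
    unfold un
    generalize hm : (n+3)%5 = m at *
    interval_cases m
    · rw [if_pos (by omega)]; simp; ring
    all_goals
      rw [if_neg (by omega)]
      simp only [Finset.sum_range_succ, Finset.sum_range_zero]
      ring_nf
    · linear_combination dn n * s^n * hw
    · linear_combination dn n * s^n * (hw + (w+w^3)*h5)
    · linear_combination dn n * s^n * (hw + (w + w^4 + w^2*(w^5+1))*h5)
    · linear_combination dn n * s^n * (hw + (w^3 + w^2*(w^5+1) + w*(w^10+w^5+1))*h5)
  have hsm : ∀ k ∈ range 5, Summable fun n => w^(3*k) * (dn n * (w^k*s)^n) := fun k _ =>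
    (dn_summable (hk k)).mul_left _
  have : ∑ k ∈ range 5, w^(3*k) * DD (w^k*s) = 5 * ∑' n, un n * s^n := by
    simp only [DD, ← tsum_mul_left]
    rw [← Summable.tsum_finsetSum hsm]
    exact tsum_congr hsum
  rw [hz] at this
  have h50 : (5:ℂ) ≠ 0 := by norm_num
  simpa [h50] using this.symm

lemma un_eq_zero (n : ℕ) : un n = 0 := by
  induction n using Nat.strong_induction_on with
  | _ n ih =>
  by_contra hne
  have hsm : ∀ s : ℂ, ‖s‖ < 1/8 → Summable fun m => un m * s^m := by
    intro s hs
    refine Summable.of_norm_bounded (g := fun m => (1/2:ℝ)^m)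
      (summable_geometric_of_lt_one (by norm_num) (by norm_num)) fun m => ?_
    rw [norm_mul, norm_pow]
    calc ‖un m‖ * ‖s‖^m ≤ 4^m * (1/8)^m := by
          gcongr
          exact un_norm m
      _ = _ := by rw [← mul_pow]; norm_num
  have hbd : ∀ s : ℂ, ‖s‖ < 1/8 → s ≠ 0 → ‖un n‖ ≤ ‖s‖ * (2 * 4^(n+1)) := by
    intro s hs hs0
    have h0 := un_zero_sum hs hs0
    rw [← (hsm s hs).sum_add_tsum_nat_add n, Finset.sum_eq_zero, zero_add] at h0
    swap
    · intro i hi; rw [ih i (mem_range.1 hi), zero_mul]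
    have e : ∀ m, un (m+n) * s^(m+n) = s^n * (un (m+n) * s^m) := fun m => by rw [pow_add]; ring
    have sm2 : Summable fun m => un (m+n) * s^m := by
      have := ((summable_nat_add_iff n).2 (hsm s hs)).mul_left (s^n)⁻¹
      refine this.congr fun m => ?_
      rw [e, inv_mul_cancel_left₀ (pow_ne_zero _ hs0)]
    rw [tsum_congr e, tsum_mul_left, mul_eq_zero, or_iff_right (pow_ne_zero _ hs0),
      sm2.tsum_eq_zero_add] at h0
    simp only [zero_add, pow_zero, mul_one] at h0
    have hb : ‖∑' m, un (m+1+n) * s^(m+1)‖ ≤ ∑' m : ℕ, ‖s‖ * (4^(n+1)) * (1/2:ℝ)^m := by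
      refine tsum_of_norm_bounded ((summable_geometric_of_lt_one (by norm_num) (by norm_num)).mul_left _).hasSum fun m => ?_
      rw [norm_mul, norm_pow]
      calc ‖un (m+1+n)‖ * ‖s‖^(m+1) ≤ 4^(m+1+n) * (‖s‖ * (1/8)^m) := by
            rw [pow_succ' ‖s‖]
            gcongr
            exact un_norm _
        _ = ‖s‖ * 4^(n+1) * (4^m * (1/8)^m) := by ring
        _ = _ := by rw [← mul_pow]; norm_num
    rw [tsum_mul_left, tsum_geometric_two] at hb
    rw [eq_neg_of_add_eq_zero_left h0, norm_neg]
    linarith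
  have hpos : 0 < ‖un n‖ := norm_pos_iff.2 hne
  have hun := un_norm n
  have h4 : (0:ℝ) < 4^n := by positivity
  set x : ℝ := ‖un n‖ / (16 * 4^n) with hx
  have hx0 : 0 < x := by positivity
  have hx1 : x < 1/8 := by
    rw [hx, div_lt_iff₀ (by positivity)]; linarith
  have hnx : ‖(x:ℂ)‖ = x := by rw [Complex.norm_real, Real.norm_of_nonneg hx0.le]
  have := hbd (x:ℂ) (by rw [hnx]; exact hx1) (by exact_mod_cast hx0.ne')
  rw [hnx] at this
  have e : x * (2 * 4^(n+1)) = ‖un n‖ / 2 := by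
    rw [hx, pow_succ]; field_simp; norm_num
  linarith

end
end OV

theorem stmt_10 (n : ℕ) : overN 0 5 (5 * n + 2) = overN 2 5 (5 * n + 2) := by
  have h := OV.un_eq_zero (5 * n + 2)
  rw [OV.un, if_pos (by omega), OV.dn, sub_eq_zero] at h
  exact_mod_cast h
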